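/- arXiv:2203.06268 — 3 statements merged into one kernel-verified Lean document; each statement's English description precedes it below -/
import Mathlib

section
/- The limit lim_{n→∞} (C(n)/n!)^{1/n} exists and equals c. (This resolves Pomerance's conjecture that C(n) = n!·(c + o(1))^n for some constant c.) -/
open Real Filter

/-- `C(n)`: the number of coprime permutations of `{1, …, n}`,
i.e. permutations `σ` with `gcd(m, σ(m)) = 1` for all `m ∈ {1, …, n}`. -/
noncomputable def coprimePermCount (n : ℕ) : ℕ :=
  Nat.card {σ : Equiv.Perm (Fin n) // ∀ m : Fin n, Nat.gcd (m.1 + 1) ((σ m).1 + 1) = 1}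

/-- The constant `c = ∏_p (p-1)^{2(1-1/p)} / (p · (p-2)^{1-2/p})`, where the factor at
`p = 2` is `1/2` (real powers, with `(0:ℝ) ^ (0:ℝ) = 1`). -/
noncomputable def coprimeConst : ℝ :=
  ∏' p : Nat.Primes,
    (((p : ℕ) : ℝ) - 1) ^ (2 * (1 - 1 / ((p : ℕ) : ℝ))) /
      (((p : ℕ) : ℝ) * (((p : ℕ) : ℝ) - 2) ^ (1 - 2 / ((p : ℕ) : ℝ)))

namespace CoprimePerm

open Finset

section FiberPreserving

variable {α ι : Type*} [DecidableEq ι]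

lemma sum_card_filter_fiber_mul [Fintype ι] (τ : α → ι) (B : Finset α) (f : ι → ℝ) (D : ℝ)
    (hf : ∀ r, 0 ≤ f r) (hB : ∀ r, (#{u ∈ B | τ u = r} : ℝ) ≤ D) :
    ∑ u ∈ B, f (τ u) ≤ D * ∑ r, f r := by
  rw [← sum_fiberwise B τ, mul_sum]
  refine sum_le_sum fun r _ => ?_
  rw [sum_congr rfl (g := fun _ => f r) (fun u hu => by rw [(mem_filter.1 hu).2])]
  rw [sum_const, nsmul_eq_mul]
  exact mul_le_mul_of_nonneg_right (hB r) (hf r)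

variable [Fintype α]

/-- The fibre of `τ` over `s`. -/
def fiber (τ : α → ι) (s : ι) : Finset α := univ.filter fun x => τ x = s

@[simp] lemma mem_fiber {τ : α → ι} {s : ι} {x : α} : x ∈ fiber τ s ↔ τ x = s := by
  simp [fiber]

/-- A table of nonnegative integers with the right marginals is realised by a permutation. -/
lemma exists_perm_of_table [Fintype ι] (τ : α → ι) (N : ι → ι → ℕ)
    (hrow : ∀ r, ∑ s, N r s = #(fiber τ r)) (hcol : ∀ s, ∑ r, N r s = #(fiber τ s)) :
    ∃ θ : Equiv.Perm α, ∀ r s, #(fiber (fun x => (τ x, τ (θ x))) (r, s)) = N r s := by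
  have e₁ : ∀ r, Nonempty ({x // τ x = r} ≃ Σ s, Fin (N r s)) := fun r =>
    Fintype.card_eq.1 (by simp [Fintype.card_subtype, hrow, fiber])
  have e₂ : ∀ s, Nonempty ({x // τ x = s} ≃ Σ r, Fin (N r s)) := fun s =>
    Fintype.card_eq.1 (by simp [Fintype.card_subtype, hcol, fiber])
  let f₁ : α ≃ Σ r s, Fin (N r s) :=
    (Equiv.sigmaFiberEquiv τ).symm.trans (Equiv.sigmaCongrRight fun r => (e₁ r).some)
  let f₂ : α ≃ Σ s r, Fin (N r s) :=
    (Equiv.sigmaFiberEquiv τ).symm.trans (Equiv.sigmaCongrRight fun s => (e₂ s).some)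
  let c : (Σ r s, Fin (N r s)) ≃ Σ s r, Fin (N r s) :=
    ⟨fun q => ⟨q.2.1, q.1, q.2.2⟩, fun q => ⟨q.2.1, q.1, q.2.2⟩, fun _ => rfl, fun _ => rfl⟩
  have hf₁ : ∀ x, (f₁ x).1 = τ x := fun x => rfl
  have hf₂ : ∀ x, (f₂ x).1 = τ x := fun x => rfl
  refine ⟨(f₁.trans c).trans f₂.symm, fun r s => ?_⟩
  have hθ : ∀ x, τ (((f₁.trans c).trans f₂.symm) x) = (f₁ x).2.1 := fun x => by
    rw [← hf₂]
    simp [c]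
  rw [← Fintype.card_fin (N r s), ← card_univ]
  refine card_bij' (fun x hx => (f₁ x).2.2.cast ?_) (fun i _ => f₁.symm ⟨r, s, i⟩) ?_ ?_ ?_ ?_
  · simp only [mem_fiber, Prod.mk.injEq, hθ] at hx
    rw [← hx.1, ← hx.2, ← hf₁]
  · simp
  · intro i _
    simp only [mem_fiber, Prod.mk.injEq, hθ, ← hf₁]
    have key : ∀ q : Σ r s, Fin (N r s), q = ⟨r, s, i⟩ → q.1 = r ∧ q.2.1 = s := by
      rintro _ rfl
      exact ⟨rfl, rfl⟩
    exact key _ (f₁.apply_symm_apply _)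
  · intro x hx
    simp only [mem_fiber, Prod.mk.injEq, hθ, ← hf₁] at hx
    rw [Equiv.symm_apply_eq]
    have key : ∀ q : Σ r s, Fin (N r s), q.1 = r ∧ q.2.1 = s → ∀ h,
        (⟨r, s, q.2.2.cast h⟩ : Σ r s, Fin (N r s)) = q := by
      rintro ⟨r', s', i⟩ ⟨rfl, rfl⟩ h
      rfl
    exact key _ hx _
  · intro i _
    ext
    have key : ∀ q : Σ r s, Fin (N r s), q = ⟨r, s, i⟩ → (q.2.2 : ℕ) = i := by
      rintro _ rfl
      rfl
    exact key _ (f₁.apply_symm_apply _)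

variable [DecidableEq α]

/-- The permutations of `α` that preserve every fibre of `τ`. -/
def fiberPerms (τ : α → ι) : Finset (Equiv.Perm α) :=
  univ.filter fun β => ∀ x, τ (β x) = τ x

@[simp] lemma mem_fiberPerms {τ : α → ι} {β : Equiv.Perm α} :
    β ∈ fiberPerms τ ↔ ∀ x, τ (β x) = τ x := by simp [fiberPerms]

lemma card_fiberPerms [Fintype ι] (τ : α → ι) :
    #(fiberPerms τ) = ∏ s, (#(fiber τ s)).factorial := by
  have h := DomMulAct.stabilizer_card τ
  simp only [Fintype.card_subtype] at h
  rw [show (fiberPerms τ) = univ.filter (fun g : Equiv.Perm α => τ ∘ g = τ) by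
    ext g; simp [funext_iff]]
  exact h

lemma mul_swap_mem_fiberPerms {τ : α → ι} {β : Equiv.Perm α} (hβ : β ∈ fiberPerms τ) {x y : α}
    (hxy : τ x = τ y) : β * Equiv.swap x y ∈ fiberPerms τ := by
  rw [mem_fiberPerms] at *
  intro z
  rw [Equiv.Perm.mul_apply, hβ]
  rcases eq_or_ne z x with rfl | hx
  · simp [hxy]
  rcases eq_or_ne z y with rfl | hy
  · simp [hxy]
  rw [Equiv.swap_apply_of_ne_of_ne hx hy]

lemma swap_mul_mem_fiberPerms {τ : α → ι} {β : Equiv.Perm α} (hβ : β ∈ fiberPerms τ) {x y : α}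
    (hxy : τ x = τ y) : Equiv.swap x y * β ∈ fiberPerms τ := by
  rw [mem_fiberPerms] at *
  intro z
  rw [Equiv.Perm.mul_apply, ← hβ z]
  rcases eq_or_ne (β z) x with h | hx
  · simp [h, hxy]
  rcases eq_or_ne (β z) y with h | hy
  · simp [h, hxy]
  rw [Equiv.swap_apply_of_ne_of_ne hx hy]

/-- The fibre-preserving permutations whose graph avoids `E`. -/
def avoiding (τ : α → ι) (E : Finset (α × α)) : Finset (Equiv.Perm α) :=
  (fiberPerms τ).filter fun β => ∀ x, (x, β x) ∉ E

lemma switching_step (τ : α → ι) (D Δ : ℕ) (E : Finset (α × α)) (w v : α) (hE : (w, v) ∉ E)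
    (hrow : ∀ w', #{x | (w', x) ∈ insert (w, v) E} ≤ D)
    (hcol : ∀ x, #{w' | (w', x) ∈ insert (w, v) E} ≤ D)
    (hfib : ∀ x, Δ + 1 + 2 * D ≤ #(fiber τ (τ x))) :
    Δ * #((avoiding τ E).filter fun β => β w = v) ≤ #(avoiding τ (insert (w, v) E)) := by
  classical
  set F := insert (w, v) E with hF
  set S := (avoiding τ E).filter fun β => β w = v with hS
  let G : Equiv.Perm α → Finset α := fun β =>
    (fiber τ (τ w)).filter fun w' => w' ≠ w ∧ (w, β w') ∉ F ∧ (w', v) ∉ F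
  have hG : ∀ β ∈ S, Δ ≤ #(G β) := by
    intro β _
    have hsub : fiber τ (τ w) ⊆
        (({w} ∪ univ.filter fun w' => (w, β w') ∈ F) ∪ univ.filter fun w' => (w', v) ∈ F)
          ∪ G β := by
      intro x hx
      simp only [G, mem_union, mem_singleton, mem_filter, mem_univ, true_and]
      tauto
    have h1 : #(univ.filter fun w' => (w, β w') ∈ F) ≤ D := by
      refine le_trans (card_le_card_of_injOn β ?_ β.injective.injOn) (hrow w)
      intro x hx
      simpa using hx
    have h2 := hcol v
    have h3 := (card_le_card hsub).trans (card_union_le _ _)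
    have h4 := card_union_le ({w} ∪ univ.filter fun w' => (w, β w') ∈ F)
      (univ.filter fun w' => (w', v) ∈ F)
    have h5 := card_union_le {w} (univ.filter fun w' => (w, β w') ∈ F)
    have h6 := hfib w
    rw [card_singleton] at h5
    omega
  calc Δ * #S ≤ ∑ β ∈ S, #(G β) := by
        rw [mul_comm]; simpa using card_nsmul_le_sum S _ Δ hG
    _ = #(S.sigma G) := (card_sigma _ _).symm
    _ ≤ #(avoiding τ F) := by
        refine card_le_card_of_injOn (fun q => q.1 * Equiv.swap w q.2) ?_ ?_
        · rintro ⟨β, w'⟩ hq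
          simp only [coe_sigma, Set.mem_sigma_iff, mem_coe, G, S, mem_filter, mem_fiber,
            avoiding] at hq ⊢
          obtain ⟨⟨⟨hβ, hav⟩, hw⟩, hw', hne, h1, h2⟩ := hq
          refine ⟨mul_swap_mem_fiberPerms hβ hw'.symm, fun x => ?_⟩
          rw [Equiv.Perm.mul_apply]
          rcases eq_or_ne x w with rfl | hx
          · simpa using h1
          rcases eq_or_ne x w' with rfl | hx'
          · simpa [hw] using h2
          rw [Equiv.swap_apply_of_ne_of_ne hx hx', hF, mem_insert, not_or]
          exact ⟨fun h => hx (Prod.ext_iff.1 h).1, hav x⟩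
        · rintro ⟨β, x⟩ hq ⟨γ, y⟩ hq' h
          simp only [coe_sigma, Set.mem_sigma_iff, mem_coe, S, mem_filter] at hq hq' h
          have hx : x = y := by
            have e1 : (β * Equiv.swap w x) x = v := by simp [hq.1.2]
            have e2 : (γ * Equiv.swap w y) y = v := by simp [hq'.1.2]
            rw [← h, ← e1] at e2
            exact ((β * Equiv.swap w x).injective e2).symm
          subst hx
          rw [mul_left_inj] at h
          rw [h]

/-- Forbidding a set `E` of pairs of bounded degree costs a factor at most `1 + 1/Δ` per pair. -/
lemma card_fiberPerms_mul_pow_le (τ : α → ι) (D Δ : ℕ) (E : Finset (α × α))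
    (hrow : ∀ w, #{x | (w, x) ∈ E} ≤ D) (hcol : ∀ x, #{w | (w, x) ∈ E} ≤ D)
    (hfib : ∀ x, Δ + 1 + 2 * D ≤ #(fiber τ (τ x))) :
    #(fiberPerms τ) * Δ ^ #E ≤ #(avoiding τ E) * (Δ + 1) ^ #E := by
  classical
  induction E using Finset.induction_on with
  | empty => simp [avoiding]
  | insert e E he ih =>
    obtain ⟨w, v⟩ := e
    have hstep := switching_step τ D Δ E w v he hrow hcol hfib
    have hmono : ∀ p : α × α, p ∈ E → p ∈ insert (w, v) E := fun p hp => mem_insert_of_mem hp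
    have ih := ih
      (fun x => (card_le_card (monotone_filter_right _ fun _ _ => hmono _)).trans (hrow x))
      (fun x => (card_le_card (monotone_filter_right _ fun _ _ => hmono _)).trans (hcol x))
    have hsplit : #(avoiding τ E) = #((avoiding τ E).filter fun β => β w = v)
        + #(avoiding τ (insert (w, v) E)) := by
      rw [← card_filter_add_card_filter_not (s := avoiding τ E) (fun β => β w = v)]
      congr 2
      ext β
      simp only [avoiding, mem_filter, mem_insert, not_or, Prod.mk.injEq, not_and]
      constructor
      · rintro ⟨⟨h1, h2⟩, h3⟩
        exact ⟨h1, fun x => ⟨by rintro rfl; exact h3, h2 x⟩⟩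
      · rintro ⟨h1, h2⟩
        exact ⟨⟨h1, fun x => (h2 x).2⟩, (h2 w).1 rfl⟩
    rw [card_insert_of_notMem he, pow_succ, pow_succ]
    calc #(fiberPerms τ) * (Δ ^ #E * Δ) = (#(fiberPerms τ) * Δ ^ #E) * Δ := by ring
      _ ≤ (#(avoiding τ E) * (Δ + 1) ^ #E) * Δ := Nat.mul_le_mul_right _ ih
      _ = (Δ * #(avoiding τ E)) * (Δ + 1) ^ #E := by ring
      _ ≤ (#(avoiding τ (insert (w, v) E)) * (Δ + 1)) * (Δ + 1) ^ #E := by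
          refine Nat.mul_le_mul_right _ ?_
          rw [hsplit]
          nlinarith
      _ = _ := by ring

/-- One step of the negative correlation bound `sum_two_pow_card_le`. -/
lemma sum_two_pow_card_step (τ : α → ι) (W B : Finset α) (u : α) (hu : u ∉ B) :
    (#(fiber τ (τ u)) : ℝ) *
        ∑ a ∈ (fiberPerms τ).filter (fun a => a u ∈ W), (2 : ℝ) ^ #{x ∈ B | a x ∈ W} ≤
      #{x ∈ W | τ x = τ u} * ∑ a ∈ fiberPerms τ, (2 : ℝ) ^ #{x ∈ B | a x ∈ W} := by
  classical
  set S := (fiberPerms τ).filter (fun a => a u ∈ W) with hS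
  set X : Equiv.Perm α → ℝ := fun a => (2 : ℝ) ^ #{x ∈ B | a x ∈ W} with hX
  let g : Equiv.Perm α × α → Equiv.Perm α × α := fun q => (Equiv.swap (q.1 u) q.2 * q.1, q.1 u)
  have hg : Set.InjOn g (S ×ˢ fiber τ (τ u) : Finset _) := by
    rintro ⟨a, x⟩ - ⟨b, y⟩ - h
    simp only [g, Prod.mk.injEq] at h
    obtain ⟨h1, h2⟩ := h
    have hx : x = y := by
      have := congrArg (fun c : Equiv.Perm α => c u) h1
      simpa using this
    subst hx
    rw [h2, mul_right_inj] at h1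
    rw [h1]
  calc (#(fiber τ (τ u)) : ℝ) * ∑ a ∈ S, X a
      = ∑ q ∈ S ×ˢ fiber τ (τ u), X q.1 := by
        rw [sum_product, mul_sum]
        simp [X]
    _ ≤ ∑ q ∈ S ×ˢ fiber τ (τ u), X (g q).1 := by
        refine sum_le_sum fun q hq => ?_
        obtain ⟨a, w⟩ := q
        simp only [hS, mem_product, mem_filter] at hq
        refine pow_le_pow_right₀ one_le_two (card_le_card fun x hx => ?_)
        rw [mem_filter] at hx ⊢
        refine ⟨hx.1, ?_⟩
        simp only [g, Equiv.Perm.mul_apply]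
        have h : a x ≠ a u := fun h => hu (a.injective h ▸ hx.1)
        rcases eq_or_ne (a x) w with h' | h'
        · rw [h', Equiv.swap_apply_right]
          exact hq.1.2
        rw [Equiv.swap_apply_of_ne_of_ne h h']
        exact hx.2
    _ = ∑ q ∈ (S ×ˢ fiber τ (τ u)).image g, X q.1 := by
        rw [sum_image hg]
    _ ≤ ∑ q ∈ fiberPerms τ ×ˢ {x ∈ W | τ x = τ u}, X q.1 := by
        refine sum_le_sum_of_subset_of_nonneg ?_ fun _ _ _ => by positivity
        rw [image_subset_iff]
        rintro ⟨a, w⟩ hp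
        rw [mem_product, hS, mem_filter, mem_fiber] at hp
        have ha : τ (a u) = τ u := mem_fiberPerms.1 hp.1.1 u
        rw [mem_product, mem_filter]
        exact ⟨swap_mul_mem_fiberPerms hp.1.1 (ha.trans hp.2.symm), hp.1.2, ha⟩
    _ = _ := by
        rw [sum_product, mul_sum]
        simp [X]

/-- The indicators of the events `a x ∈ W`, for a random fibre-preserving `a`, have exponential
moments at most those of independent indicators with the same means. -/
lemma sum_two_pow_card_le (τ : α → ι) (W B : Finset α) :
    ∑ a ∈ fiberPerms τ, (2 : ℝ) ^ #{x ∈ B | a x ∈ W} ≤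
      #(fiberPerms τ) * ∏ u ∈ B, (1 + (#{x ∈ W | τ x = τ u} : ℝ) / #(fiber τ (τ u))) := by
  classical
  induction B using Finset.induction_on with
  | empty => simp
  | insert u B hu ih =>
    have hpos : (0 : ℝ) < #(fiber τ (τ u)) := by
      exact_mod_cast card_pos.2 ⟨u, by simp⟩
    set c : ℝ := ((#{x ∈ W | τ x = τ u} : ℕ) : ℝ) with hc
    have hstep := sum_two_pow_card_step τ W B u hu
    rw [prod_insert hu]
    have hkey : ∑ a ∈ fiberPerms τ, (2 : ℝ) ^ #{x ∈ insert u B | a x ∈ W} =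
        ∑ a ∈ fiberPerms τ, (2 : ℝ) ^ #{x ∈ B | a x ∈ W} +
        ∑ a ∈ (fiberPerms τ).filter (fun a => a u ∈ W), (2 : ℝ) ^ #{x ∈ B | a x ∈ W} := by
      rw [sum_filter, ← sum_add_distrib]
      refine sum_congr rfl fun a _ => ?_
      rw [filter_insert]
      split_ifs with h
      · rw [card_insert_of_notMem (by simp [hu]), pow_succ]
        ring
      · simp
    rw [hkey]
    have h2 : ∑ a ∈ (fiberPerms τ).filter (fun a => a u ∈ W), (2 : ℝ) ^ #{x ∈ B | a x ∈ W} ≤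
        c / #(fiber τ (τ u)) * ∑ a ∈ fiberPerms τ, (2 : ℝ) ^ #{x ∈ B | a x ∈ W} := by
      rw [div_mul_eq_mul_div, le_div_iff₀ hpos, mul_comm]
      exact hstep
    have h3 : (0 : ℝ) ≤ c / #(fiber τ (τ u)) := by positivity
    nlinarith [mul_le_mul_of_nonneg_left ih (by linarith : 0 ≤ 1 + c / #(fiber τ (τ u)))]

lemma card_double_coset_le (τ : α → ι) (θ : Equiv.Perm α) (C : Finset (Equiv.Perm α))
    (P : Finset (Equiv.Perm α × Equiv.Perm α))
    (hP : ∀ q ∈ P, q.1 ∈ fiberPerms τ ∧ q.2 ∈ fiberPerms τ ∧ q.2 * θ * q.1 ∈ C) :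
    #P ≤ #(fiberPerms fun x => (τ x, τ (θ x))) * #C := by
  refine card_le_mul_card_image_of_maps_to (f := fun q => q.2 * θ * q.1)
    (fun q hq => (hP q hq).2.2) _ fun σ _ => ?_
  rcases (P.filter fun q => q.2 * θ * q.1 = σ).eq_empty_or_nonempty with h | ⟨⟨a₀, b₀⟩, h₀⟩
  · simp [h]
  rw [mem_filter] at h₀
  obtain ⟨ha₀, hb₀, -⟩ := hP _ h₀.1
  refine card_le_card_of_injOn (fun q => q.1 * a₀⁻¹) ?_ ?_
  · rintro ⟨a, b⟩ hq
    simp only [coe_filter, Set.mem_ofPred_eq, mem_coe, mem_fiberPerms, Prod.mk.injEq] at hq h₀ ⊢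
    obtain ⟨ha, hb, -⟩ := hP _ hq.1
    simp only [mem_fiberPerms] at ha hb ha₀ hb₀
    intro x
    refine ⟨?_, ?_⟩
    · rw [Equiv.Perm.mul_apply, ha, ← ha₀]
      simp
    · have h1 : b (θ (a (a₀⁻¹ x))) = b₀ (θ x) := by
        have := congrArg (fun c : Equiv.Perm α => c (a₀⁻¹ x)) (hq.2.trans h₀.2.symm)
        simpa using this
      rw [Equiv.Perm.mul_apply, ← hb, h1, hb₀]
  · rintro ⟨a, b⟩ hq ⟨a', b'⟩ hq' h
    simp only [coe_filter, Set.mem_ofPred_eq] at hq hq' h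
    have ha : a = a' := mul_right_cancel h
    subst ha
    have := hq.2.trans hq'.2.symm
    rw [mul_left_inj, mul_left_inj] at this
    rw [this]

/-- Few fibre-preserving permutations send many elements of `B` into `W`. -/
lemma card_overfull_le [Fintype ι] (τ : α → ι) (W B : Finset α) (m D₁ D₂ : ℕ) (hm : 0 < m)
    (hW : #W ≤ 2 * m) (hfib : ∀ s, m ≤ #(fiber τ s)) (hB : ∀ r, #{u ∈ B | τ u = r} ≤ D₁) :
    (#((fiberPerms τ).filter fun a => D₂ < #{x ∈ B | a x ∈ W}) : ℝ) * 2 ^ D₂ ≤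
      #(fiberPerms τ) * Real.exp (2 * D₁) := by
  have hm' : (0 : ℝ) < m := by exact_mod_cast hm
  calc (#((fiberPerms τ).filter fun a => D₂ < #{x ∈ B | a x ∈ W}) : ℝ) * 2 ^ D₂
      ≤ ∑ a ∈ (fiberPerms τ).filter fun a => D₂ < #{x ∈ B | a x ∈ W},
          (2 : ℝ) ^ #{x ∈ B | a x ∈ W} := by
        rw [← nsmul_eq_mul]
        refine card_nsmul_le_sum _ _ _ fun a ha => ?_
        exact pow_le_pow_right₀ one_le_two (mem_filter.1 ha).2.le
    _ ≤ ∑ a ∈ fiberPerms τ, (2 : ℝ) ^ #{x ∈ B | a x ∈ W} :=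
        sum_le_sum_of_subset_of_nonneg (filter_subset _ _) fun _ _ _ => by positivity
    _ ≤ _ := sum_two_pow_card_le τ W B
    _ ≤ #(fiberPerms τ) * ∏ u ∈ B, Real.exp ((#{x ∈ W | τ x = τ u} : ℝ) / m) := by
        refine mul_le_mul_of_nonneg_left (prod_le_prod (fun _ _ => by positivity) fun u _ => ?_)
          (by positivity)
        have h1 : (#{x ∈ W | τ x = τ u} : ℝ) / #(fiber τ (τ u)) ≤
            (#{x ∈ W | τ x = τ u} : ℝ) / m :=
          div_le_div_of_nonneg_left (by positivity) hm' (by exact_mod_cast hfib _)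
        have h2 := Real.add_one_le_exp ((#{x ∈ W | τ x = τ u} : ℝ) / m)
        linarith
    _ ≤ _ := by
        rw [← Real.exp_sum]
        refine mul_le_mul_of_nonneg_left (Real.exp_le_exp.2 ?_) (by positivity)
        refine (sum_card_filter_fiber_mul τ B (fun r => (#{x ∈ W | τ x = r} : ℝ) / m) D₁
          (fun _ => by positivity) fun r => by exact_mod_cast hB r).trans ?_
        rw [← sum_div, mul_comm (2 : ℝ)]
        refine mul_le_mul_of_nonneg_left ?_ (by positivity)
        rw [div_le_iff₀ hm', ← Nat.cast_sum, ← card_eq_sum_card_fiberwise (fun _ _ => mem_univ _)]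
        exact_mod_cast hW

/-- If the pairs in `bad` are sparse and equidistributed among the fibres of `τ`, then most of the
double coset of `θ` can be corrected to avoid `bad`. -/
lemma card_avoiding_bad_ge [Fintype ι] (τ : α → ι) (θ : Equiv.Perm α) (bad : α → α → Prop)
    [∀ u v, Decidable (bad u v)] (C : Finset (Equiv.Perm α)) (m Δ D₁ D₂ : ℕ) (hm : 0 < m)
    (hC : ∀ a ∈ fiberPerms τ, ∀ b ∈ fiberPerms τ, (∀ u, ¬ bad u ((b * θ * a) u)) → b * θ * a ∈ C)
    (hlow : ∀ s, m ≤ #(fiber τ s)) (hup : ∀ s, #(fiber τ s) ≤ 2 * m)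
    (hrow : ∀ u s, #{v ∈ fiber τ s | bad u v} ≤ D₁)
    (hcol : ∀ v s, #{u ∈ fiber τ s | bad u v} ≤ D₁)
    (hΔ : Δ + 1 + 2 * D₂ ≤ m) (hD : D₁ ≤ D₂)
    (htail : 2 * (Fintype.card α : ℝ) * Real.exp (2 * D₁) ≤ 2 ^ D₂) :
    #(fiberPerms τ) ^ 2 * Δ ^ (Fintype.card α * D₂) ≤
      2 * #(fiberPerms fun x => (τ x, τ (θ x))) * #C * (Δ + 1) ^ (Fintype.card α * D₂) := by
  classical
  set H := fiberPerms τ with hH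
  set n := Fintype.card α with hn
  let W : α → Finset α := fun v => univ.filter fun w => τ (θ w) = τ v
  let B : α → Finset α := fun v => univ.filter fun u => bad u v
  let full : α → Finset (Equiv.Perm α) := fun v => H.filter fun a => D₂ < #{x ∈ B v | a x ∈ W v}
  have hover : 2 * #(univ.biUnion full) ≤ #H := by
    have h1 : ∀ v, (#(full v) : ℝ) * 2 ^ D₂ ≤ #H * Real.exp (2 * D₁) := fun v => by
      refine card_overfull_le τ (W v) (B v) m D₁ D₂ hm ?_ hlow fun r => ?_
      · refine le_trans ?_ (hup (τ v))
        refine card_le_card_of_injOn θ (fun w hw => ?_) θ.injective.injOn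
        simpa [W] using hw
      · refine le_trans (card_le_card fun u hu => ?_) (hcol v r)
        simp only [B, mem_filter, mem_univ, true_and, mem_fiber] at hu ⊢
        exact ⟨hu.2, hu.1⟩
    have h2 : (#(univ.biUnion full) : ℝ) ≤ ∑ v, (#(full v) : ℝ) := by
      exact_mod_cast card_biUnion_le
    have h3 : (∑ v, (#(full v) : ℝ)) * 2 ^ D₂ ≤ n * (#H * Real.exp (2 * D₁)) := by
      rw [sum_mul]
      refine (sum_le_sum fun v _ => h1 v).trans ?_
      simp [hn]
    have h4 : (0 : ℝ) < 2 ^ D₂ := by positivity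
    have h5 : 2 * (#(univ.biUnion full) : ℝ) * 2 ^ D₂ ≤ #H * 2 ^ D₂ := by
      have h6 := mul_le_mul_of_nonneg_left htail (Nat.cast_nonneg (α := ℝ) #H)
      nlinarith
    exact_mod_cast le_of_mul_le_mul_right h5 h4
  let good := H \ univ.biUnion full
  have hgood : #H ≤ 2 * #good := by
    have := le_card_sdiff (univ.biUnion full) H
    change _ ≤ #good at this
    omega
  let Z : Equiv.Perm α → Finset (Equiv.Perm α) := fun a =>
    H.filter fun b => ∀ u, ¬ bad u ((b * θ * a) u)
  have hZ : ∀ a ∈ good, #H * Δ ^ (n * D₂) ≤ #(Z a) * (Δ + 1) ^ (n * D₂) := by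
    intro a ha
    obtain ⟨haH, hao⟩ := mem_sdiff.1 ha
    simp only [mem_biUnion, mem_univ, true_and, not_exists] at hao
    let E : Finset (α × α) :=
      univ.filter fun e => τ e.1 = τ e.2 ∧ bad ((θ * a)⁻¹ e.1) e.2
    have hErow : ∀ w, #{x | (w, x) ∈ E} ≤ D₂ := fun w => by
      refine le_trans (card_le_card fun x hx => ?_) ((hrow ((θ * a)⁻¹ w) (τ w)).trans hD)
      simp only [E, mem_filter, mem_univ, true_and, mem_fiber] at hx ⊢
      exact ⟨hx.1.symm, hx.2⟩
    have hEcol : ∀ x, #{w | (w, x) ∈ E} ≤ D₂ := fun v => by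
      have h1 : #{x ∈ B v | a x ∈ W v} ≤ D₂ := by
        by_contra h
        exact hao v (mem_filter.2 ⟨haH, not_le.1 h⟩)
      refine le_trans (card_le_card_of_injOn ((θ * a)⁻¹ : Equiv.Perm α) (fun w hw => ?_)
        (Equiv.injective _).injOn) h1
      simp only [E, B, W, coe_filter, mem_filter, mem_univ, true_and,
        Set.mem_ofPred_eq] at hw ⊢
      refine ⟨hw.2, ?_⟩
      rw [← hw.1, ← Equiv.Perm.mul_apply, ← Equiv.Perm.mul_apply]
      simp
    have hEcard : #E ≤ n * D₂ := by
      rw [card_eq_sum_card_fiberwise (f := Prod.fst) (t := univ) fun _ _ => mem_univ _]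
      refine (sum_le_card_nsmul _ _ D₂ fun w _ => ?_).trans (by simp [hn])
      refine le_trans (card_le_card_of_injOn Prod.snd (fun e he => ?_) ?_) (hErow w)
      · simp only [coe_filter, Set.mem_ofPred_eq, mem_univ, true_and] at he ⊢
        rw [← he.2]
        exact he.1
      · intro e he e' he' h
        simp only [coe_filter, Set.mem_ofPred_eq] at he he'
        exact Prod.ext (he.2.trans he'.2.symm) h
    have hsw := card_fiberPerms_mul_pow_le τ D₂ Δ E hErow hEcol fun x => hΔ.trans (hlow _)
    have hsub : avoiding τ E ⊆ Z a := by
      intro b hb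
      obtain ⟨hbH, hbE⟩ := mem_filter.1 hb
      refine mem_filter.2 ⟨hbH, fun u hu => hbE ((θ * a) u) ?_⟩
      refine mem_filter.2 ⟨mem_univ _, (mem_fiberPerms.1 hbH _).symm, ?_⟩
      simpa using hu
    obtain ⟨k, hk⟩ := Nat.exists_eq_add_of_le hEcard
    rw [hk, pow_add, pow_add]
    calc #H * (Δ ^ #E * Δ ^ k) = (#H * Δ ^ #E) * Δ ^ k := by ring
      _ ≤ (#(avoiding τ E) * (Δ + 1) ^ #E) * (Δ + 1) ^ k :=
          Nat.mul_le_mul hsw (Nat.pow_le_pow_left (Nat.le_succ _) _)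
      _ ≤ (#(Z a) * (Δ + 1) ^ #E) * (Δ + 1) ^ k := by gcongr
      _ = _ := by ring
  let P : Finset (Equiv.Perm α × Equiv.Perm α) :=
    (H ×ˢ H).filter fun q => ∀ u, ¬ bad u ((q.2 * θ * q.1) u)
  have hP : ∑ a ∈ good, #(Z a) ≤ #P := by
    rw [← card_sigma]
    refine card_le_card_of_injOn (fun q => (q.1, q.2)) ?_ ?_
    · rintro ⟨a, b⟩ hq
      simp only [coe_sigma, Set.mem_sigma_iff, mem_coe, Z, mem_filter] at hq
      simp only [P, mem_coe, mem_filter, mem_product]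
      exact ⟨⟨(mem_sdiff.1 hq.1).1, hq.2.1⟩, hq.2.2⟩
    · rintro ⟨a, b⟩ - ⟨a', b'⟩ - h
      simpa using h
  have hPC : #P ≤ #(fiberPerms fun x => (τ x, τ (θ x))) * #C := by
    refine card_double_coset_le τ θ C P fun q hq => ?_
    obtain ⟨hq, hq'⟩ := mem_filter.1 hq
    obtain ⟨h1, h2⟩ := mem_product.1 hq
    exact ⟨h1, h2, hC _ h1 _ h2 hq'⟩
  calc #H ^ 2 * Δ ^ (n * D₂) = #H * (#H * Δ ^ (n * D₂)) := by ring
    _ ≤ 2 * #good * (#H * Δ ^ (n * D₂)) := Nat.mul_le_mul_right _ hgood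
    _ = 2 * ∑ a ∈ good, (#H * Δ ^ (n * D₂)) := by
        rw [sum_const, smul_eq_mul, mul_assoc]
    _ ≤ 2 * ∑ a ∈ good, (#(Z a) * (Δ + 1) ^ (n * D₂)) :=
        Nat.mul_le_mul_left _ (sum_le_sum hZ)
    _ = 2 * (∑ a ∈ good, #(Z a)) * (Δ + 1) ^ (n * D₂) := by rw [← sum_mul, mul_assoc]
    _ ≤ 2 * (#(fiberPerms fun x => (τ x, τ (θ x))) * #C) * (Δ + 1) ^ (n * D₂) := by
        gcongr
        exact hP.trans hPC
    _ = _ := by ring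

/-- The number of permutations compatible with a relation `R` between fibres, bounded through
positive weights `exp ∘ a` that almost scale `R`. -/
lemma card_compatible_le [Fintype ι] (τ : α → ι) (R : ι → ι → Prop) [∀ r s, Decidable (R r s)]
    (a : ι → ℝ) (b : ℝ)
    (ha : ∀ r, ∑ s ∈ univ.filter (R r), Real.exp (a s) ≤ Real.exp (b - a r))
    (A : Finset (Equiv.Perm α)) (hA : ∀ σ ∈ A, ∀ x, R (τ x) (τ (σ x))) :
    (#A : ℝ) ≤ #(fiberPerms τ) * Real.exp (Fintype.card α * b - 2 * ∑ x, a (τ x)) := by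
  let S : Finset (α → ι) := A.image fun σ x => τ (σ x)
  have h1 : #A ≤ #(fiberPerms τ) * #S := by
    refine card_le_mul_card_image _ _ fun f _ => ?_
    rcases (A.filter fun σ => (fun x => τ (σ x)) = f).eq_empty_or_nonempty with h | ⟨σ₀, h₀⟩
    · simp [h]
    rw [mem_filter] at h₀
    refine card_le_card_of_injOn (fun σ => σ * σ₀⁻¹) ?_ (mul_left_injective _).injOn
    intro σ hσ
    simp only [coe_filter, Set.mem_ofPred_eq, mem_coe, mem_fiberPerms] at hσ ⊢
    intro x
    have := congrFun (hσ.2.trans h₀.2.symm) (σ₀⁻¹ x)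
    simpa using this
  have h2 : (#S : ℝ) * Real.exp (∑ x, a (τ x)) ≤
      Real.exp (Fintype.card α * b - ∑ x, a (τ x)) := by
    calc (#S : ℝ) * Real.exp (∑ x, a (τ x)) = ∑ f ∈ S, ∏ x, Real.exp (a (f x)) := by
          rw [← nsmul_eq_mul, ← sum_const]
          refine sum_congr rfl fun f hf => ?_
          obtain ⟨σ, -, rfl⟩ := mem_image.1 hf
          rw [← Real.exp_sum, Equiv.sum_comp σ fun x => a (τ x)]
      _ ≤ ∑ f ∈ Fintype.piFinset fun x => univ.filter (R (τ x)), ∏ x, Real.exp (a (f x)) := by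
          refine sum_le_sum_of_subset_of_nonneg (fun f hf => ?_) fun _ _ _ =>
            prod_nonneg fun _ _ => (Real.exp_pos _).le
          obtain ⟨σ, hσ, rfl⟩ := mem_image.1 hf
          simpa using hA σ hσ
      _ = ∏ x, ∑ s ∈ univ.filter (R (τ x)), Real.exp (a s) := by rw [prod_univ_sum]
      _ ≤ ∏ x, Real.exp (b - a (τ x)) :=
          prod_le_prod (fun _ _ => sum_nonneg fun _ _ => (Real.exp_pos _).le) fun x _ => ha _
      _ = _ := by
          rw [← Real.exp_sum, sum_sub_distrib]
          simp
  calc (#A : ℝ) ≤ #(fiberPerms τ) * #S := by exact_mod_cast h1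
    _ ≤ _ := by
      refine mul_le_mul_of_nonneg_left ?_ (by positivity)
      rw [← le_div_iff₀ (Real.exp_pos _), ← Real.exp_sub] at h2
      refine h2.trans_eq ?_
      ring_nf

end FiberPreserving

section EulerFactors

/-- The factor at `p` of the product defining the constant. -/
noncomputable def eulerFactor (p : ℕ) : ℝ :=
  ((p : ℝ) - 1) ^ (2 * (1 - 1 / (p : ℝ))) / ((p : ℝ) * ((p : ℝ) - 2) ^ (1 - 2 / (p : ℝ)))

/-- The total weight `∑ t, A t` of a residue weight function modulo `p`. -/
noncomputable def weightSum (p : ℕ) : ℝ :=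
  ((p : ℝ) - 2) / 2 * Real.log (p - 2) - (p - 1) * Real.log (p - 1)

lemma eulerFactor_two : eulerFactor 2 = 1 / 2 := by
  norm_num [eulerFactor]

lemma weightSum_two : weightSum 2 = 0 := by
  norm_num [weightSum]

lemma eulerFactor_pos {p : ℕ} (hp : p.Prime) : 0 < eulerFactor p := by
  rcases hp.two_le.eq_or_lt with rfl | h
  · norm_num [eulerFactor_two]
  have : (3 : ℝ) ≤ p := by exact_mod_cast h
  exact div_pos (Real.rpow_pos_of_pos (by linarith) _)
    (mul_pos (by linarith) (Real.rpow_pos_of_pos (by linarith) _))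

lemma log_eulerFactor {p : ℕ} (hp : p.Prime) :
    Real.log (eulerFactor p) = -Real.log p - 2 / p * weightSum p := by
  rcases hp.two_le.eq_or_lt with rfl | h
  · simp [eulerFactor_two, weightSum_two]
  have h3 : (3 : ℝ) ≤ p := by exact_mod_cast h
  rw [eulerFactor, Real.log_div (Real.rpow_pos_of_pos (by linarith) _).ne'
    (mul_pos (by linarith) (Real.rpow_pos_of_pos (by linarith) _)).ne',
    Real.log_mul (by linarith) (Real.rpow_pos_of_pos (by linarith) _).ne',
    Real.log_rpow (by linarith), Real.log_rpow (by linarith), weightSum]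
  field_simp
  ring

lemma eulerFactor_le_one {p : ℕ} (hp : p.Prime) : eulerFactor p ≤ 1 := by
  rcases hp.two_le.eq_or_lt with rfl | h
  · norm_num [eulerFactor_two]
  have h3 : (3 : ℝ) ≤ p := by exact_mod_cast h
  have hp0 : (0 : ℝ) < p := by linarith
  rw [← Real.log_nonpos_iff (eulerFactor_pos hp).le, log_eulerFactor hp, weightSum]
  have h1 := Real.log_le_sub_one_of_pos (x := (p - 1) / p) (by apply div_pos <;> linarith)
  have h2 := Real.log_le_sub_one_of_pos (x := (p - 1) ^ 2 / (p * (p - 2)))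
    (by apply div_pos; nlinarith; nlinarith)
  rw [Real.log_div (by linarith) (by linarith)] at h1
  rw [Real.log_div (by nlinarith) (by nlinarith), Real.log_pow,
    Real.log_mul (by linarith) (by linarith)] at h2
  have h1' := mul_le_mul_of_nonneg_left h1 (show (0 : ℝ) ≤ 2 by norm_num)
  have h2' := mul_le_mul_of_nonneg_left h2 (show (0 : ℝ) ≤ p - 2 by linarith)
  have e1 : (2 : ℝ) * ((p - 1) / p - 1) = -2 / p := by field_simp; ring
  have e2 : ((p : ℝ) - 2) * ((p - 1) ^ 2 / (p * (p - 2)) - 1) = 1 / p := by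
    have : (p : ℝ) - 2 ≠ 0 := by linarith
    field_simp
    ring
  have e3 : -2 / (p : ℝ) + 1 / p ≤ 0 := by
    rw [← add_div]
    exact div_nonpos_of_nonpos_of_nonneg (by norm_num) hp0.le
  have e4 : (p : ℝ) * (-Real.log p - 2 / p *
      (((p : ℝ) - 2) / 2 * Real.log (p - 2) - (p - 1) * Real.log (p - 1))) =
      2 * (Real.log (p - 1) - Real.log p) +
        (p - 2) * ((2 : ℕ) * Real.log (p - 1) - (Real.log p + Real.log (p - 2))) := by
    field_simp
    push_cast
    ring
  exact nonpos_of_mul_nonpos_right (by linarith) hp0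

lemma antitone_prod_eulerFactor :
    Antitone fun P : Finset Nat.Primes => ∏ p ∈ P, eulerFactor p := fun P P' h => by
  dsimp only
  rw [← prod_sdiff h]
  exact mul_le_of_le_one_left (prod_nonneg fun p _ => (eulerFactor_pos p.2).le)
    (prod_le_one (fun p _ => (eulerFactor_pos p.2).le) fun p _ => eulerFactor_le_one p.2)

lemma hasProd_coprimeConst :
    Tendsto (fun P : Finset Nat.Primes => ∏ p ∈ P, eulerFactor p) atTop (nhds coprimeConst) := by
  have h : HasProd (fun p : Nat.Primes => eulerFactor p)
      (⨅ P : Finset Nat.Primes, ∏ p ∈ P, eulerFactor p) :=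
    tendsto_atTop_ciInf antitone_prod_eulerFactor
      ⟨0, by rintro _ ⟨P, rfl⟩; exact prod_nonneg fun p _ => (eulerFactor_pos p.2).le⟩
  have h' := h.multipliable.hasProd
  exact h'

lemma coprimeConst_le_prod (P : Finset Nat.Primes) : coprimeConst ≤ ∏ p ∈ P, eulerFactor p :=
  antitone_prod_eulerFactor.le_of_tendsto hasProd_coprimeConst P

lemma prod_eulerFactor_pos (P : Finset Nat.Primes) : 0 < ∏ p ∈ P, eulerFactor p :=
  prod_pos fun p _ => eulerFactor_pos p.2

end EulerFactors

section Residues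

instance (p : Nat.Primes) : NeZero (p : ℕ) := ⟨p.2.ne_zero⟩

/-- Systems of residues modulo the primes in `P`. -/
abbrev Residues (P : Finset Nat.Primes) := ∀ p : P, ZMod ((p : Nat.Primes) : ℕ)

/-- The residues of `k` modulo the primes in `P`. -/
def residue (P : Finset Nat.Primes) (k : ℕ) : Residues P := fun _ => (k : ZMod _)

/-- The product of the primes in `P`. -/
def modulus (P : Finset Nat.Primes) : ℕ := ∏ p ∈ P, (p : ℕ)

/-- Two systems of residues that do not vanish modulo the same prime of `P`. -/
def Compatible {P : Finset Nat.Primes} (r s : Residues P) : Prop := ∀ p, ¬ (r p = 0 ∧ s p = 0)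

instance {P : Finset Nat.Primes} (r s : Residues P) : Decidable (Compatible r s) := by
  unfold Compatible
  infer_instance

variable (P : Finset Nat.Primes)

lemma modulus_pos : 0 < modulus P := prod_pos fun p _ => p.2.pos

lemma card_residues : Fintype.card (Residues P) = modulus P := by
  simp only [Fintype.card_pi, ZMod.card, modulus]
  exact prod_coe_sort P fun p => (p : ℕ)

lemma dvd_modulus {p : Nat.Primes} (hp : p ∈ P) : (p : ℕ) ∣ modulus P :=
  dvd_prod_of_mem (fun p : Nat.Primes => (p : ℕ)) hp

lemma modulus_dvd_iff (d : ℤ) : (modulus P : ℤ) ∣ d ↔ ∀ p ∈ P, ((p : ℕ) : ℤ) ∣ d := by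
  refine ⟨fun h p hp => (Int.natCast_dvd_natCast.2 (dvd_modulus P hp)).trans h, fun h => ?_⟩
  rw [modulus, Nat.cast_prod]
  refine prod_dvd_of_coprime (fun p _ q _ hpq => ?_) h
  rw [Function.onFun, Nat.isCoprime_iff_coprime]
  exact (Nat.coprime_primes p.2 q.2).2 fun h => hpq (Subtype.ext h)

lemma residue_eq_iff (k l : ℕ) : residue P k = residue P l ↔ k ≡ l [MOD modulus P] := by
  rw [Nat.modEq_iff_dvd, modulus_dvd_iff, funext_iff]
  simp only [residue, ZMod.natCast_eq_natCast_iff, Nat.modEq_iff_dvd, Subtype.forall]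

lemma exists_residue_succ (r : Residues P) : ∃ v, residue P (v + 1) = r := by
  have hQ := modulus_pos P
  have hinj : Function.Injective fun i : Fin (modulus P) => residue P i := fun i j h => by
    have := (residue_eq_iff P i j).1 h
    rw [Nat.ModEq, Nat.mod_eq_of_lt i.2, Nat.mod_eq_of_lt j.2] at this
    exact Fin.ext this
  have hbij := (Fintype.bijective_iff_injective_and_card _).2
    ⟨hinj, by rw [Fintype.card_fin, card_residues]⟩
  obtain ⟨i, rfl⟩ := hbij.2 r
  refine ⟨i + (modulus P - 1), ?_⟩
  rw [residue_eq_iff, add_assoc, Nat.sub_add_cancel hQ]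
  simp [Nat.ModEq]

lemma card_fin_filter (p : ℕ → Prop) [DecidablePred p] (n : ℕ) :
    #(univ.filter fun i : Fin n => p i) = Nat.count p n := by
  rw [Nat.count_eq_card_filter_range, card_filter, card_filter,
    Fin.sum_univ_eq_sum_range fun i => if p i then 1 else 0]

lemma count_residue (r : Residues P) (n : ℕ) : ∃ e ≤ 1, e ≤ n % modulus P ∧
    Nat.count (fun k => residue P (k + 1) = r) n = n / modulus P + e := by
  obtain ⟨v, rfl⟩ := exists_residue_succ P r
  have h : (fun k => residue P (k + 1) = residue P (v + 1)) = (· ≡ v [MOD modulus P]) := by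
    ext k
    rw [residue_eq_iff]
    exact ⟨fun h => Nat.ModEq.add_right_cancel' 1 h, fun h => h.add_right 1⟩
  refine ⟨if v % modulus P < n % modulus P then 1 else 0, by split_ifs <;> simp,
    by split_ifs <;> omega, ?_⟩
  simp only [h]
  exact Nat.count_modEq_card n (modulus_pos P) v

lemma count_residue_add (r : Residues P) (a k : ℕ) :
    Nat.count (fun k => residue P (k + 1) = r) (modulus P * a + k) =
      a + Nat.count (fun k => residue P (k + 1) = r) k := by
  rw [Nat.count_add]
  congr 1
  · obtain ⟨e, -, he, h⟩ := count_residue P r (modulus P * a)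
    rw [Nat.mul_mod_right, Nat.le_zero] at he
    rw [h, he, Nat.mul_div_cancel_left _ (modulus_pos P), add_zero]
  · congr 1
    ext j
    rw [show residue P (modulus P * a + j + 1) = residue P (j + 1) from ?_]
    rw [residue_eq_iff, add_assoc]
    simp [Nat.ModEq]

/-- Independence of the residues modulo different primes. -/
lemma sum_residues_apply (A : ∀ p : ℕ, ZMod p → ℝ) (p : P) :
    (p : Nat.Primes) * ∑ r : Residues P, A p (r p) =
      modulus P * ∑ t : ZMod ((p : Nat.Primes) : ℕ), A p t := by
  have h1 : ∀ r : Residues P, A p (r p) = ∏ q, if q = p then A q (r q) else 1 := fun r => by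
    simp
  have h2 : (modulus P : ℝ) = ∏ q : P, ((q : Nat.Primes) : ℝ) := by
    rw [modulus, Nat.cast_prod]
    exact (prod_coe_sort P fun p => ((p : ℕ) : ℝ)).symm
  simp only [h1]
  rw [← Fintype.piFinset_univ, ← prod_univ_sum (fun _ => univ)
    (fun (q : P) (t : ZMod ((q : Nat.Primes) : ℕ)) => if q = p then A q t else 1), h2,
    ← mul_prod_erase univ _ (mem_univ p), ← mul_prod_erase univ _ (mem_univ p)]
  have h3 : ∀ q ∈ univ.erase p, (∑ t : ZMod ((q : Nat.Primes) : ℕ),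
      if q = p then A q t else 1) = ((q : Nat.Primes) : ℝ) := fun q hq => by
    simp [ne_of_mem_erase hq, ZMod.card]
  rw [prod_congr rfl h3]
  simp only [if_true]
  ring

/-- The logarithmic weight of a residue modulo `p`, with a free parameter at `p = 2`. -/
noncomputable def resWeight (M : ℝ) (p : ℕ) (t : ZMod p) : ℝ :=
  if p = 2 then if t = 0 then M else -M
  else if t = 0 then -(Real.log (p - 2) / 2) else Real.log (p - 2) / 2 - Real.log (p - 1)

/-- The logarithmic weight of a system of residues. -/
noncomputable def weight {P : Finset Nat.Primes} (M : ℝ) (r : Residues P) : ℝ :=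
  ∑ p : P, resWeight M (p : Nat.Primes) (r p)

lemma sum_zmod_ite {p : ℕ} [NeZero p] (x y : ℝ) :
    ∑ t : ZMod p, (if t = 0 then x else y) = x + (p - 1) * y := by
  rw [← add_sum_erase univ _ (mem_univ 0),
    sum_congr rfl fun t ht => if_neg (ne_of_mem_erase ht)]
  have : 1 ≤ p := NeZero.one_le
  simp [ZMod.card, Nat.cast_sub this]

lemma sum_resWeight (M : ℝ) (p : Nat.Primes) :
    ∑ t : ZMod (p : ℕ), resWeight M p t = weightSum p := by
  unfold resWeight weightSum
  split_ifs with h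
  · rw [sum_zmod_ite, h]
    norm_num
  · rw [sum_zmod_ite]
    ring

lemma modulus_mul_log_prod_eulerFactor (M : ℝ) :
    modulus P * Real.log (∏ p ∈ P, eulerFactor p) =
      -(modulus P * Real.log (modulus P)) - 2 * ∑ r : Residues P, weight M r := by
  rw [Real.log_prod fun p _ => (eulerFactor_pos p.2).ne', modulus, Nat.cast_prod,
    Real.log_prod fun p _ => by exact_mod_cast p.2.ne_zero, ← Nat.cast_prod, ← modulus]
  have h : ∑ r : Residues P, weight M r = ∑ p ∈ P, (modulus P / p) * weightSum p := by
    unfold weight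
    rw [sum_comm, ← sum_coe_sort P]
    refine sum_congr rfl fun p _ => ?_
    have h1 := sum_residues_apply P (resWeight M) p
    have h2 : (((p : Nat.Primes) : ℕ) : ℝ) ≠ 0 := by exact_mod_cast (p : Nat.Primes).2.ne_zero
    rw [sum_resWeight] at h1
    field_simp
    linarith
  rw [h, mul_sum, mul_sum, mul_sum, ← sum_neg_distrib, ← sum_sub_distrib]
  refine sum_congr rfl fun p _ => ?_
  rw [log_eulerFactor p.2]
  ring

lemma sum_exp_resWeight_le {M b : ℝ} (hb : 0 ≤ b) (hM : 1 + Real.exp (-(2 * M)) ≤ Real.exp b)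
    (p : Nat.Primes) (s : ZMod (p : ℕ)) :
    ∑ t ∈ univ.filter fun t : ZMod (p : ℕ) => ¬ (s = 0 ∧ t = 0), Real.exp (resWeight M p t) ≤
      Real.exp ((if (p : ℕ) = 2 then b else 0) - resWeight M p s) := by
  have h0 : ∀ t, Real.exp (resWeight M p t) = if t = 0 then Real.exp (resWeight M p 0) else
      Real.exp (if (p : ℕ) = 2 then -M else Real.log (p - 2) / 2 - Real.log (p - 1)) := fun t => by
    by_cases ht : t = 0
    · simp [ht]
    · simp [ht, resWeight]
  have h1 : ∑ t ∈ univ.filter fun t : ZMod (p : ℕ) => ¬ (s = 0 ∧ t = 0),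
      Real.exp (resWeight M p t) = (if s = 0 then 0 else Real.exp (resWeight M p 0)) + (p - 1) *
      Real.exp (if (p : ℕ) = 2 then -M else Real.log (p - 2) / 2 - Real.log (p - 1)) := by
    rw [sum_filter, ← sum_zmod_ite]
    refine sum_congr rfl fun t _ => ?_
    rw [h0 t]
    by_cases hs : s = 0 <;> by_cases ht : t = 0 <;> simp [hs, ht]
  rw [h1]
  rcases eq_or_ne (p : ℕ) 2 with hp | hp
  · simp only [resWeight, hp, if_true]
    norm_num
    split_ifs
    · simp [hb]
    · rw [sub_neg_eq_add, Real.exp_add]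
      refine le_trans (le_of_eq ?_) (mul_le_mul_of_nonneg_right hM (Real.exp_pos _).le)
      rw [add_mul, ← Real.exp_add]
      ring_nf
  · have h3 : (3 : ℝ) ≤ (p : ℕ) := by exact_mod_cast p.2.two_le.lt_of_ne' hp
    have h4 : Real.exp (Real.log ((p : ℕ) - 2) / 2 - Real.log ((p : ℕ) - 1)) =
        Real.exp (Real.log ((p : ℕ) - 2) / 2) / ((p : ℕ) - 1) := by
      rw [Real.exp_sub, Real.exp_log (by linarith)]
    have h5 : Real.exp (Real.log ((p : ℕ) - 2) / 2) * Real.exp (Real.log ((p : ℕ) - 2) / 2) =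
        (p : ℕ) - 2 := by
      rw [← Real.exp_add, add_halves, Real.exp_log (by linarith)]
    have h6 : (((p : ℕ) : ℝ) - 1) ≠ 0 := by linarith
    simp only [resWeight, hp, if_false, if_true, zero_sub, h4]
    rw [mul_div_cancel₀ _ h6]
    split_ifs
    · simp
    · rw [neg_sub, Real.exp_sub, Real.exp_log (by linarith), Real.exp_neg]
      refine le_of_eq ?_
      field_simp
      rw [sq, h5]
      ring

lemma sum_exp_weight_le {M b : ℝ} (hb : 0 ≤ b) (hM : 1 + Real.exp (-(2 * M)) ≤ Real.exp b)
    (r : Residues P) :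
    ∑ s ∈ univ.filter (Compatible r), Real.exp (weight M s) ≤ Real.exp (b - weight M r) := by
  have h1 : univ.filter (Compatible r) =
      Fintype.piFinset fun p => univ.filter fun t => ¬ (r p = 0 ∧ t = 0) := by
    ext s
    simp [Compatible]
  have h2 : ∀ s : Residues P,
      Real.exp (weight M s) = ∏ p : P, Real.exp (resWeight M (p : Nat.Primes) (s p)) :=
    fun s => Real.exp_sum _ _
  simp only [h1, h2]
  rw [← prod_univ_sum (fun p => univ.filter fun t => ¬ (r p = 0 ∧ t = 0))
    fun (p : P) t => Real.exp (resWeight M (p : Nat.Primes) t)]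
  refine (Finset.prod_le_prod (fun _ _ => sum_nonneg fun _ _ => (Real.exp_pos _).le)
    fun p _ => sum_exp_resWeight_le hb hM (p : P).1 (r p)).trans ?_
  rw [← Real.exp_sum, Real.exp_le_exp, sum_sub_distrib, weight]
  refine sub_le_sub_right ?_ _
  rw [sum_coe_sort P fun p : Nat.Primes => if (p : ℕ) = 2 then b else 0, ← sum_filter, sum_const,
    nsmul_eq_mul]
  have : #(P.filter fun p : Nat.Primes => (p : ℕ) = 2) ≤ 1 :=
    card_le_one.2 fun p hp q hq =>
      Subtype.ext ((mem_filter.1 hp).2.trans (mem_filter.1 hq).2.symm)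
  exact mul_le_of_le_one_left hb (by exact_mod_cast this)

end Residues

lemma log_succ_sub_log_le {N : ℕ} (hN : 0 < N) : N * (Real.log (N + 1) - Real.log N) ≤ 1 := by
  have hN' : (0 : ℝ) < N := by exact_mod_cast hN
  have := Real.log_le_sub_one_of_pos (x := (N + 1) / N) (by positivity)
  rw [Real.log_div (by positivity) (by positivity)] at this
  calc _ ≤ (N : ℝ) * ((N + 1) / N - 1) := mul_le_mul_of_nonneg_left this hN'.le
    _ = 1 := by field_simp; ring

lemma one_le_succ_mul_log_sub {N : ℕ} (hN : 0 < N) :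
    1 ≤ (N + 1) * (Real.log (N + 1) - Real.log N) := by
  have hN' : (0 : ℝ) < N := by exact_mod_cast hN
  have := Real.log_le_sub_one_of_pos (x := N / (N + 1)) (by positivity)
  rw [Real.log_div (by positivity) (by positivity)] at this
  calc (1 : ℝ) = -((N + 1) * (N / (N + 1) - 1)) := by field_simp; ring
    _ ≤ _ := by nlinarith

lemma le_log_factorial (N : ℕ) : N * Real.log N - N ≤ Real.log N.factorial := by
  induction N with
  | zero => simp
  | succ N ih =>
    rcases N.eq_zero_or_pos with rfl | hN
    · simp
    rw [Nat.factorial_succ, Nat.cast_mul, Real.log_mul (by positivity) (by positivity)]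
    push_cast
    nlinarith [log_succ_sub_log_le hN]

lemma log_factorial_le (N : ℕ) :
    Real.log N.factorial ≤ N * Real.log N - N + 1 + Real.log N := by
  induction N with
  | zero => simp
  | succ N ih =>
    rcases N.eq_zero_or_pos with rfl | hN
    · simp
    rw [Nat.factorial_succ, Nat.cast_mul, Real.log_mul (by positivity) (by positivity)]
    push_cast
    nlinarith [one_le_succ_mul_log_sub hN]

section Coprime

/-- The coprime permutations of `{1, …, n}`. -/
def coprimePerms (n : ℕ) : Finset (Equiv.Perm (Fin n)) :=
  univ.filter fun σ => ∀ m : Fin n, Nat.gcd (m.1 + 1) ((σ m).1 + 1) = 1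

lemma coprimePermCount_eq (n : ℕ) : coprimePermCount n = #(coprimePerms n) := by
  rw [coprimePermCount, Nat.card_eq_fintype_card, Fintype.card_subtype, coprimePerms]

/-- The residues of the number `i + 1 ∈ {1, …, n}` coded by `i`. -/
def residueOf (P : Finset Nat.Primes) (n : ℕ) (i : Fin n) : Residues P := residue P (i + 1)

variable (P : Finset Nat.Primes)

lemma residue_apply_eq_zero_iff (k : ℕ) (p : P) : residue P k p = 0 ↔ ((p : Nat.Primes) : ℕ) ∣ k :=
  ZMod.natCast_eq_zero_iff _ _

lemma compatible_residue_of_gcd {k l : ℕ} (h : Nat.gcd k l = 1) :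
    Compatible (residue P k) (residue P l) := fun p hp => by
  rw [residue_apply_eq_zero_iff, residue_apply_eq_zero_iff] at hp
  exact Nat.not_coprime_of_dvd_of_dvd (p : Nat.Primes).2.one_lt hp.1 hp.2 h

lemma card_fiber_residueOf (n : ℕ) (r : Residues P) :
    #(fiber (residueOf P n) r) = Nat.count (fun k => residue P (k + 1) = r) n := by
  rw [← card_fin_filter]
  rfl

lemma card_fiber_residueOf_bounds (n : ℕ) (r : Residues P) :
    n / modulus P ≤ #(fiber (residueOf P n) r) ∧
      #(fiber (residueOf P n) r) ≤ n / modulus P + 1 := by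
  obtain ⟨e, he, -, h⟩ := count_residue P r n
  rw [card_fiber_residueOf, h]
  omega

lemma sum_comp_residueOf (n : ℕ) (f : Residues P → ℝ) :
    ∑ i, f (residueOf P n i) = ∑ r, #(fiber (residueOf P n) r) * f r := by
  rw [← sum_fiberwise univ (residueOf P n)]
  refine sum_congr rfl fun r _ => ?_
  rw [sum_congr rfl fun i hi => by rw [(mem_filter.1 hi).2], sum_const, nsmul_eq_mul]
  rfl

lemma floor_mul_log_sub_le {n q : ℕ} (hq : 0 < q) (hn : q ≤ n) :
    (n / q : ℕ) * Real.log (n / q : ℕ) - (n / q : ℕ) ≤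
      (n / q : ℝ) * Real.log (n / q) - n / q + 1 := by
  have hq' : (0 : ℝ) < q := by exact_mod_cast hq
  have ha : (1 : ℝ) ≤ (n / q : ℕ) := by exact_mod_cast Nat.div_pos hn hq
  have h1 : ((n / q : ℕ) : ℝ) ≤ n / q := Nat.cast_div_le
  have h2 : (n / q : ℝ) ≤ (n / q : ℕ) + 1 := by
    rw [div_le_iff₀ hq']
    have := (Nat.lt_div_mul_add hq (a := n)).le
    have : (n : ℝ) ≤ (n / q : ℕ) * q + q := by exact_mod_cast this
    linarith
  have h3 : Real.log (n / q : ℕ) ≤ Real.log (n / q) := Real.log_le_log (by linarith) h1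
  have h4 : 0 ≤ Real.log (n / q) := Real.log_nonneg (ha.trans h1)
  nlinarith

lemma card_coprimePerms_le {M b : ℝ} (hb : 0 ≤ b)
    (hM : 1 + Real.exp (-(2 * M)) ≤ Real.exp b) : ∃ E : ℝ, ∀ n ≥ modulus P,
      (#(coprimePerms n) : ℝ) ≤ n.factorial *
        Real.exp (n * (Real.log (∏ p ∈ P, eulerFactor p) + b) + E * (1 + Real.log (n + 1))) := by
  set Q := modulus P with hQdef
  have hQ : 0 < Q := modulus_pos P
  have hQ' : (0 : ℝ) < Q := by exact_mod_cast hQ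
  set W := ∑ r : Residues P, |weight M r| with hW
  refine ⟨2 * Q + 2 * W, fun n hn => ?_⟩
  have hn0 : (0 : ℝ) < n := by exact_mod_cast hQ.trans_le hn
  set L := Real.log (n + 1) with hL
  have hL0 : 0 ≤ L := Real.log_nonneg (by linarith)
  have h1 : (#(coprimePerms n) : ℝ) ≤ #(fiberPerms (residueOf P n)) *
      Real.exp (n * b - 2 * ∑ i, weight M (residueOf P n i)) := by
    have := card_compatible_le (residueOf P n) Compatible (weight M) b (sum_exp_weight_le P hb hM)
      (coprimePerms n) fun σ hσ i =>
        compatible_residue_of_gcd P ((mem_filter.1 hσ).2 i)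
    rwa [Fintype.card_fin] at this
  have h2 : Real.log #(fiberPerms (residueOf P n)) ≤
      n * Real.log (n / Q) - n + Q + Q * (1 + 2 * L) := by
    rw [card_fiberPerms, Nat.cast_prod,
      Real.log_prod fun r _ => by exact_mod_cast (Nat.factorial_pos _).ne']
    have : ∀ r : Residues P, Real.log (#(fiber (residueOf P n) r)).factorial ≤
        (n / Q : ℝ) * Real.log (n / Q) - n / Q + 1 + (1 + 2 * L) := fun r => by
      obtain ⟨-, hr⟩ := card_fiber_residueOf_bounds P n r
      have ha : 0 < n / Q := Nat.div_pos hn hQ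
      have ha' : ((n / Q : ℕ) : ℝ) ≤ n := by exact_mod_cast Nat.div_le_self n Q
      have hfac : Real.log (#(fiber (residueOf P n) r)).factorial ≤
          Real.log ((n / Q : ℕ) + 1 : ℝ) + Real.log (n / Q : ℕ).factorial := by
        rw [← Real.log_mul (by positivity) (by positivity)]
        refine Real.log_le_log (by positivity) ?_
        exact_mod_cast Nat.factorial_succ _ ▸ Nat.factorial_le hr
      have hl1 : Real.log ((n / Q : ℕ) + 1 : ℝ) ≤ L :=
        Real.log_le_log (by positivity) (by linarith)
      have hl2 : Real.log (n / Q : ℕ) ≤ L :=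
        Real.log_le_log (by exact_mod_cast ha) (by linarith)
      linarith [log_factorial_le (n / Q), floor_mul_log_sub_le hQ hn]
    refine (sum_le_sum fun r _ => this r).trans_eq ?_
    rw [sum_const, card_univ, card_residues, nsmul_eq_mul, ← hQdef]
    field_simp
  have h3 : -(∑ i, weight M (residueOf P n i)) ≤ -(n / Q * ∑ r : Residues P, weight M r) + W := by
    rw [sum_comp_residueOf, mul_sum, hW, ← sum_neg_distrib, ← sum_neg_distrib, ← sum_add_distrib]
    refine sum_le_sum fun r _ => ?_
    obtain ⟨hr1, hr2⟩ := card_fiber_residueOf_bounds P n r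
    have hr1' : ((n / Q : ℕ) : ℝ) ≤ #(fiber (residueOf P n) r) := by exact_mod_cast hr1
    have hr2' : (#(fiber (residueOf P n) r) : ℝ) ≤ (n / Q : ℕ) + 1 := by exact_mod_cast hr2
    have hd1 : ((n / Q : ℕ) : ℝ) ≤ n / Q := Nat.cast_div_le
    have hd2 : (n / Q : ℝ) ≤ (n / Q : ℕ) + 1 := by
      rw [div_le_iff₀ hQ']
      have := (Nat.lt_div_mul_add hQ (a := n)).le
      have : (n : ℝ) ≤ (n / Q : ℕ) * Q + Q := by exact_mod_cast this
      linarith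
    have : |(n / Q - #(fiber (residueOf P n) r) : ℝ) * weight M r| ≤ 1 * |weight M r| := by
      rw [abs_mul]
      exact mul_le_mul_of_nonneg_right (abs_le.2 ⟨by linarith, by linarith⟩) (abs_nonneg _)
    linarith [le_abs_self ((n / Q - #(fiber (residueOf P n) r) : ℝ) * weight M r)]
  have h4 := modulus_mul_log_prod_eulerFactor P M
  have h5 : n * Real.log (∏ p ∈ P, eulerFactor p) =
      -(n * Real.log Q) - 2 * (n / Q * ∑ r : Residues P, weight M r) := by
    rw [← hQdef] at h4
    field_simp
    linear_combination h4
  refine h1.trans ?_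
  rw [← Real.exp_log (show (0 : ℝ) < n.factorial by positivity), ← Real.exp_add]
  have hF : (0 : ℝ) < #(fiberPerms (residueOf P n)) := by
    exact_mod_cast card_pos.2 ⟨1, by simp⟩
  rw [← Real.exp_log hF, ← Real.exp_add, Real.exp_le_exp]
  rw [Real.log_div hn0.ne' hQ'.ne'] at h2
  have hWnn : 0 ≤ W := sum_nonneg fun _ _ => abs_nonneg _
  nlinarith [le_log_factorial n, mul_nonneg hWnn hL0, mul_nonneg hQ'.le hL0]

lemma tendsto_log_succ_div :
    Tendsto (fun n : ℕ => Real.log (n + 1) / n) atTop (nhds 0) := by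
  have h1 : Tendsto (fun n : ℕ => Real.log ((n + 1 : ℕ) : ℝ) / ((n + 1 : ℕ) : ℝ)) atTop (nhds 0) :=
    Real.isLittleO_log_id_atTop.tendsto_div_nhds_zero.comp
      (tendsto_natCast_atTop_atTop.comp (tendsto_add_atTop_nat 1))
  have h2 := h1.mul ((tendsto_one_div_atTop_nhds_zero_nat (𝕜 := ℝ)).const_add 1)
  rw [zero_mul] at h2
  refine h2.congr' ?_
  filter_upwards [eventually_gt_atTop 0] with n hn
  have : (0 : ℝ) < n := by exact_mod_cast hn
  push_cast
  field_simp

lemma eventually_coprime_ratio_le {u : ℝ} (hu : ∏ p ∈ P, eulerFactor p < u) :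
    ∀ᶠ n : ℕ in atTop, ((coprimePermCount n : ℝ) / n.factorial) ^ ((n : ℝ)⁻¹) ≤ u := by
  have hc := prod_eulerFactor_pos P
  set c := ∏ p ∈ P, eulerFactor p with hcdef
  set b := Real.log (u / c) / 2 with hb
  have hb0 : 0 < b := half_pos (Real.log_pos ((one_lt_div hc).2 hu))
  have hexp : 0 < Real.exp b - 1 := by linarith [Real.add_one_lt_exp hb0.ne']
  obtain ⟨E, hE⟩ := card_coprimePerms_le P (M := -(Real.log (Real.exp b - 1) / 2)) hb0.le (by
    rw [show -(2 * -(Real.log (Real.exp b - 1) / 2)) = Real.log (Real.exp b - 1) by ring,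
      Real.exp_log hexp]
    linarith)
  have hlim : Tendsto (fun n : ℕ => E * (1 + Real.log (n + 1)) / n) atTop (nhds 0) := by
    simpa [mul_div_assoc, add_div] using
      ((tendsto_one_div_atTop_nhds_zero_nat (𝕜 := ℝ)).add tendsto_log_succ_div).const_mul E
  filter_upwards [eventually_ge_atTop (modulus P), hlim.eventually (gt_mem_nhds hb0)] with n hn hn'
  have hn0 : (0 : ℝ) < n := by exact_mod_cast (modulus_pos P).trans_le hn
  have h := hE n hn
  rw [← coprimePermCount_eq, ← div_le_iff₀' (by positivity)] at h
  refine (Real.rpow_le_rpow (by positivity) h (by positivity)).trans ?_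
  rw [← Real.exp_mul, ← Real.exp_log (hc.trans hu), Real.exp_le_exp, ← hcdef]
  have : Real.log u = Real.log c + 2 * b := by
    rw [hb, Real.log_div (hc.trans hu).ne' hc.ne']
    ring
  rw [this, add_mul, mul_right_comm, mul_inv_cancel₀ hn0.ne', ← div_eq_mul_inv]
  linarith

end Coprime

section Table

/-- The weight of a pair of residues modulo `p` in the limiting table. -/
def pairWeight (p : ℕ) (s t : ZMod p) : ℕ :=
  if s = 0 then if t = 0 then 0 else p - 1 else if t = 0 then p - 1 else p - 2

/-- The weight of a pair of systems of residues in the limiting table. -/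
def tableWeight {P : Finset Nat.Primes} (r s : Residues P) : ℕ :=
  ∏ p : P, pairWeight (p : Nat.Primes) (r p) (s p)

/-- The totient of the product of the primes in `P`. -/
def totientOf (P : Finset Nat.Primes) : ℕ := ∏ p ∈ P, ((p : ℕ) - 1)

variable (P : Finset Nat.Primes)

lemma totientOf_pos : 0 < totientOf P := prod_pos fun p _ => Nat.sub_pos_of_lt p.2.one_lt

lemma totientOf_le : totientOf P ≤ modulus P := Finset.prod_le_prod' fun _ _ => Nat.sub_le _ _

lemma pairWeight_comm (p : ℕ) (s t : ZMod p) : pairWeight p s t = pairWeight p t s := by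
  unfold pairWeight
  split_ifs <;> rfl

lemma tableWeight_comm (r s : Residues P) : tableWeight r s = tableWeight s r :=
  prod_congr rfl fun _ _ => pairWeight_comm _ _ _

lemma sum_zmod_ite_nat {p : ℕ} [NeZero p] (x y : ℕ) :
    ∑ t : ZMod p, (if t = 0 then x else y) = x + (p - 1) * y := by
  rw [← add_sum_erase univ _ (mem_univ 0),
    sum_congr rfl fun t ht => if_neg (ne_of_mem_erase ht)]
  simp [ZMod.card]

lemma sum_pairWeight (p : Nat.Primes) (s : ZMod (p : ℕ)) :
    ∑ t, pairWeight p s t = ((p : ℕ) - 1) ^ 2 := by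
  unfold pairWeight
  split_ifs
  · rw [sum_zmod_ite_nat, zero_add, sq]
  · rw [sum_zmod_ite_nat]
    obtain ⟨k, hk⟩ := Nat.exists_eq_add_of_le p.2.two_le
    rw [hk, show 2 + k - 1 = k + 1 by omega, show 2 + k - 2 = k by omega]
    ring

lemma sum_tableWeight (r : Residues P) : ∑ s, tableWeight r s = totientOf P ^ 2 := by
  unfold tableWeight
  rw [← Fintype.piFinset_univ, ← prod_univ_sum (fun _ => univ)
    (fun (p : P) (t : ZMod ((p : Nat.Primes) : ℕ)) => pairWeight (p : Nat.Primes) (r p) t)]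
  simp only [sum_pairWeight]
  rw [prod_coe_sort P fun p => ((p : ℕ) - 1) ^ 2, prod_pow, totientOf]

lemma compatible_of_tableWeight_ne_zero {r s : Residues P} (h : tableWeight r s ≠ 0) :
    Compatible r s := fun p hp => by
  refine h (prod_eq_zero (mem_univ p) ?_)
  simp [pairWeight, hp.1, hp.2]

lemma log_pairWeight (p : Nat.Primes) {s t : ZMod (p : ℕ)} (h : pairWeight p s t ≠ 0) :
    Real.log (pairWeight p s t) =
      2 * Real.log ((p - 1 : ℕ) : ℝ) + resWeight 0 p s + resWeight 0 p t := by
  unfold pairWeight resWeight at *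
  rcases eq_or_ne (p : ℕ) 2 with hp | hp
  · simp only [hp, if_true] at h ⊢
    split_ifs at h ⊢ <;> simp_all
  · have h1 : ((p - 1 : ℕ) : ℝ) = (p : ℕ) - 1 := Nat.cast_pred p.2.pos
    have h2 : ((p - 2 : ℕ) : ℝ) = (p : ℕ) - 2 := by rw [Nat.cast_sub p.2.two_le]; norm_num
    rw [h1]
    simp only [hp, if_false]
    split_ifs at h ⊢
    · exact absurd rfl h
    · rw [h1]; ring
    · rw [h1]; ring
    · rw [h2]; ring

lemma log_tableWeight {r s : Residues P} (h : tableWeight r s ≠ 0) :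
    Real.log (tableWeight r s) = 2 * Real.log (totientOf P) + weight 0 r + weight 0 s := by
  have h' : ∀ p ∈ univ, pairWeight ((p : P) : Nat.Primes) (r p) (s p) ≠ 0 := prod_ne_zero_iff.1 h
  rw [tableWeight, Nat.cast_prod, Real.log_prod fun p hp => by exact_mod_cast h' p hp,
    sum_congr rfl fun p hp => log_pairWeight (p : P).1 (h' p hp), sum_add_distrib, sum_add_distrib,
    ← mul_sum, totientOf, Nat.cast_prod, Real.log_prod fun p _ => by
      exact_mod_cast (Nat.sub_pos_of_lt p.2.one_lt).ne', weight, weight,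
    sum_coe_sort P fun p : Nat.Primes => Real.log ((p - 1 : ℕ) : ℝ)]

lemma sum_tableWeight_mul_log : ∑ r : Residues P, ∑ s : Residues P,
    (tableWeight r s : ℝ) * Real.log (tableWeight r s) =
      modulus P * totientOf P ^ 2 * (2 * Real.log (totientOf P)) +
        2 * (totientOf P ^ 2 * ∑ r : Residues P, weight 0 r) := by
  have h1 : ∀ r s : Residues P, (tableWeight r s : ℝ) * Real.log (tableWeight r s) =
      tableWeight r s * (2 * Real.log (totientOf P)) + tableWeight r s * weight 0 r +
        tableWeight r s * weight 0 s := fun r s => by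
    rcases eq_or_ne (tableWeight r s) 0 with h | h
    · simp [h]
    · rw [log_tableWeight P h]
      ring
  have h2 : ∀ r : Residues P, ∑ s, (tableWeight r s : ℝ) = totientOf P ^ 2 := fun r => by
    exact_mod_cast sum_tableWeight P r
  have h3 : ∀ s : Residues P, ∑ r, (tableWeight r s : ℝ) = totientOf P ^ 2 := fun s => by
    simp only [tableWeight_comm P _ s, h2]
  simp only [h1, sum_add_distrib, ← sum_mul, h2]
  rw [sum_comm (f := fun r s : Residues P => (tableWeight r s : ℝ) * weight 0 s)]
  simp only [← sum_mul, h3, ← mul_sum, sum_const, card_univ, card_residues, nsmul_eq_mul]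
  ring

lemma sum_card_fiber_pair_right {α ι κ : Type*} [Fintype α] [DecidableEq ι] [DecidableEq κ]
    [Fintype κ] (f : α → ι) (g : α → κ) (r : ι) :
    ∑ s, #(fiber (fun x => (f x, g x)) (r, s)) = #(fiber f r) := by
  rw [card_eq_sum_card_fiberwise (f := g) (t := univ) (by simp)]
  refine sum_congr rfl fun s _ => congrArg card ?_
  ext x
  simp

lemma sum_card_fiber_pair_left {α ι κ : Type*} [Fintype α] [DecidableEq ι] [DecidableEq κ]
    [Fintype ι] (f : α → ι) (g : α → κ) (s : κ) :
    ∑ r, #(fiber (fun x => (f x, g x)) (r, s)) = #(fiber g s) := by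
  rw [card_eq_sum_card_fiberwise (f := f) (t := univ) (by simp)]
  refine sum_congr rfl fun s _ => congrArg card ?_
  ext x
  simp [and_comm]

lemma gcd_succ_finRotate (k : ℕ) (i : Fin k) :
    Nat.gcd (i + 1) ((finRotate k i : ℕ) + 1) = 1 := by
  rcases k with _ | k
  · exact i.elim0
  rcases (Nat.lt_succ_iff.1 i.2).eq_or_lt with h | h
  · rw [show i = Fin.last k from Fin.ext h, finRotate_last]
    simp
  · rw [coe_finRotate_of_ne_last (by intro h'; simp [h'] at h)]
    simp

/-- A permutation that distributes each residue class over the compatible classes in the limiting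
proportions. -/
lemma exists_table_perm (n : ℕ) : ∃ (θ : Equiv.Perm (Fin n)) (e : Residues P → Residues P → ℕ),
    (∀ i, Compatible (residueOf P n i) (residueOf P n (θ i))) ∧
    (∀ r s, #(fiber (fun x => (residueOf P n x, residueOf P n (θ x))) (r, s)) =
      n / (modulus P * totientOf P ^ 2) * tableWeight r s + e r s) ∧
    ∑ r, ∑ s, e r s = n % (modulus P * totientOf P ^ 2) := by
  set q := modulus P * totientOf P ^ 2 with hq
  set k := n % q with hk
  let f : Fin k → Residues P := residueOf P k
  let e : Residues P → Residues P → ℕ := fun r s => #(fiber (fun i => (f i, f (finRotate k i))) (r, s))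
  have hn : n = modulus P * (n / q * totientOf P ^ 2) + k := by
    conv_lhs => rw [← Nat.div_add_mod n q]
    rw [hq]
    ring
  have hfib : ∀ r, #(fiber (residueOf P n) r) = n / q * totientOf P ^ 2 + #(fiber f r) := fun r => by
    rw [card_fiber_residueOf, card_fiber_residueOf]
    conv_lhs => rw [hn]
    exact count_residue_add P r _ _
  obtain ⟨θ, hθ⟩ := exists_perm_of_table (residueOf P n)
    (fun r s => n / q * tableWeight r s + e r s)
    (fun r => by
      rw [sum_add_distrib, ← mul_sum, sum_tableWeight, hfib, sum_card_fiber_pair_right])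
    (fun s => by
      simp only [tableWeight_comm P _ s]
      rw [sum_add_distrib, ← mul_sum, sum_tableWeight, hfib, sum_card_fiber_pair_left]
      congr 1
      exact card_equiv (finRotate k) fun i => by simp)
  refine ⟨θ, e, fun i => ?_, hθ, ?_⟩
  · have h1 : 0 < n / q * tableWeight (residueOf P n i) (residueOf P n (θ i)) +
        e (residueOf P n i) (residueOf P n (θ i)) := by
      rw [← hθ]
      exact card_pos.2 ⟨i, by simp⟩
    by_cases h2 : tableWeight (residueOf P n i) (residueOf P n (θ i)) = 0
    · rw [h2, mul_zero, zero_add] at h1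
      obtain ⟨j, hj⟩ := card_pos.1 h1
      rw [mem_fiber, Prod.mk.injEq] at hj
      rw [← hj.1, ← hj.2]
      exact compatible_residue_of_gcd P (gcd_succ_finRotate k j)
    · exact compatible_of_tableWeight_ne_zero P h2
  · simp only [e, sum_card_fiber_pair_right]
    exact (card_eq_sum_card_fiberwise (f := f) (s := univ) (t := univ) (by simp)).symm.trans
      (by simp)

end Table

section Entropy

variable (P : Finset Nat.Primes)

lemma factorial_add_le {a b n : ℕ} (h : a + b ≤ n) :
    (a + b).factorial ≤ a.factorial * n ^ b := by
  rw [← Nat.factorial_mul_ascFactorial]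
  exact Nat.mul_le_mul_left _ ((Nat.ascFactorial_le_pow_add a b).trans (Nat.pow_le_pow_left h b))

lemma log_factorial_add_le {a b n : ℕ} (h : a + b ≤ n) (hn : 0 < n) :
    Real.log (a + b).factorial ≤
      a * Real.log a - a + (1 + Real.log n) + b * Real.log n := by
  have h1 : Real.log (a + b).factorial ≤ Real.log (a.factorial * n ^ b : ℕ) :=
    Real.log_le_log (by positivity) (by exact_mod_cast factorial_add_le h)
  rw [Nat.cast_mul, Nat.cast_pow, Real.log_mul (by positivity) (by positivity), Real.log_pow] at h1
  have h2 : Real.log a ≤ Real.log n := by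
    rcases a.eq_zero_or_pos with rfl | ha
    · simpa using Real.log_natCast_nonneg n
    · exact Real.log_le_log (by exact_mod_cast ha) (by exact_mod_cast (Nat.le_add_right a b).trans h)
  linarith [log_factorial_le a]

lemma log_card_fiberPerms_table_le {n : ℕ} (hn : modulus P * totientOf P ^ 2 ≤ n)
    (θ : Equiv.Perm (Fin n)) (e : Residues P → Residues P → ℕ)
    (hθ : ∀ r s, #(fiber (fun x => (residueOf P n x, residueOf P n (θ x))) (r, s)) =
      n / (modulus P * totientOf P ^ 2) * tableWeight r s + e r s)
    (he : ∑ r, ∑ s, e r s = n % (modulus P * totientOf P ^ 2)) (N : ℕ)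
    (hN : N = n / (modulus P * totientOf P ^ 2) * totientOf P ^ 2) :
    Real.log #(fiberPerms fun x => (residueOf P n x, residueOf P n (θ x))) ≤
      modulus P * (N * Real.log N - N) + 2 * (N * ∑ r : Residues P, weight 0 r) +
        modulus P ^ 2 * (1 + Real.log n) +
        (n % (modulus P * totientOf P ^ 2) : ℕ) * Real.log n := by
  set q := modulus P * totientOf P ^ 2 with hq
  have hQ := modulus_pos P
  have hφ := totientOf_pos P
  have hq0 : 0 < q := by positivity
  set m := n / q with hm
  have hm0 : 0 < m := Nat.div_pos hn hq0
  have hn0 : 0 < n := hq0.trans_le hn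
  have hm' : (0 : ℝ) < m := by exact_mod_cast hm0
  have hφ' : (0 : ℝ) < totientOf P := by exact_mod_cast hφ
  rw [card_fiberPerms, Nat.cast_prod,
    Real.log_prod fun r _ => by exact_mod_cast (Nat.factorial_pos _).ne', Fintype.sum_prod_type]
  have h1 : ∀ r s : Residues P,
      Real.log (#(fiber (fun x => (residueOf P n x, residueOf P n (θ x))) (r, s))).factorial ≤
        m * (tableWeight r s * (Real.log m - 1)) +
        m * (tableWeight r s * Real.log (tableWeight r s)) +
        (1 + Real.log n) + e r s * Real.log n := fun r s => by
    have h2 : m * tableWeight r s + e r s ≤ n := by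
      rw [← hθ]
      exact (card_le_univ _).trans_eq (Fintype.card_fin n)
    rw [hθ]
    refine (log_factorial_add_le h2 hn0).trans_eq ?_
    rcases eq_or_ne (tableWeight r s) 0 with h | h
    · simp [h]
    · rw [Nat.cast_mul, Real.log_mul (by positivity) (by exact_mod_cast h)]
      ring
  refine (sum_le_sum fun r _ => sum_le_sum fun s _ => h1 r s).trans_eq ?_
  have h3 : ∀ r : Residues P, ∑ s, (tableWeight r s : ℝ) = totientOf P ^ 2 := fun r => by
    exact_mod_cast sum_tableWeight P r
  have h4 : ∑ r, ∑ s, (e r s : ℝ) = (n % q : ℕ) := by exact_mod_cast he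
  simp only [sum_add_distrib, ← mul_sum, sum_tableWeight_mul_log P, ← sum_mul, h3, h4, sum_const,
    card_univ, card_residues, nsmul_eq_mul]
  rw [hN, Nat.cast_mul, Nat.cast_pow, Real.log_mul hm'.ne' (by positivity), Real.log_pow]
  push_cast
  ring

/-- The entropy of the limiting table: a permutation `θ` respecting `P` for which the double
coset counting loses only a subexponential factor. -/
lemma exists_perm_entropy {n : ℕ} (hn : modulus P * totientOf P ^ 2 ≤ n) :
    ∃ θ : Equiv.Perm (Fin n),
      (∀ i, Compatible (residueOf P n i) (residueOf P n (θ i))) ∧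
      Real.log n.factorial + n * Real.log (∏ p ∈ P, eulerFactor p) ≤
        2 * Real.log #(fiberPerms (residueOf P n)) -
          Real.log #(fiberPerms fun x => (residueOf P n x, residueOf P n (θ x))) +
        (modulus P ^ 2 * (1 + Real.log n) +
          2 * ((n % (modulus P * totientOf P ^ 2) : ℕ) * Real.log n) + 1 + Real.log n) := by
  obtain ⟨θ, e, hcompat, hθ, he⟩ := exists_table_perm P n
  refine ⟨θ, hcompat, ?_⟩
  set N := n / (modulus P * totientOf P ^ 2) * totientOf P ^ 2 with hN
  have hF := log_card_fiberPerms_table_le P hn θ e hθ he N hN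
  set q := modulus P * totientOf P ^ 2 with hq
  have hQ := modulus_pos P
  have hφ := totientOf_pos P
  have hq0 : 0 < q := by positivity
  have hn0 : 0 < n := hq0.trans_le hn
  have hN0 : 0 < N := Nat.mul_pos (Nat.div_pos hn hq0) (by positivity)
  have hdecomp : n = modulus P * N + n % q := by
    conv_lhs => rw [← Nat.div_add_mod n q]
    rw [hN, hq]
    ring
  set k := n % q with hk
  have hNle : N ≤ n / modulus P := by
    rw [Nat.le_div_iff_mul_le hQ]
    linarith [Nat.zero_le k, mul_comm N (modulus P)]
  have hH : modulus P * (N * Real.log N - N) ≤ Real.log #(fiberPerms (residueOf P n)) := by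
    rw [card_fiberPerms, Nat.cast_prod,
      Real.log_prod fun r _ => by exact_mod_cast (Nat.factorial_pos _).ne']
    have : ∀ r : Residues P, N * Real.log N - N ≤
        Real.log (#(fiber (residueOf P n) r)).factorial := fun r => by
      refine (le_log_factorial N).trans (Real.log_le_log (by positivity) ?_)
      exact_mod_cast Nat.factorial_le (hNle.trans (card_fiber_residueOf_bounds P n r).1)
    refine le_trans (le_of_eq ?_) (sum_le_sum fun r _ => this r)
    rw [sum_const, card_univ, card_residues, nsmul_eq_mul]
  have hQ' : (0 : ℝ) < modulus P := by exact_mod_cast hQ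
  have hN' : (0 : ℝ) < N := by exact_mod_cast hN0
  have hn' : (0 : ℝ) < n := by exact_mod_cast hn0
  have hk' : (0 : ℝ) ≤ k := by positivity
  have hd : (n : ℝ) = modulus P * N + k := by exact_mod_cast hdecomp
  have hc := modulus_mul_log_prod_eulerFactor P 0
  have hc0 : Real.log (∏ p ∈ P, eulerFactor p) ≤ 0 :=
    Real.log_nonpos (prod_eulerFactor_pos P).le
      (prod_le_one (fun p _ => (eulerFactor_pos p.2).le) fun p _ => eulerFactor_le_one p.2)
  have hlog : modulus P * N * (Real.log n - (Real.log (modulus P) + Real.log N)) ≤ k := by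
    have := Real.log_le_sub_one_of_pos (x := n / (modulus P * N)) (by positivity)
    rw [Real.log_div (by positivity) (by positivity), Real.log_mul (by positivity) (by positivity)]
      at this
    calc _ ≤ (modulus P * N : ℝ) * (n / (modulus P * N) - 1) :=
          mul_le_mul_of_nonneg_left this (by positivity)
      _ = k := by
          rw [mul_sub, mul_div_cancel₀ _ (by positivity), hd]
          ring
  have hfac := log_factorial_le n
  have hcN : n * Real.log (∏ p ∈ P, eulerFactor p) ≤
      N * (modulus P * Real.log (∏ p ∈ P, eulerFactor p)) := by
    rw [hd]
    nlinarith
  rw [hc] at hcN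
  have hnl : n * Real.log n = modulus P * N * Real.log n + k * Real.log n := by
    rw [← add_mul, ← hd]
  nlinarith

end Entropy

section LargePrimes

/-- The primes up to `K`. -/
def primesUpTo (K : ℕ) : Finset Nat.Primes := (range (K + 1)).subtype Nat.Prime

lemma mem_primesUpTo {K : ℕ} {p : Nat.Primes} : p ∈ primesUpTo K ↔ (p : ℕ) ≤ K :=
  (mem_subtype (p := Nat.Prime) (a := p)).trans (by simp)

lemma modulus_primesUpTo_le (K : ℕ) : modulus (primesUpTo K) ≤ 4 ^ K := by
  refine le_trans (le_of_eq ?_) (primorial_le_four_pow K)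
  exact prod_subtype_eq_prod_filter (s := range (K + 1)) (p := Nat.Prime) fun p => p

/-- Two elements of `Fin n` code numbers with a common prime factor exceeding `K`. -/
def SharesLargePrime (K : ℕ) {n : ℕ} (u v : Fin n) : Prop :=
  ∃ p, p.Prime ∧ K < p ∧ p ∣ u.1 + 1 ∧ p ∣ v.1 + 1

lemma SharesLargePrime.symm {K n : ℕ} {u v : Fin n} (h : SharesLargePrime K u v) :
    SharesLargePrime K v u := by
  obtain ⟨p, hp, hK, hu, hv⟩ := h
  exact ⟨p, hp, hK, hv, hu⟩

lemma gcd_eq_one_of_compatible {K n : ℕ} {u v : Fin n}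
    (h : Compatible (residueOf (primesUpTo K) n u) (residueOf (primesUpTo K) n v))
    (h' : ¬ SharesLargePrime K u v) : Nat.gcd (u.1 + 1) (v.1 + 1) = 1 := by
  by_contra hne
  obtain ⟨p, hp, hpu, hpv⟩ := Nat.Prime.not_coprime_iff_dvd.1 hne
  by_cases hK : K < p
  · exact h' ⟨p, hp, hK, hpu, hpv⟩
  · refine h ⟨⟨p, hp⟩, mem_primesUpTo.2 (not_lt.1 hK)⟩ ⟨?_, ?_⟩
    · exact (residue_apply_eq_zero_iff _ _ _).2 hpu
    · exact (residue_apply_eq_zero_iff _ _ _).2 hpv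

lemma card_large_primeFactors_le {K n k : ℕ} (hK : 2 ≤ K) (hk : k ≠ 0) (hkn : k ≤ n) :
    #(k.primeFactors.filter (K < ·)) ≤ Nat.log K n := by
  refine Nat.le_log_of_pow_le hK (le_trans ?_ hkn)
  calc K ^ #(k.primeFactors.filter (K < ·)) ≤ ∏ p ∈ k.primeFactors.filter (K < ·), p :=
        pow_card_le_prod _ _ _ fun p hp => (mem_filter.1 hp).2.le
    _ ≤ ∏ p ∈ k.primeFactors, p :=
        prod_le_prod_of_subset_of_one_le' (filter_subset _ _) fun p hp _ =>
          (Nat.prime_of_mem_primeFactors hp).one_lt.le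
    _ ≤ k := Nat.le_of_dvd (Nat.pos_of_ne_zero hk) (Nat.prod_primeFactors_dvd k)

lemma card_fiber_multiples_le {K n p : ℕ} (hK : 0 < K) (hp : p.Prime) (hKp : K < p)
    (s : Residues (primesUpTo K)) :
    #((fiber (residueOf (primesUpTo K) n) s).filter fun v => p ∣ v.1 + 1) ≤
      n / (K * modulus (primesUpTo K)) + 1 := by
  set Q := modulus (primesUpTo K) with hQ
  have hQ0 : 0 < Q := modulus_pos _
  have hcop : Nat.Coprime Q p := Nat.Coprime.prod_left fun q hq =>
    (Nat.coprime_primes q.2 hp).2 ((mem_primesUpTo.1 hq).trans_lt hKp).ne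
  have hle : n / (Q * p) ≤ n / (K * Q) :=
    Nat.div_le_div_left (by rw [mul_comm K]; exact Nat.mul_le_mul_left _ hKp.le) (by positivity)
  rw [← card_range (n / (K * Q) + 1)]
  refine card_le_card_of_injOn (fun v => v.1 / (Q * p)) (fun v _ => ?_) fun v hv w hw hvw => ?_
  · rw [coe_range, Set.mem_Iio, Nat.lt_succ_iff]
    exact (Nat.div_le_div_right v.2.le).trans hle
  · rw [mem_coe, mem_filter, mem_fiber] at hv hw
    have h1 : v.1 + 1 ≡ w.1 + 1 [MOD Q] := (residue_eq_iff _ _ _).1 (hv.1.trans hw.1.symm)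
    have h2 : v.1 + 1 ≡ w.1 + 1 [MOD p] :=
      ((Nat.modEq_zero_iff_dvd).2 hv.2).trans ((Nat.modEq_zero_iff_dvd).2 hw.2).symm
    have h3 : v.1 ≡ w.1 [MOD Q * p] :=
      Nat.ModEq.add_right_cancel' 1 ((Nat.modEq_and_modEq_iff_modEq_mul hcop).1 ⟨h1, h2⟩)
    refine Fin.ext ?_
    rw [← Nat.div_add_mod v.1 (Q * p), ← Nat.div_add_mod w.1 (Q * p), h3]
    dsimp only at hvw
    rw [hvw]

open Classical in
lemma card_fiber_sharesLargePrime_le {K n : ℕ} (hK : 2 ≤ K) (u : Fin n)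
    (s : Residues (primesUpTo K)) :
    #((fiber (residueOf (primesUpTo K) n) s).filter fun v => SharesLargePrime K u v) ≤
      Nat.log K n * (n / (K * modulus (primesUpTo K)) + 1) := by
  calc _ ≤ #(((u.1 + 1).primeFactors.filter (K < ·)).biUnion fun p =>
        (fiber (residueOf (primesUpTo K) n) s).filter fun v => p ∣ v.1 + 1) := by
        refine card_le_card fun v hv => ?_
        obtain ⟨hv1, p, hp, hKp, hpu, hpv⟩ := mem_filter.1 hv
        exact mem_biUnion.2 ⟨p, mem_filter.2 ⟨Nat.mem_primeFactors.2 ⟨hp, hpu, by omega⟩, hKp⟩,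
          mem_filter.2 ⟨hv1, hpv⟩⟩
    _ ≤ #((u.1 + 1).primeFactors.filter (K < ·)) * _ :=
        card_biUnion_le_card_mul _ _ _ fun p hp => by
          rw [mem_filter] at hp
          exact card_fiber_multiples_le (by omega) (Nat.prime_of_mem_primeFactors hp.1) hp.2 s
    _ ≤ _ := Nat.mul_le_mul_right _ (card_large_primeFactors_le hK (by omega) u.2)

lemma coprimePerms_lower_bound {K n D Δ : ℕ} (hK : 2 ≤ K)
    (hD : D = Nat.log K n * (n / (K * modulus (primesUpTo K)) + 1))
    (hn : modulus (primesUpTo K) * totientOf (primesUpTo K) ^ 2 ≤ n)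
    (hΔ0 : 0 < Δ) (hΔ : Δ + 1 + 2 * (6 * D) ≤ n / modulus (primesUpTo K))
    (htail : 2 * (n : ℝ) * Real.exp (2 * D) ≤ 2 ^ (6 * D)) :
    0 < #(coprimePerms n) ∧
    Real.log n.factorial + n * Real.log (∏ p ∈ primesUpTo K, eulerFactor p) ≤
      Real.log #(coprimePerms n) + Real.log 2 + n * (6 * D / Δ : ℝ) +
      (modulus (primesUpTo K) ^ 2 * (1 + Real.log n) +
        2 * ((n % (modulus (primesUpTo K) * totientOf (primesUpTo K) ^ 2) : ℕ) * Real.log n) +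
        1 + Real.log n) := by
  classical
  obtain ⟨θ, hcompat, hent⟩ := exists_perm_entropy (primesUpTo K) hn
  set τ := residueOf (primesUpTo K) n with hτ
  have hm : 0 < n / modulus (primesUpTo K) := by omega
  have key := card_avoiding_bad_ge τ θ (SharesLargePrime K) (coprimePerms n)
    (n / modulus (primesUpTo K)) Δ D (6 * D) hm
    (fun a ha b hb hbad => by
      rw [mem_fiberPerms] at ha hb
      refine mem_filter.2 ⟨mem_univ _, fun i => gcd_eq_one_of_compatible ?_ (hbad i)⟩
      have h1 := hcompat (a i)
      have h2 : τ ((b * θ * a) i) = τ (θ (a i)) := hb (θ (a i))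
      rwa [← hτ, h2, ← ha i])
    (fun s => (card_fiber_residueOf_bounds _ n s).1)
    (fun s => (card_fiber_residueOf_bounds _ n s).2.trans (by omega))
    (fun u s => hD ▸ card_fiber_sharesLargePrime_le hK u s)
    (fun v s => by
      have h := card_fiber_sharesLargePrime_le hK v s
      rw [← hD] at h
      refine le_trans (le_of_eq (congrArg card ?_)) h
      ext u
      simp only [mem_filter]
      exact and_congr_right fun _ => ⟨fun h => h.symm, fun h => h.symm⟩)
    hΔ (by omega) (by rw [Fintype.card_fin]; exact_mod_cast htail)
  rw [Fintype.card_fin] at key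
  have hH : 0 < #(fiberPerms τ) := card_pos.2 ⟨1, by simp⟩
  have hF : 0 < #(fiberPerms fun x => (τ x, τ (θ x))) := card_pos.2 ⟨1, by simp⟩
  have hC : 0 < #(coprimePerms n) := by
    by_contra h0
    rw [Nat.eq_zero_of_not_pos h0, mul_zero, zero_mul] at key
    have : 0 < #(fiberPerms τ) ^ 2 * Δ ^ (n * (6 * D)) := by positivity
    omega
  refine ⟨hC, ?_⟩
  have hlog : 2 * Real.log #(fiberPerms τ) + n * (6 * D) * Real.log Δ ≤
      Real.log 2 + Real.log #(fiberPerms fun x => (τ x, τ (θ x))) + Real.log #(coprimePerms n) +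
        n * (6 * D) * Real.log (Δ + 1) := by
    have h := Real.log_le_log (by positivity) (Nat.cast_le (α := ℝ).2 key)
    push_cast at h
    rw [Real.log_mul (by positivity) (by positivity), Real.log_mul (by positivity) (by positivity),
      Real.log_mul (by positivity) (by positivity), Real.log_mul (by positivity) (by positivity),
      Real.log_pow, Real.log_pow, Real.log_pow] at h
    push_cast at h
    exact h
  have hΔ' : (0 : ℝ) < Δ := by exact_mod_cast hΔ0
  have hstep : n * (6 * D) * (Real.log (Δ + 1) - Real.log Δ) ≤ n * (6 * D / Δ : ℝ) := by
    rw [show (n * (6 * D / Δ) : ℝ) = n * (6 * D) * (1 / Δ) by ring]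
    refine mul_le_mul_of_nonneg_left ?_ (by positivity)
    rw [le_div_iff₀' hΔ']
    exact log_succ_sub_log_le hΔ0
  linarith

end LargePrimes

section Asymptotics

lemma two_mul_exp_le_two_pow {n D : ℕ} (h : n ≤ 2 ^ (D + 1)) (hD : 2 ≤ D) :
    2 * (n : ℝ) * Real.exp (2 * D) ≤ 2 ^ (6 * D) := by
  have h1 : Real.exp (2 * D) ≤ 2 ^ (4 * D) := by
    rw [show (2 * D : ℝ) = (2 * D : ℕ) * 1 by push_cast; ring, Real.exp_nat_mul,
      show 4 * D = 2 * (2 * D) by ring, pow_mul 2 2]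
    exact pow_le_pow_left₀ (Real.exp_pos _).le (by linarith [Real.exp_one_lt_d9]) _
  have h2 : 2 * (n : ℝ) ≤ 2 ^ (2 * D) := by
    have : 2 * n ≤ 2 ^ (2 * D) := by
      calc 2 * n ≤ 2 * 2 ^ (D + 1) := Nat.mul_le_mul_left _ h
        _ = 2 ^ (D + 2) := by ring
        _ ≤ _ := Nat.pow_le_pow_right (by norm_num) (by omega)
    exact_mod_cast this
  calc _ ≤ (2 : ℝ) ^ (2 * D) * 2 ^ (4 * D) := by gcongr
    _ = _ := by rw [← pow_add]; congr 1; ring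

lemma coprimePerms_explicit_lower_bound {n K : ℕ} (hKn : K = Nat.log 2 n / 16)
    (hl : 3072 ≤ Nat.log 2 K) : 0 < #(coprimePerms n) ∧
    Real.log n.factorial + n * Real.log (∏ p ∈ primesUpTo K, eulerFactor p) ≤
      Real.log #(coprimePerms n) + Real.log 2 + n * (768 / Nat.log 2 K : ℝ) +
      (√n * (1 + Real.log n) + 2 * (√n * Real.log n) + 1 + Real.log n) := by
  set T := Nat.log 2 n with hT
  set l := Nat.log 2 K with hldef
  set Q := modulus (primesUpTo K) with hQdef
  set ω := Nat.log K n with hω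
  have hQ0 : 0 < Q := modulus_pos _
  have hK2 : 2 ≤ K := by
    by_contra h
    have : l = 0 := Nat.log_of_lt (by omega)
    omega
  have hKT : 16 * K ≤ T := by omega
  have hTK : T ≤ 32 * K := by omega
  have hn0 : n ≠ 0 := by
    rintro rfl
    simp [hT] at hKT
    omega
  have hTn : 2 ^ T ≤ n := Nat.pow_log_le_self 2 hn0
  have hnT : n < 2 ^ (T + 1) := Nat.lt_pow_succ_log_self (by norm_num) n
  have hQ4 : Q ≤ 4 ^ K := modulus_primesUpTo_le K
  have hQ8 : Q ^ 8 ≤ n := by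
    calc Q ^ 8 ≤ (4 ^ K) ^ 8 := Nat.pow_le_pow_left hQ4 8
      _ = 2 ^ (16 * K) := by
        rw [show (4 : ℕ) = 2 ^ 2 by norm_num, ← pow_mul, ← pow_mul]
        congr 1
        ring
      _ ≤ 2 ^ T := Nat.pow_le_pow_right (by norm_num) hKT
      _ ≤ n := hTn
  have hQφ : Q * totientOf (primesUpTo K) ^ 2 ≤ Q ^ 3 := by
    calc _ ≤ Q * Q ^ 2 := Nat.mul_le_mul_left _ (Nat.pow_le_pow_left (totientOf_le _) 2)
      _ = Q ^ 3 := by ring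
  have hn : Q * totientOf (primesUpTo K) ^ 2 ≤ n :=
    hQφ.trans ((Nat.pow_le_pow_right hQ0 (by norm_num)).trans hQ8)
  have hKpow : K < 2 ^ K := Nat.lt_two_pow_self
  have hKQT : T * (K * Q) ≤ n := by
    calc T * (K * Q) ≤ (32 * 2 ^ K) * (2 ^ K * 4 ^ K) := by
          gcongr
          exact hTK.trans (Nat.mul_le_mul_left _ hKpow.le)
      _ = 2 ^ (4 * K + 5) := by
        rw [show (4 : ℕ) ^ K = 2 ^ (2 * K) by rw [pow_mul]; norm_num]
        ring
      _ ≤ 2 ^ T := Nat.pow_le_pow_right (by norm_num) (by omega)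
      _ ≤ n := hTn
  have hTdiv : T ≤ n / (K * Q) := (Nat.le_div_iff_mul_le (by positivity)).2 hKQT
  have hlω : l * ω ≤ 32 * K := by
    have h1 : 2 ^ (l * ω) < 2 ^ (T + 1) := by
      calc 2 ^ (l * ω) = (2 ^ l) ^ ω := pow_mul _ _ _
        _ ≤ K ^ ω := Nat.pow_le_pow_left (Nat.pow_log_le_self 2 (by omega)) ω
        _ ≤ n := Nat.pow_log_le_self K hn0
        _ < _ := hnT
    have := (Nat.pow_lt_pow_iff_right (by norm_num : 1 < 2)).1 h1
    omega
  have hω0 : 0 < ω := Nat.log_pos hK2 <| by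
    calc K ≤ 2 ^ K := hKpow.le
      _ ≤ 2 ^ T := Nat.pow_le_pow_right (by norm_num) (by omega)
      _ ≤ n := hTn
  set D := ω * (n / (K * Q) + 1) with hD
  have hDT : T + 1 ≤ D := (Nat.add_le_add_right hTdiv 1).trans (Nat.le_mul_of_pos_left _ hω0)
  have htail := two_mul_exp_le_two_pow (n := n) (D := D)
    (hnT.le.trans (Nat.pow_le_pow_right (by norm_num) (by omega))) (by omega)
  have hQr : (0 : ℝ) < Q := by exact_mod_cast hQ0
  have hKr : (0 : ℝ) < K := by exact_mod_cast (by omega : 0 < K)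
  have hlr : (3072 : ℝ) ≤ l := by exact_mod_cast hl
  have hDle : 6 * (D : ℝ) ≤ 384 / l * (n / Q) := by
    have h1 : ((n / (K * Q) : ℕ) : ℝ) ≤ n / (K * Q) := by
      simpa using Nat.cast_div_le (m := n) (n := K * Q) (α := ℝ)
    have h2 : (1 : ℝ) ≤ (n / (K * Q) : ℕ) := by exact_mod_cast (by omega : 1 ≤ n / (K * Q))
    have h3 : (l : ℝ) * ω ≤ 32 * K := by exact_mod_cast hlω
    have h4 : (D : ℝ) ≤ ω * (2 * (n / (K * Q))) := by
      rw [hD]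
      push_cast
      exact mul_le_mul_of_nonneg_left (by linarith) (by positivity)
    rw [div_mul_eq_mul_div, le_div_iff₀ (by linarith)]
    calc 6 * (D : ℝ) * l ≤ 6 * (ω * (2 * (n / (K * Q)))) * l := by gcongr
      _ = 12 * (l * ω) * (n / (K * Q)) := by ring
      _ ≤ 12 * (32 * K) * (n / (K * Q)) := by gcongr
      _ = 384 * (n / Q) := by field_simp; ring
  have hX : (8 : ℝ) ≤ n / Q := by
    rw [le_div_iff₀ hQr]
    have : 8 * Q ≤ n := by
      calc 8 * Q ≤ 2 ^ 3 * 4 ^ K := by gcongr; norm_num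
        _ = 2 ^ (2 * K + 3) := by
          rw [show (4 : ℕ) ^ K = 2 ^ (2 * K) by rw [pow_mul]; norm_num]
          ring
        _ ≤ 2 ^ T := Nat.pow_le_pow_right (by norm_num) (by omega)
        _ ≤ n := hTn
    exact_mod_cast this
  have hDX : 6 * (D : ℝ) ≤ n / Q / 8 := by
    refine hDle.trans ?_
    have : (384 : ℝ) / l ≤ 1 / 8 := by
      rw [div_le_div_iff₀ (by linarith) (by norm_num)]
      linarith
    nlinarith
  have hfloor : (n / Q : ℝ) ≤ (n / Q : ℕ) + 1 := by
    rw [div_le_iff₀ hQr]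
    have := (Nat.lt_div_mul_add hQ0 (a := n)).le
    have : (n : ℝ) ≤ (n / Q : ℕ) * Q + Q := by exact_mod_cast this
    linarith
  have hroom : 1 + 2 * (6 * D) < n / Q := by
    have : (1 + 2 * (6 * D) : ℝ) < (n / Q : ℕ) := by linarith
    exact_mod_cast this
  obtain ⟨Δ, hΔ⟩ := Nat.exists_eq_add_of_lt hroom
  have hΔX : (n / Q / 2 : ℝ) ≤ (Δ + 1 : ℕ) := by
    have : ((n / Q : ℕ) : ℝ) = 1 + 2 * (6 * D) + Δ + 1 := by exact_mod_cast hΔ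
    push_cast
    linarith
  have hroomΔ : Δ + 1 + 1 + 2 * (6 * D) ≤ n / Q := by omega
  obtain ⟨hC, hbound⟩ := coprimePerms_lower_bound (Δ := Δ + 1) hK2 hD hn Δ.succ_pos hroomΔ htail
  refine ⟨hC, hbound.trans ?_⟩
  have hratio : (6 * D / (Δ + 1 : ℕ) : ℝ) ≤ 768 / l := by
    rw [div_le_iff₀ (by positivity)]
    calc (6 * D : ℝ) ≤ 384 / l * (n / Q) := hDle
      _ = 768 / l * (n / Q / 2) := by ring
      _ ≤ _ := by gcongr
  have hsqrt : ((Q : ℝ)) ^ 4 ≤ √n := by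
    refine Real.le_sqrt_of_sq_le ?_
    rw [← pow_mul]
    exact_mod_cast hQ8
  have hQ1 : (1 : ℝ) ≤ Q := by exact_mod_cast hQ0
  have hQ2 : (Q : ℝ) ^ 2 ≤ √n := (pow_le_pow_right₀ hQ1 (by norm_num)).trans hsqrt
  have hrem : ((n % (Q * totientOf (primesUpTo K) ^ 2) : ℕ) : ℝ) ≤ √n := by
    have h1 : n % (Q * totientOf (primesUpTo K) ^ 2) ≤ Q ^ 3 :=
      (Nat.mod_lt _ (Nat.mul_pos hQ0 (pow_pos (totientOf_pos _) 2))).le.trans hQφ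
    refine le_trans ?_ hsqrt
    exact (Nat.cast_le.2 h1).trans (by
      push_cast
      exact pow_le_pow_right₀ hQ1 (by norm_num))
  have hlogn : 0 ≤ Real.log n := Real.log_natCast_nonneg n
  gcongr

lemma tendsto_lower_error : Tendsto (fun n : ℕ => (768 / Nat.log 2 (Nat.log 2 n / 16) : ℝ) +
    (Real.log 2 + (√n * (1 + Real.log n) + 2 * (√n * Real.log n) + 1 + Real.log n)) / n)
    atTop (nhds 0) := by
  have hlog : Tendsto (Nat.log 2) atTop atTop :=
    tendsto_atTop_atTop.2 fun b => ⟨2 ^ b, fun a ha => Nat.le_log_of_pow_le (by norm_num) ha⟩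
  have h1 : Tendsto (fun n : ℕ => (768 / Nat.log 2 (Nat.log 2 n / 16) : ℝ)) atTop (nhds 0) :=
    (tendsto_natCast_atTop_atTop.comp (hlog.comp
      ((Nat.tendsto_div_const_atTop (by norm_num)).comp hlog))).const_div_atTop 768
  have h2 : Tendsto (fun n : ℕ => Real.log n / √n) atTop (nhds 0) := by
    have := (isLittleO_log_rpow_atTop (r := 1 / 2) (by norm_num)).tendsto_div_nhds_zero.comp
      tendsto_natCast_atTop_atTop
    simpa [Real.sqrt_eq_rpow, Function.comp_def] using this
  have h3 : Tendsto (fun n : ℕ => 1 / √n) atTop (nhds 0) :=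
    (Real.tendsto_sqrt_atTop.comp tendsto_natCast_atTop_atTop).const_div_atTop 1
  have h4 := h1.add ((((h3.mul h3).const_mul (Real.log 2 + 1)).add (h3.mul h2)).add
    (h3.add (h2.const_mul 3)))
  simp only [mul_zero, add_zero] at h4
  refine h4.congr' ?_
  filter_upwards [eventually_gt_atTop 0] with n hn
  have hs : 0 < √(n : ℝ) := Real.sqrt_pos.2 (by exact_mod_cast hn)
  have hn' : (n : ℝ) = √n * √n := (Real.mul_self_sqrt (by positivity)).symm
  rw [add_right_inj]
  generalize hL : Real.log n = L
  rw [show ∀ x : ℝ, x / n = x / (√n * √n) from fun x => by rw [← hn']]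
  field_simp
  ring

lemma eventually_le_coprime_ratio {u : ℝ} (hu : u < coprimeConst) :
    ∀ᶠ n : ℕ in atTop, u ≤ ((coprimePermCount n : ℝ) / n.factorial) ^ ((n : ℝ)⁻¹) := by
  rcases le_or_gt u 0 with h0 | h0
  · exact Eventually.of_forall fun n => h0.trans (by positivity)
  have hδ : 0 < Real.log coprimeConst - Real.log u := sub_pos.2 (Real.log_lt_log h0 hu)
  have hlog : Tendsto (Nat.log 2) atTop atTop :=
    tendsto_atTop_atTop.2 fun b => ⟨2 ^ b, fun a ha => Nat.le_log_of_pow_le (by norm_num) ha⟩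
  have hll : Tendsto (fun n => Nat.log 2 (Nat.log 2 n / 16)) atTop atTop :=
    hlog.comp ((Nat.tendsto_div_const_atTop (by norm_num)).comp hlog)
  filter_upwards [tendsto_lower_error.eventually (gt_mem_nhds hδ), hll.eventually_ge_atTop 3072,
    eventually_gt_atTop 0] with n herr hl hn
  obtain ⟨hC, hb⟩ := coprimePerms_explicit_lower_bound rfl hl
  set K := Nat.log 2 n / 16 with hK
  have hn' : (0 : ℝ) < n := by exact_mod_cast hn
  have hcP : Real.log coprimeConst ≤ Real.log (∏ p ∈ primesUpTo K, eulerFactor p) :=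
    Real.log_le_log (h0.trans hu) (coprimeConst_le_prod _)
  have hC' : (0 : ℝ) < #(coprimePerms n) := by exact_mod_cast hC
  rw [coprimePermCount_eq, Real.le_rpow_inv_iff_of_pos h0.le (by positivity) hn', Real.rpow_natCast,
    ← Real.log_le_log_iff (by positivity) (by positivity), Real.log_pow,
    Real.log_div hC'.ne' (by positivity)]
  have h1 := mul_lt_mul_of_pos_left herr hn'
  rw [mul_add, mul_div_cancel₀ _ hn'.ne'] at h1
  have h2 := mul_le_mul_of_nonneg_left hcP hn'.le
  linarith

end Asymptotics

end CoprimePerm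

/-- Pomerance's conjecture: `(C(n)/n!)^{1/n} → c` as `n → ∞`. -/
theorem coprimePermCount_tendsto :
    Filter.Tendsto (fun n : ℕ => ((coprimePermCount n : ℝ) / (n.factorial : ℝ)) ^ ((n : ℝ)⁻¹))
      Filter.atTop (nhds coprimeConst) := by
  refine tendsto_order.2 ⟨fun u hu => ?_, fun u hu => ?_⟩
  · obtain ⟨v, huv, hv⟩ := exists_between hu
    filter_upwards [CoprimePerm.eventually_le_coprime_ratio hv] with n hn
    exact huv.trans_le hn
  · obtain ⟨v, hv, hvu⟩ := exists_between hu
    obtain ⟨P, hP⟩ := (CoprimePerm.hasProd_coprimeConst.eventually (gt_mem_nhds hv)).exists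
    filter_upwards [CoprimePerm.eventually_coprime_ratio_le P hP] with n hn
    exact hn.trans_lt hvu
end

section
/- For all sufficiently large n and every S ⊆ 𝒫_W with |S| < k, one has |A_S| = (1 ± α²)·n·∏_{p ∈ S} p^{−1}·∏_{p ∈ 𝒫_W \ S} (1 − p^{−1}); that is, |A_S| lies between (1 − α²) and (1 + α²) times n·∏_{p ∈ S} p^{−1}·∏_{p ∈ 𝒫_W \ S} (1 − p^{−1}). -/
open Real Filter

/-- `W = W(n) = exp(2^{-10} (log n · log log n)^{1/2})`. -/
noncomputable def Wp (n : ℕ) : ℝ :=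
  Real.exp ((2 : ℝ) ^ (-10 : ℤ) * Real.sqrt (Real.log n * Real.log (Real.log n)))

/-- `k = k(n) = 2^{-5} (log n / log log n)^{1/2}`. -/
noncomputable def kp (n : ℕ) : ℝ :=
  (2 : ℝ) ^ (-5 : ℤ) * Real.sqrt (Real.log n / Real.log (Real.log n))

/-- `α = α(n) = exp(−k log k)`. -/
noncomputable def ap (n : ℕ) : ℝ := Real.exp (-(kp n * Real.log (kp n)))

/-- `𝒫_W`: the set of primes `p ≤ W(n)`. -/
noncomputable def primesLe (n : ℕ) : Set ℕ := {p : ℕ | p.Prime ∧ (p : ℝ) ≤ Wp n}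

/-- `A_S`: the set of `m ∈ {1,…,n}` whose set of prime divisors in `𝒫_W` is exactly `S`. -/
noncomputable def ASet (n : ℕ) (S : Set ℕ) : Set ℕ :=
  {m : ℕ | 1 ≤ m ∧ m ≤ n ∧ ∀ p ∈ primesLe n, (p ∣ m ↔ p ∈ S)}

open Finset in
theorem abs_ite_sub_sum_choose_le (t r : ℕ) :
    |(if t = 0 then 1 else 0 : ℝ) - ∑ j ∈ range r, (-1 : ℝ) ^ j * t.choose j| ≤ t.choose r := by
  rcases r with _ | r
  · simp only [range_zero, sum_empty, sub_zero, Nat.choose_zero_right, Nat.cast_one]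
    split_ifs <;> simp
  rcases t with _ | t
  · have : ∑ j ∈ range (r + 1), (-1 : ℝ) ^ j * (Nat.choose 0 j : ℕ) = 1 := by
      rw [sum_range_succ']
      simp
    simp [this]
  · have h := Int.alternating_sum_range_choose_eq_choose (n := t) (m := r)
    have h' : ∑ j ∈ range (r + 1), (-1 : ℝ) ^ j * ((t + 1).choose j : ℕ) =
        (-1) ^ r * (t.choose r : ℕ) := by
      simpa using congrArg (Int.cast : ℤ → ℝ) h
    rw [h', if_neg (by lia), zero_sub, abs_neg, abs_mul, abs_pow, abs_neg, abs_one, one_pow,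
      one_mul, Nat.abs_cast, Nat.choose_succ_succ]
    push_cast
    linarith [Nat.cast_nonneg (α := ℝ) (t.choose (r + 1))]

open Finset in
theorem sum_powerset_card_lt_neg_one_pow {κ : Type*} (T : Finset κ) (r : ℕ) :
    ∑ U ∈ T.powerset with #U < r, (-1 : ℝ) ^ #U =
      ∑ j ∈ range r, (-1 : ℝ) ^ j * (#T).choose j := by
  rw [← sum_fiberwise_of_maps_to (s := {U ∈ T.powerset | #U < r}) (t := range r) (g := card)
    (by simp)]
  refine sum_congr rfl fun j hj => ?_
  have : {U ∈ {U ∈ T.powerset | #U < r} | #U = j} = powersetCard j T := by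
    ext U
    simp only [mem_filter, mem_powerset, mem_powersetCard, mem_range] at *
    grind
  rw [this, sum_congr rfl (g := fun _ => (-1 : ℝ) ^ j)
    fun U hU => by rw [(mem_powersetCard.1 hU).2]]
  simp [mul_comm]

open Finset in
/-- Bonferroni's inequalities, for sets cut out by a relation. -/
theorem abs_card_filter_sub_sum_le {ι κ : Type*} [DecidableEq κ] (M : Finset ι) (Q : Finset κ)
    (R : κ → ι → Prop) [∀ q m, Decidable (R q m)] (r : ℕ) :
    |(#{m ∈ M | ∀ q ∈ Q, ¬ R q m} : ℝ) -
        ∑ U ∈ Q.powerset with #U < r, (-1 : ℝ) ^ #U * #{m ∈ M | ∀ q ∈ U, R q m}| ≤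
      ∑ U ∈ powersetCard r Q, (#{m ∈ M | ∀ q ∈ U, R q m} : ℝ) := by
  let T : ι → Finset κ := fun m => {q ∈ Q | R q m}
  have hN : (#{m ∈ M | ∀ q ∈ Q, ¬ R q m} : ℝ) = ∑ m ∈ M, if #(T m) = 0 then 1 else 0 := by
    simp [T, filter_eq_empty_iff]
  have hS : ∑ U ∈ Q.powerset with #U < r, (-1 : ℝ) ^ #U * #{m ∈ M | ∀ q ∈ U, R q m} =
      ∑ m ∈ M, ∑ j ∈ range r, (-1 : ℝ) ^ j * (#(T m)).choose j := by
    simp_rw [← sum_powerset_card_lt_neg_one_pow, card_filter, Nat.cast_sum, mul_sum]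
    rw [sum_comm]
    refine sum_congr rfl fun m _ => ?_
    have : ({U ∈ (T m).powerset | #U < r}) =
        {U ∈ {U ∈ Q.powerset | #U < r} | ∀ q ∈ U, R q m} := by
      ext U
      simp only [T, mem_filter, mem_powerset, subset_iff]
      grind
    rw [this, sum_filter (fun U => ∀ q ∈ U, R q m)]
    refine sum_congr rfl fun U _ => ?_
    split_ifs <;> simp
  have hE : ∑ U ∈ powersetCard r Q, (#{m ∈ M | ∀ q ∈ U, R q m} : ℝ) =
      ∑ m ∈ M, ((#(T m)).choose r : ℝ) := by
    simp_rw [← card_powersetCard, card_filter, Nat.cast_sum]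
    rw [sum_comm]
    refine sum_congr rfl fun m _ => ?_
    have : powersetCard r (T m) = {U ∈ powersetCard r Q | ∀ q ∈ U, R q m} := by
      ext U
      simp only [T, mem_filter, mem_powersetCard, subset_iff]
      grind
    rw [this, card_filter, Nat.cast_sum]
  rw [hN, hS, hE, ← sum_sub_distrib]
  exact (abs_sum_le_sum_abs _ _).trans
    (sum_le_sum fun m _ => abs_ite_sub_sum_choose_le _ _)

open Finset in
theorem pow_mul_sum_card_ge_le {κ : Type*} (Q : Finset κ) {f : κ → ℝ}
    (hf : ∀ q ∈ Q, 0 ≤ f q) {y : ℝ} (hy : 1 ≤ y) (r : ℕ) :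
    y ^ r * ∑ U ∈ Q.powerset with r ≤ #U, ∏ q ∈ U, f q ≤ exp (y * ∑ q ∈ Q, f q) := by
  have hU : ∀ U ∈ Q.powerset, 0 ≤ ∏ q ∈ U, f q := fun U hU =>
    prod_nonneg fun q hq => hf q (mem_powerset.1 hU hq)
  calc y ^ r * ∑ U ∈ Q.powerset with r ≤ #U, ∏ q ∈ U, f q
      ≤ ∑ U ∈ Q.powerset with r ≤ #U, ∏ q ∈ U, y * f q := by
        rw [mul_sum]
        refine sum_le_sum fun U h => ?_
        rw [mem_filter] at h
        rw [prod_mul_distrib, prod_const]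
        exact mul_le_mul_of_nonneg_right (pow_le_pow_right₀ hy h.2) (hU U h.1)
    _ ≤ ∑ U ∈ Q.powerset, ∏ q ∈ U, y * f q := by
        refine sum_le_sum_of_subset_of_nonneg (filter_subset _ _) fun U h _ => ?_
        rw [prod_mul_distrib, prod_const]
        exact mul_nonneg (by positivity) (hU U h)
    _ = ∏ q ∈ Q, (1 + y * f q) := (prod_one_add Q).symm
    _ ≤ exp (∑ q ∈ Q, y * f q) := by
        rw [exp_sum]
        refine prod_le_prod (fun q hq => ?_) fun q _ => by
          rw [add_comm]; exact add_one_le_exp _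
        have := hf q hq
        positivity
    _ = _ := by rw [mul_sum]

open Finset in
theorem card_filter_card_lt_le {κ : Type*} (Q : Finset κ) {w : ℝ} (hw : 1 ≤ w)
    (hQ : #Q ≤ w) (r : ℕ) :
    (#{U ∈ Q.powerset | #U < r} : ℝ) ≤ w ^ r * exp 1 := by
  have hw0 : 0 < w := by linarith
  calc (#{U ∈ Q.powerset | #U < r} : ℝ) = ∑ U ∈ Q.powerset with #U < r, (1 : ℝ) := by simp
    _ ≤ ∑ U ∈ Q.powerset with #U < r, w ^ r * ∏ q ∈ U, w⁻¹ := by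
        refine sum_le_sum fun U h => ?_
        rw [prod_const, inv_pow, ← div_eq_mul_inv, one_le_div (by positivity)]
        exact pow_le_pow_right₀ hw (mem_filter.1 h).2.le
    _ ≤ ∑ U ∈ Q.powerset, w ^ r * ∏ q ∈ U, w⁻¹ :=
        sum_le_sum_of_subset_of_nonneg (filter_subset _ _) fun U h _ => by positivity
    _ = w ^ r * ∏ q ∈ Q, (1 + w⁻¹) := by rw [← mul_sum, prod_one_add]
    _ ≤ w ^ r * exp (∑ q ∈ Q, w⁻¹) := by
        gcongr
        exact prod_one_add_le_exp_sum Q fun _ => by positivity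
    _ ≤ w ^ r * exp 1 := by
        gcongr
        rw [sum_const, nsmul_eq_mul, ← div_eq_mul_inv]
        exact (div_le_one hw0).2 hQ

open Finset in
/-- Brun's pure sieve, inside the multiples of `D`. -/
theorem abs_card_sifted_sub_le (n D r : ℕ) (hD : 0 < D) (Q : Finset ℕ)
    (hQ : ∀ q ∈ Q, q.Prime) (hDQ : ∀ q ∈ Q, D.Coprime q) :
    |(#{m ∈ {m ∈ Icc 1 n | D ∣ m} | ∀ q ∈ Q, ¬ q ∣ m} : ℝ) -
        n / D * ∏ q ∈ Q, (1 - (q : ℝ)⁻¹)| ≤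
      2 * (n / D * ∑ U ∈ Q.powerset with r ≤ #U, ∏ q ∈ U, (q : ℝ)⁻¹) +
        #{U ∈ Q.powerset | #U < r} := by
  have hg : ∀ U ∈ Q.powerset,
      #{m ∈ {m ∈ Icc 1 n | D ∣ m} | ∀ q ∈ U, q ∣ m} = n / (D * ∏ q ∈ U, q) := by
    intro U hU
    rw [mem_powerset] at hU
    rw [filter_filter, ← Nat.Ioc_filter_dvd_card_eq_div]
    congr 1
    ext m
    simp only [mem_filter, mem_Icc, mem_Ioc]
    have hc : D.Coprime (∏ q ∈ U, q) := Nat.Coprime.prod_right fun q hq => hDQ q (hU hq)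
    have h1 : D * ∏ q ∈ U, q ∣ m ↔ D ∣ m ∧ ∏ q ∈ U, q ∣ m :=
      ⟨fun h => ⟨(dvd_mul_right _ _).trans h, (dvd_mul_left _ _).trans h⟩,
        fun h => hc.mul_dvd_of_dvd_of_dvd h.1 h.2⟩
    have h2 : ∏ q ∈ U, q ∣ m ↔ ∀ q ∈ U, q ∣ m :=
      ⟨fun h q hq => (dvd_prod_of_mem _ hq).trans h,
        fun h => prod_primes_dvd _ (fun q hq => (hQ q (hU hq)).prime) h⟩
    rw [h1, h2]
    simp [Nat.lt_iff_add_one_le]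
  have hdiv : ∀ U : Finset ℕ, ((n : ℝ) / D * ∏ q ∈ U, (q : ℝ)⁻¹) =
      (n : ℝ) / ((D * ∏ q ∈ U, q : ℕ) : ℝ) := by
    intro U
    push_cast
    rw [prod_inv_distrib, div_mul_eq_div_div, div_eq_mul_inv (_ / _)]
  have hB := abs_card_filter_sub_sum_le {m ∈ Icc 1 n | D ∣ m} Q (fun q m => q ∣ m) r
  have hB' : ∑ U ∈ powersetCard r Q, (#{m ∈ {m ∈ Icc 1 n | D ∣ m} | ∀ q ∈ U, q ∣ m} : ℝ) ≤
      n / D * ∑ U ∈ Q.powerset with r ≤ #U, ∏ q ∈ U, (q : ℝ)⁻¹ := by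
    rw [mul_sum]
    refine (sum_le_sum (g := fun U : Finset ℕ => (n : ℝ) / D * ∏ q ∈ U, (q : ℝ)⁻¹) fun U hU => ?_).trans
      (sum_le_sum_of_subset_of_nonneg (fun U hU => ?_) fun U _ _ => ?_)
    · rw [hg U (mem_powerset.2 (mem_powersetCard.1 hU).1), hdiv]
      exact Nat.cast_div_le
    · rw [mem_powersetCard] at hU
      simp [hU.1, hU.2]
    · positivity
  have hF : |∑ U ∈ Q.powerset with #U < r,
        (-1 : ℝ) ^ #U * #{m ∈ {m ∈ Icc 1 n | D ∣ m} | ∀ q ∈ U, q ∣ m} -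
      ∑ U ∈ Q.powerset with #U < r, (-1 : ℝ) ^ #U * (n / D * ∏ q ∈ U, (q : ℝ)⁻¹)| ≤
      #{U ∈ Q.powerset | #U < r} := by
    rw [← sum_sub_distrib, card_eq_sum_ones, Nat.cast_sum]
    refine (abs_sum_le_sum_abs _ _).trans (sum_le_sum fun U hU => ?_)
    rw [← mul_sub, abs_mul, abs_pow, abs_neg, abs_one, one_pow, one_mul,
      hg U (mem_filter.1 hU).1, hdiv, abs_sub_comm, Nat.cast_one]
    rw [abs_of_nonneg (sub_nonneg.2 Nat.cast_div_le)]
    have := Nat.lt_floor_add_one ((n : ℝ) / ((D * ∏ q ∈ U, q : ℕ) : ℝ))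
    rw [Nat.floor_div_eq_div] at this
    linarith
  have hT : n / D * ∏ q ∈ Q, (1 - (q : ℝ)⁻¹) =
      ∑ U ∈ Q.powerset with #U < r, (-1 : ℝ) ^ #U * (n / D * ∏ q ∈ U, (q : ℝ)⁻¹) +
      ∑ U ∈ Q.powerset with r ≤ #U, (-1 : ℝ) ^ #U * (n / D * ∏ q ∈ U, (q : ℝ)⁻¹) := by
    have h1 : ({U ∈ Q.powerset | r ≤ #U}) = {U ∈ Q.powerset | ¬ #U < r} := by simp
    rw [h1, sum_filter_add_sum_filter_not]
    simp_rw [sub_eq_add_neg]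
    rw [prod_one_add, mul_sum]
    refine sum_congr rfl fun U _ => ?_
    rw [prod_neg]
    ring
  have hR : |∑ U ∈ Q.powerset with r ≤ #U, (-1 : ℝ) ^ #U * (n / D * ∏ q ∈ U, (q : ℝ)⁻¹)| ≤
      n / D * ∑ U ∈ Q.powerset with r ≤ #U, ∏ q ∈ U, (q : ℝ)⁻¹ := by
    rw [mul_sum]
    refine (abs_sum_le_sum_abs _ _).trans (sum_le_sum fun U hU => ?_)
    rw [abs_mul, abs_pow, abs_neg, abs_one, one_pow, one_mul, abs_of_nonneg (by positivity)]
  rw [hT]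
  rw [abs_le] at *
  constructor <;> linarith [hB.1, hB.2, hF.1, hF.2, hR.1, hR.2]

open Finset in
theorem sum_inv_primes_lt_two_pow_le (J : ℕ) :
    ∑ p ∈ range (2 ^ (J + 1)) with p.Prime, (p : ℝ)⁻¹ ≤ 4 * harmonic J := by
  induction J with
  | zero =>
    rw [show ({p ∈ range (2 ^ (0 + 1)) | p.Prime}) = ∅ by decide]
    simp
  | succ J ih =>
    set B := {p ∈ Ico (2 ^ (J + 1)) (2 ^ (J + 2)) | p.Prime} with hB
    have hsplit : ∑ p ∈ range (2 ^ (J + 2)) with p.Prime, (p : ℝ)⁻¹ =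
        ∑ p ∈ range (2 ^ (J + 1)) with p.Prime, (p : ℝ)⁻¹ + ∑ p ∈ B, (p : ℝ)⁻¹ := by
      rw [hB, sum_filter, sum_filter, sum_filter, range_eq_Ico, range_eq_Ico,
        sum_Ico_consecutive _ (Nat.zero_le _) (Nat.pow_le_pow_right two_pos (by lia))]
    have hcard : (J + 1) * #B ≤ 2 * 2 ^ (J + 2) := by
      have h1 : (2 ^ (J + 1)) ^ #B ≤ ∏ p ∈ B, p :=
        pow_card_le_prod _ _ _ fun p hp => (mem_Ico.1 (mem_filter.1 hp).1).1
      have h2 : ∏ p ∈ B, p ≤ primorial (2 ^ (J + 2)) := by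
        refine prod_le_prod_of_subset_of_one_le' (fun p hp => ?_) fun p hp _ => ?_
        · simp only [hB, mem_filter, mem_Ico] at hp
          exact Nat.mem_primesLE.2 ⟨by lia, hp.2⟩
        · exact (Nat.mem_primesLE.1 hp).2.one_lt.le
      have h3 := (h1.trans h2).trans (primorial_le_four_pow _)
      rw [show 4 = 2 ^ 2 by rfl, ← pow_mul, ← pow_mul] at h3
      exact (Nat.pow_le_pow_iff_right (by simp)).1 h3
    have hsum : ∑ p ∈ B, (p : ℝ)⁻¹ ≤ 4 * ((J : ℝ) + 1)⁻¹ := by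
      have h1 : ∑ p ∈ B, (p : ℝ)⁻¹ ≤ ∑ p ∈ B, ((2 : ℝ) ^ (J + 1))⁻¹ := by
        refine sum_le_sum fun p hp => ?_
        gcongr
        exact_mod_cast (mem_Ico.1 (mem_filter.1 hp).1).1
      refine h1.trans ?_
      have h2 : ((J : ℝ) + 1) * #B ≤ 2 * 2 ^ (J + 2) := by exact_mod_cast hcard
      rw [sum_const, nsmul_eq_mul, ← div_eq_mul_inv, ← div_eq_mul_inv,
        div_le_div_iff₀ (by positivity) (by positivity)]
      rw [pow_succ _ (J + 1)] at h2
      linarith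
    rw [hsplit, harmonic_succ]
    push_cast
    linarith

open Finset in
theorem sum_inv_primes_le {w : ℝ} (hw : 2 ≤ w) (Q : Finset ℕ) (hQ : ∀ q ∈ Q, q.Prime)
    (hQw : ∀ q ∈ Q, (q : ℝ) ≤ w) :
    ∑ q ∈ Q, (q : ℝ)⁻¹ ≤ 4 + 4 * log (2 * log w) := by
  set J := Nat.log 2 ⌊w⌋₊ with hJ
  have hw0 : ⌊w⌋₊ ≠ 0 := (Nat.floor_pos.2 (by linarith)).ne'
  have hJ1 : 1 ≤ J := Nat.log_pos one_lt_two (Nat.le_floor (by exact_mod_cast hw))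
  have h1 : ∑ q ∈ Q, (q : ℝ)⁻¹ ≤ ∑ p ∈ range (2 ^ (J + 1)) with p.Prime, (p : ℝ)⁻¹ := by
    refine sum_le_sum_of_subset_of_nonneg (fun q hq => ?_) fun _ _ _ => by positivity
    rw [mem_filter, mem_range]
    exact ⟨(Nat.le_floor (hQw q hq)).trans_lt (Nat.lt_pow_succ_log_self one_lt_two _), hQ q hq⟩
  have h2 := (harmonic_le_one_add_log J)
  have h3 : (J : ℝ) ≤ 2 * log w := by
    have h4 : (2 : ℝ) ^ J ≤ w :=
      le_trans (by exact_mod_cast Nat.pow_log_le_self 2 hw0) (Nat.floor_le (by linarith))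
    have h5 := log_le_log (by positivity) h4
    rw [log_pow] at h5
    nlinarith [log_two_gt_d9, (Nat.cast_nonneg J : (0 : ℝ) ≤ J)]
  have h6 : log J ≤ log (2 * log w) := log_le_log (by exact_mod_cast hJ1) h3
  have := sum_inv_primes_lt_two_pow_le J
  linarith

open Finset in
theorem exp_neg_le_prod_one_sub_inv (Q : Finset ℕ) (hQ : ∀ q ∈ Q, q.Prime) :
    exp (-(2 * ∑ q ∈ Q, (q : ℝ)⁻¹)) ≤ ∏ q ∈ Q, (1 - (q : ℝ)⁻¹) := by
  rw [mul_sum, ← sum_neg_distrib, exp_sum]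
  refine prod_le_prod (fun _ _ => (exp_pos _).le) fun q hq => ?_
  have hx : (q : ℝ)⁻¹ ≤ 2⁻¹ := by
    gcongr
    exact_mod_cast (hQ q hq).two_le
  have hx0 : 0 ≤ (q : ℝ)⁻¹ := by positivity
  generalize (q : ℝ)⁻¹ = x at *
  rw [exp_neg]
  refine inv_le_of_inv_le₀ (by linarith) (le_trans ?_ (add_one_le_exp (2 * x)))
  rw [inv_le_iff_one_le_mul₀ (by linarith)]
  nlinarith

open Finset in
theorem abs_card_sifted_sub_le_exp_mul {s l₂ w : ℝ} {n D : ℕ} (hs : 4096 ≤ s) (h1 : 1 ≤ l₂)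
    (hl₂ : l₂ ≤ s) (hw : w = exp (2 ^ (-10 : ℤ) * (s * l₂))) (hn : (n : ℝ) = exp (s ^ 2 * l₂))
    (hD0 : 0 < D) (hD : (D : ℝ) ≤ exp (2 ^ (-15 : ℤ) * (s ^ 2 * l₂))) (Q : Finset ℕ)
    (hQ : ∀ q ∈ Q, q.Prime) (hQw : ∀ q ∈ Q, (q : ℝ) ≤ w) (hDQ : ∀ q ∈ Q, D.Coprime q) :
    |(#{m ∈ {m ∈ Icc 1 n | D ∣ m} | ∀ q ∈ Q, ¬ q ∣ m} : ℝ) -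
        n / D * ∏ q ∈ Q, (1 - (q : ℝ)⁻¹)| ≤
      exp (-(s / 16 * log s)) * (n / D * ∏ q ∈ Q, (1 - (q : ℝ)⁻¹)) := by
  have hs0 : 0 < s := by linarith
  set l := log s with hl
  set u := √s with hu
  set V := ∏ q ∈ Q, (1 - (q : ℝ)⁻¹) with hV
  set E := ∑ U ∈ Q.powerset with ⌈s⌉₊ ≤ #U, ∏ q ∈ U, (q : ℝ)⁻¹ with hE
  have hu2 : u ^ 2 = s := Real.sq_sqrt hs0.le
  have hu64 : 64 ≤ u := Real.le_sqrt_of_sq_le (by linarith)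
  have hl1 : 1 ≤ l := by
    rw [hl, Real.le_log_iff_exp_le hs0]
    linarith [exp_one_lt_d9]
  have hls : l ≤ s := (log_le_sub_one_of_pos hs0).trans (by linarith)
  have hw2 : 2 ≤ w := by
    rw [hw]
    refine le_trans ?_ (add_one_le_exp _)
    norm_num
    nlinarith
  have hlogw : log w = 2 ^ (-10 : ℤ) * (s * l₂) := by rw [hw, log_exp]
  have hsum : ∑ q ∈ Q, (q : ℝ)⁻¹ ≤ 4 + 8 * l := by
    have h2 : log (2 * log w) ≤ log (s ^ 2) := by
      refine log_le_log ?_ ?_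
      · rw [hlogw]; positivity
      · rw [hlogw]
        norm_num
        nlinarith
    rw [log_pow] at h2
    push_cast at h2
    linarith [sum_inv_primes_le hw2 Q hQ hQw]
  have hVlb : exp (-8 - 16 * l) ≤ V :=
    le_trans (exp_le_exp.2 (by linarith)) (exp_neg_le_prod_one_sub_inv Q hQ)
  have hceil : (⌈s⌉₊ : ℝ) ≤ s + 1 := (Nat.ceil_lt_add_one hs0.le).le
  have hceil' : s ≤ ⌈s⌉₊ := Nat.le_ceil s
  have hEub : E ≤ exp (u * (4 + 8 * l) - s * l / 2) := by
    have h2 := pow_mul_sum_card_ge_le Q (f := fun q => (q : ℝ)⁻¹) (fun q _ => by positivity)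
      (by linarith : 1 ≤ u) ⌈s⌉₊
    have h3 : exp (s * l / 2) ≤ u ^ ⌈s⌉₊ := by
      rw [← rpow_natCast, rpow_def_of_pos (by linarith), hu, log_sqrt hs0.le, exp_le_exp, ← hl]
      nlinarith
    have hE0 : 0 ≤ E := by positivity
    have h4 : exp (s * l / 2) * E ≤ exp (u * (4 + 8 * l)) :=
      (mul_le_mul_of_nonneg_right h3 hE0).trans (h2.trans (exp_le_exp.2 (by gcongr)))
    rw [exp_sub, le_div_iff₀ (exp_pos _)]
    linarith
  have he2 : 4 ≤ exp 2 := by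
    have h := exp_one_gt_d9
    rw [show (2 : ℝ) = 1 + 1 by norm_num, exp_add]
    nlinarith
  have hE4 : 4 * E ≤ exp (-(s / 16 * l)) * V := calc
    4 * E ≤ exp 2 * exp (u * (4 + 8 * l) - s * l / 2) := by gcongr
    _ = exp (2 + (u * (4 + 8 * l) - s * l / 2)) := (exp_add _ _).symm
    _ ≤ exp (-(s / 16 * l) + (-8 - 16 * l)) := by
        rw [exp_le_exp, ← hu2]
        have h2 : u ≤ u * l := le_mul_of_one_le_right (by linarith) hl1
        have h3 : 64 * (u * l) ≤ u * (u * l) := by gcongr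
        have h4 : 64 * l ≤ u * l := by gcongr
        nlinarith
    _ ≤ exp (-(s / 16 * l)) * V := by
        rw [exp_add]
        gcongr
  have hcard : (#Q : ℝ) ≤ w := by
    have : #Q ≤ #(Icc 1 ⌊w⌋₊) := card_le_card fun q hq =>
      mem_Icc.2 ⟨(hQ q hq).one_lt.le, Nat.le_floor (hQw q hq)⟩
    rw [Nat.card_Icc, Nat.add_sub_cancel] at this
    exact le_trans (by exact_mod_cast this) (Nat.floor_le (by linarith))
  have hX : exp ((1 - 2 ^ (-15 : ℤ)) * (s ^ 2 * l₂)) ≤ n / D := by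
    rw [le_div_iff₀ (by exact_mod_cast hD0), hn]
    refine (mul_le_mul_of_nonneg_left hD (exp_pos _).le).trans ?_
    rw [← exp_add]
    exact exp_le_exp.2 (by linarith)
  have hC : 2 * (#{U ∈ Q.powerset | #U < ⌈s⌉₊} : ℝ) ≤ exp (-(s / 16 * l)) * (n / D * V) := calc
    2 * (#{U ∈ Q.powerset | #U < ⌈s⌉₊} : ℝ) ≤ exp 1 * (w ^ ⌈s⌉₊ * exp 1) := by
        gcongr
        · linarith [exp_one_gt_d9]
        · exact card_filter_card_lt_le Q (by linarith) hcard _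
    _ = exp (2 + ⌈s⌉₊ * (2 ^ (-10 : ℤ) * (s * l₂))) := by
        rw [hw, ← exp_nat_mul, ← exp_add, ← exp_add]
        ring_nf
    _ ≤ exp (-(s / 16 * l) + ((1 - 2 ^ (-15 : ℤ)) * (s ^ 2 * l₂) + (-8 - 16 * l))) := by
        rw [exp_le_exp]
        have h2 : ⌈s⌉₊ * (2 ^ (-10 : ℤ) * (s * l₂)) ≤
            (s + 1) * (2 ^ (-10 : ℤ) * (s * l₂)) := by gcongr
        have h3 : s * l ≤ s * s := by gcongr
        have h4 : s * l₂ ≤ s ^ 2 * l₂ := by gcongr; nlinarith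
        have h5 : s ^ 2 ≤ s ^ 2 * l₂ := le_mul_of_one_le_right (by positivity) h1
        norm_num at h2 ⊢
        nlinarith
    _ ≤ exp (-(s / 16 * l)) * (n / D * V) := by
        rw [exp_add, exp_add]
        gcongr
  refine (abs_card_sifted_sub_le n D ⌈s⌉₊ hD0 Q hQ hDQ).trans ?_
  have h2 : n / D * (4 * E) ≤ n / D * (exp (-(s / 16 * l)) * V) := by gcongr
  linarith

theorem eventually_log_bounds : ∀ᶠ n : ℕ in atTop,
    4096 ≤ √(log n / log (log n)) ∧ 1 ≤ log (log n) ∧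
      log (log n) ≤ √(log n / log (log n)) := by
  have hL : Tendsto (fun n : ℕ => log (n : ℝ)) atTop atTop :=
    tendsto_log_atTop.comp tendsto_natCast_atTop_atTop
  have hx : ∀ᶠ x : ℝ in atTop,
      4096 ≤ √(x / log x) ∧ 1 ≤ log x ∧ log x ≤ √(x / log x) := by
    have h3 := (isLittleO_pow_log_id_atTop (n := 3)).bound one_pos
    filter_upwards [h3, tendsto_log_atTop.eventually_ge_atTop 4096,
      eventually_ge_atTop 0] with x h3 hl hx
    have h4 : log x ≤ √(x / log x) := by
      refine Real.le_sqrt_of_sq_le ?_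
      rw [le_div_iff₀ (by linarith)]
      rw [one_mul, norm_of_nonneg (by positivity), id, norm_of_nonneg hx] at h3
      linarith
    exact ⟨hl.trans h4, by linarith, h4⟩
  exact hL.eventually hx

open Finset in
theorem ASet_eq_coe_filter {n : ℕ} {P T : Finset ℕ} (hP : (P : Set ℕ) = primesLe n)
    (hT : T ⊆ P) :
    ASet n T = ({m ∈ {m ∈ Icc 1 n | ∏ p ∈ T, p ∣ m} | ∀ q ∈ P \ T, ¬ q ∣ m} : Finset ℕ) := by
  have hprime : ∀ p ∈ P, p.Prime := fun p hp => by
    have : p ∈ primesLe n := hP ▸ hp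
    exact this.1
  ext m
  have h2 : ∏ q ∈ T, q ∣ m ↔ ∀ q ∈ T, q ∣ m :=
    ⟨fun h q hq => (dvd_prod_of_mem _ hq).trans h,
      fun h => prod_primes_dvd _ (fun q hq => (hprime q (hT hq)).prime) h⟩
  simp only [ASet, ← hP, Set.mem_ofPred_eq, coe_filter, mem_filter, mem_Icc, h2, Finset.mem_sdiff,
    mem_coe]
  grind

/-- For all sufficiently large `n` and all `S ⊆ 𝒫_W` with `|S| < k`,
`|A_S| = (1 ± α²) · n · ∏_{p ∈ S} p⁻¹ · ∏_{p ∈ 𝒫_W \ S} (1 − p⁻¹)`. -/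
theorem ASet_ncard_asymptotic :
    ∃ N : ℕ, ∀ n : ℕ, N ≤ n → ∀ S : Set ℕ, S ⊆ primesLe n → (S.ncard : ℝ) < kp n →
      (1 - ap n ^ 2) *
          ((n : ℝ) * (∏ᶠ p ∈ S, ((p : ℝ))⁻¹) * ∏ᶠ p ∈ primesLe n \ S, (1 - (p : ℝ)⁻¹))
        ≤ ((ASet n S).ncard : ℝ) ∧
      ((ASet n S).ncard : ℝ) ≤
        (1 + ap n ^ 2) *
          ((n : ℝ) * (∏ᶠ p ∈ S, ((p : ℝ))⁻¹) * ∏ᶠ p ∈ primesLe n \ S, (1 - (p : ℝ)⁻¹)) := by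
  obtain ⟨N, hN⟩ := eventually_atTop.1 eventually_log_bounds
  refine ⟨N, fun n hn S hS hSk => ?_⟩
  obtain ⟨hs, h1, h2⟩ := hN n hn
  have hL : 0 < log n := by
    by_contra! h
    rw [Real.sqrt_eq_zero_of_nonpos (div_nonpos_of_nonpos_of_nonneg h (by linarith))] at hs
    norm_num at hs
  have hn0 : (0 : ℝ) < n := by
    rcases n.eq_zero_or_pos with rfl | h
    · simp at hL
    · exact_mod_cast h
  have hk : kp n = √(log n / log (log n)) / 32 := by
    rw [kp]
    norm_num
    ring
  have hsq : √(log n / log (log n)) ^ 2 * log (log n) = log n := by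
    rw [Real.sq_sqrt (by positivity), div_mul_cancel₀ _ (by linarith)]
  have hW : Wp n = exp (2 ^ (-10 : ℤ) * (√(log n / log (log n)) * log (log n))) := by
    rw [Wp]
    congr 2
    rw [Real.sqrt_eq_iff_mul_self_eq (by positivity) (by positivity)]
    nlinarith [hsq]
  set s := √(log n / log (log n))
  have hfin : (primesLe n).Finite := (Set.finite_Iic ⌊Wp n⌋₊).subset fun p hp =>
    Nat.le_floor hp.2
  obtain ⟨P, hP⟩ := hfin.exists_finset_coe
  obtain ⟨T, rfl⟩ := (hfin.subset hS).exists_finset_coe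
  have hTP : T ⊆ P := by rwa [← Finset.coe_subset, hP]
  have hmem : ∀ p ∈ P, p.Prime ∧ (p : ℝ) ≤ Wp n := fun p hp => by
    have : p ∈ primesLe n := hP ▸ hp
    exact this
  have hDle : ((∏ p ∈ T, p : ℕ) : ℝ) ≤ exp (2 ^ (-15 : ℤ) * (s ^ 2 * log (log n))) := by
    rw [Set.ncard_coe_finset, hk] at hSk
    push_cast
    calc ∏ p ∈ T, (p : ℝ) ≤ ∏ p ∈ T, Wp n :=
          Finset.prod_le_prod (fun _ _ => by positivity) fun p hp => (hmem p (hTP hp)).2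
      _ = exp (T.card * (2 ^ (-10 : ℤ) * (s * log (log n)))) := by
          rw [Finset.prod_const, hW, ← exp_nat_mul]
      _ ≤ exp (s / 32 * (2 ^ (-10 : ℤ) * (s * log (log n)))) := by gcongr
      _ = _ := by
          congr 1
          norm_num
          ring
  have key := abs_card_sifted_sub_le_exp_mul hs h1 h2 hW (by rw [hsq, exp_log hn0])
    (Finset.prod_pos fun p hp => (hmem p (hTP hp)).1.pos) hDle (P \ T)
    (fun q hq => (hmem q (Finset.mem_sdiff.1 hq).1).1)
    (fun q hq => (hmem q (Finset.mem_sdiff.1 hq).1).2)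
    (fun q hq => Nat.Coprime.prod_left fun p hp =>
      (Nat.coprime_primes (hmem p (hTP hp)).1 (hmem q (Finset.mem_sdiff.1 hq).1).1).2
        fun h => (Finset.mem_sdiff.1 hq).2 (h ▸ hp))
  have hmain : (n : ℝ) * (∏ᶠ p ∈ (T : Set ℕ), ((p : ℝ))⁻¹) *
      ∏ᶠ p ∈ primesLe n \ T, (1 - (p : ℝ)⁻¹) =
      n / (∏ p ∈ T, p : ℕ) * ∏ q ∈ P \ T, (1 - (q : ℝ)⁻¹) := by
    rw [← hP, ← Finset.coe_sdiff, finprod_mem_coe_finset, finprod_mem_coe_finset,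
      Finset.prod_inv_distrib, div_eq_mul_inv]
    push_cast
    rfl
  have hα : exp (-(s / 16 * log s)) ≤ ap n ^ 2 := by
    rw [ap, ← exp_nat_mul, exp_le_exp, hk, log_div (by linarith) (by norm_num)]
    have : 0 ≤ s * log 32 := mul_nonneg (by linarith) (log_nonneg (by norm_num))
    push_cast
    linarith
  have hV0 : 0 ≤ (n : ℝ) / (∏ p ∈ T, p : ℕ) * ∏ q ∈ P \ T, (1 - (q : ℝ)⁻¹) :=
    mul_nonneg (by positivity) ((exp_pos _).le.trans (exp_neg_le_prod_one_sub_inv _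
      fun q hq => (hmem q (Finset.mem_sdiff.1 hq).1).1))
  rw [hmain, ASet_eq_coe_filter hP hTP, Set.ncard_coe_finset]
  have h3 := abs_le.1 (key.trans (mul_le_mul_of_nonneg_right hα hV0))
  constructor <;> linarith [h3.1, h3.2]
end

section
/- For all sufficiently large n and every S ⊆ 𝒫'_W with |S| < k, both |B_S| and |C_S| equal (1 ± α²)·n·∏_{p ∈ S} p^{−1}·∏_{p ∈ 𝒫'_W \ S} (1 − p^{−1}); that is, each lies between (1 − α²) and (1 + α²) times n·∏_{p ∈ S} p^{−1}·∏_{p ∈ 𝒫'_W \ S} (1 − p^{−1}). -/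
open Real Filter

/-- `𝒫'_W = 𝒫_W \ {2}`: the odd primes `p ≤ W(n)`. -/
noncomputable def primesLe' (n : ℕ) : Set ℕ := primesLe n \ {2}

/-- `[n]_o = {1, 3, …, 2n−1}`: the first `n` odd positive integers. -/
def oddSet (n : ℕ) : Set ℕ := {m : ℕ | Odd m ∧ m < 2 * n}

/-- `B_S`: the set of `m ∈ {1,…,n}` whose set of prime divisors in `𝒫'_W` is exactly `S`. -/
noncomputable def BSet (n : ℕ) (S : Set ℕ) : Set ℕ :=
  {m : ℕ | 1 ≤ m ∧ m ≤ n ∧ ∀ p ∈ primesLe' n, (p ∣ m ↔ p ∈ S)}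

/-- `C_S`: the set of `m ∈ [n]_o` whose set of prime divisors in `𝒫'_W` is exactly `S`. -/
noncomputable def CSet (n : ℕ) (S : Set ℕ) : Set ℕ :=
  {m : ℕ | m ∈ oddSet n ∧ ∀ p ∈ primesLe' n, (p ∣ m ↔ p ∈ S)}

/-- The elementary symmetric sum of degree `j` of the values of `x` on `Q`. -/
noncomputable def esymmOn {ι : Type*} (x : ι → ℝ) (Q : Finset ι) (j : ℕ) : ℝ :=
  ∑ T ∈ Q.powersetCard j, ∏ i ∈ T, x i

theorem esymmOn_zero {ι : Type*} (x : ι → ℝ) (Q : Finset ι) : esymmOn x Q 0 = 1 := by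
  simp [esymmOn]

theorem esymmOn_insert {ι : Type*} [DecidableEq ι] (x : ι → ℝ) {Q : Finset ι} {a : ι}
    (ha : a ∉ Q) (j : ℕ) :
    esymmOn x (insert a Q) (j + 1) = esymmOn x Q (j + 1) + x a * esymmOn x Q j := by
  unfold esymmOn
  have hnot : ∀ T ∈ Q.powersetCard j, a ∉ T := fun T hT h ↦
    ha ((Finset.mem_powersetCard.mp hT).1 h)
  rw [Finset.powersetCard_succ_insert ha, Finset.sum_union, Finset.sum_image, Finset.mul_sum]
  · congr 1
    exact Finset.sum_congr rfl fun T hT ↦ Finset.prod_insert (hnot T hT)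
  · intro T hT T' hT' h
    rw [← Finset.erase_insert (hnot T hT), ← Finset.erase_insert (hnot T' hT'), h]
  · rw [Finset.disjoint_left]
    intro T hT hT'
    obtain ⟨U, -, rfl⟩ := Finset.mem_image.mp hT'
    exact ha ((Finset.mem_powersetCard.mp hT).1 (Finset.mem_insert_self a U))

/-- Bonferroni's inequality for a product `∏ (1 - x i)` with `0 ≤ x i ≤ 1`. -/
theorem abs_prod_one_sub_sub_sum_le {ι : Type*} (x : ι → ℝ) (Q : Finset ι)
    (h0 : ∀ i ∈ Q, 0 ≤ x i) (h1 : ∀ i ∈ Q, x i ≤ 1) (r : ℕ) :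
    |∏ i ∈ Q, (1 - x i) - ∑ j ∈ Finset.range r, (-1) ^ j * esymmOn x Q j| ≤ esymmOn x Q r := by
  classical
  induction Q using Finset.induction_on generalizing r with
  | empty =>
    cases r with
    | zero => simp [esymmOn]
    | succ r =>
      rw [Finset.sum_range_succ']
      have h : ∀ j, esymmOn x ∅ (j + 1) = 0 := fun j ↦ by
        rw [esymmOn, Finset.powersetCard_eq_empty.mpr (by simp), Finset.sum_empty]
      simp [h, esymmOn_zero]
  | insert a Q ha ih =>
    have h0' : ∀ i ∈ Q, 0 ≤ x i := fun i hi ↦ h0 i (Finset.mem_insert_of_mem hi)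
    have h1' : ∀ i ∈ Q, x i ≤ 1 := fun i hi ↦ h1 i (Finset.mem_insert_of_mem hi)
    cases r with
    | zero =>
      rw [esymmOn_zero, Finset.sum_range_zero, sub_zero, abs_of_nonneg]
      · exact Finset.prod_le_one (fun i hi ↦ by linarith [h1 i hi])
          (fun i hi ↦ by linarith [h0 i hi])
      · exact Finset.prod_nonneg fun i hi ↦ by linarith [h1 i hi]
    | succ r =>
      have hsum : ∑ j ∈ Finset.range (r + 1), (-1) ^ j * esymmOn x (insert a Q) j
          = ∑ j ∈ Finset.range (r + 1), (-1) ^ j * esymmOn x Q j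
            - x a * ∑ j ∈ Finset.range r, (-1) ^ j * esymmOn x Q j := by
        rw [Finset.sum_range_succ', Finset.sum_range_succ' _ r, Finset.mul_sum, add_sub_right_comm,
          ← Finset.sum_sub_distrib, esymmOn_zero, esymmOn_zero]
        congr 1
        refine Finset.sum_congr rfl fun j _ ↦ ?_
        rw [esymmOn_insert x ha]
        ring
      have hxa := h0 a (Finset.mem_insert_self a Q)
      rw [hsum, Finset.prod_insert ha, esymmOn_insert x ha]
      have e1 := ih h0' h1' (r + 1)
      have e2 := mul_le_mul_of_nonneg_left (ih h0' h1' r) hxa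
      rw [← abs_of_nonneg hxa, ← abs_mul, abs_of_nonneg hxa] at e2
      refine le_trans ?_ (add_le_add e1 e2)
      refine le_trans (le_of_eq ?_) (abs_sub _ _)
      congr 1
      ring

theorem esymmOn_nonneg {ι : Type*} {x : ι → ℝ} {Q : Finset ι} (h0 : ∀ i ∈ Q, 0 ≤ x i) (j : ℕ) :
    0 ≤ esymmOn x Q j :=
  Finset.sum_nonneg fun _ hT ↦ Finset.prod_nonneg fun i hi ↦
    h0 i ((Finset.mem_powersetCard.mp hT).1 hi)

/-- Rankin's bound for elementary symmetric sums. -/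
theorem esymmOn_mul_pow_le_exp {ι : Type*} {x : ι → ℝ} {Q : Finset ι} (h0 : ∀ i ∈ Q, 0 ≤ x i)
    {t : ℝ} (ht : 0 ≤ t) (r : ℕ) : esymmOn x Q r * t ^ r ≤ Real.exp (t * ∑ i ∈ Q, x i) := by
  classical
  have h0t : ∀ i ∈ Q, 0 ≤ t * x i := fun i hi ↦ mul_nonneg ht (h0 i hi)
  calc esymmOn x Q r * t ^ r = ∑ T ∈ Q.powersetCard r, ∏ i ∈ T, (t * x i) := by
        rw [esymmOn, Finset.sum_mul]
        refine Finset.sum_congr rfl fun T hT ↦ ?_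
        rw [Finset.prod_mul_distrib, Finset.prod_const, (Finset.mem_powersetCard.mp hT).2, mul_comm]
    _ ≤ ∑ T ∈ Q.powerset, ∏ i ∈ T, (t * x i) := by
        refine Finset.sum_le_sum_of_subset_of_nonneg (fun T hT ↦ ?_) fun T hT _ ↦ ?_
        · exact Finset.mem_powerset.mpr (Finset.mem_powersetCard.mp hT).1
        · exact Finset.prod_nonneg fun i hi ↦ h0t i (Finset.mem_powerset.mp hT hi)
    _ = ∏ i ∈ Q, (1 + t * x i) := (Finset.prod_one_add Q).symm
    _ ≤ Real.exp (∑ i ∈ Q, t * x i) := by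
        rw [Real.exp_sum]
        refine Finset.prod_le_prod (fun i hi ↦ by linarith [h0t i hi]) fun i _ ↦ ?_
        linarith [Real.add_one_le_exp (t * x i)]
    _ = Real.exp (t * ∑ i ∈ Q, x i) := by rw [Finset.mul_sum]

/-- Brun's pure sieve: counting the elements of `A` divisible by all of `S` and by none of `Q`,
when each divisibility count on `A` is known up to an error of at most `1`. -/
theorem abs_card_sifted_sub_le_s7 {A S Q : Finset ℕ} {M : ℝ} (hM : 0 ≤ M) (hQ : ∀ p ∈ Q, 0 < p)
    (hA : ∀ T ⊆ Q, |((A.filter fun m ↦ (∀ p ∈ S, p ∣ m) ∧ ∀ p ∈ T, p ∣ m).card : ℝ)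
      - M * ∏ p ∈ T, (p : ℝ)⁻¹| ≤ 1) (r : ℕ) :
    |((A.filter fun m ↦ (∀ p ∈ S, p ∣ m) ∧ ∀ p ∈ Q, ¬ p ∣ m).card : ℝ)
      - M * ∏ p ∈ Q, (1 - (p : ℝ)⁻¹)|
      ≤ 2 * (M * esymmOn (fun p : ℕ ↦ (p : ℝ)⁻¹) Q r)
        + ∑ j ∈ Finset.range (r + 1), (Q.card.choose j : ℝ) := by
  classical
  set B : Finset ℕ := A.filter fun m ↦ ∀ p ∈ S, p ∣ m with hB
  set e : ℕ → ℝ := esymmOn (fun p : ℕ ↦ (p : ℝ)⁻¹) Q with he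
  set x : ℕ → ℕ → ℝ := fun m p ↦ if p ∣ m then 1 else 0 with hx
  have hcount : ((A.filter fun m ↦ (∀ p ∈ S, p ∣ m) ∧ ∀ p ∈ Q, ¬ p ∣ m).card : ℝ)
      = ∑ m ∈ B, ∏ p ∈ Q, (1 - x m p) := by
    rw [← Finset.filter_filter, Finset.card_filter, Nat.cast_sum]
    refine Finset.sum_congr rfl fun m _ ↦ ?_
    by_cases h : ∀ p ∈ Q, ¬ p ∣ m
    · rw [if_pos h, Finset.prod_eq_one fun p hp ↦ by simp [hx, h p hp], Nat.cast_one]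
    · rw [if_neg h]
      push Not at h
      obtain ⟨p, hp, hpm⟩ := h
      rw [Finset.prod_eq_zero hp (by simp [hx, hpm]), Nat.cast_zero]
  have hdeg : ∀ j, |∑ m ∈ B, esymmOn (x m) Q j - M * e j| ≤ (Q.card.choose j : ℝ) := by
    intro j
    have h1 : ∑ m ∈ B, esymmOn (x m) Q j = ∑ T ∈ Q.powersetCard j,
        ((A.filter fun m ↦ (∀ p ∈ S, p ∣ m) ∧ ∀ p ∈ T, p ∣ m).card : ℝ) := by
      unfold esymmOn
      rw [Finset.sum_comm]
      refine Finset.sum_congr rfl fun T _ ↦ ?_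
      rw [← Finset.filter_filter, Finset.card_filter, Nat.cast_sum]
      refine Finset.sum_congr rfl fun m _ ↦ ?_
      simp [hx, Finset.prod_ite_zero]
    rw [h1, he, esymmOn, Finset.mul_sum, ← Finset.sum_sub_distrib]
    refine (Finset.abs_sum_le_sum_abs _ _).trans ?_
    refine (Finset.sum_le_sum fun T hT ↦ hA T (Finset.mem_powersetCard.mp hT).1).trans ?_
    simp
  have hx0 : ∀ m, ∀ p ∈ Q, 0 ≤ x m p := fun m p _ ↦ by simp only [hx]; split_ifs <;> norm_num
  have hx1 : ∀ m, ∀ p ∈ Q, x m p ≤ 1 := fun m p _ ↦ by simp only [hx]; split_ifs <;> norm_num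
  have b1 : |∑ m ∈ B, ∏ p ∈ Q, (1 - x m p)
      - ∑ j ∈ Finset.range r, (-1) ^ j * ∑ m ∈ B, esymmOn (x m) Q j|
      ≤ M * e r + (Q.card.choose r : ℝ) := by
    have : ∑ j ∈ Finset.range r, (-1 : ℝ) ^ j * ∑ m ∈ B, esymmOn (x m) Q j
        = ∑ m ∈ B, ∑ j ∈ Finset.range r, (-1) ^ j * esymmOn (x m) Q j := by
      rw [Finset.sum_comm]
      simp only [Finset.mul_sum]
    rw [this, ← Finset.sum_sub_distrib]
    refine (Finset.abs_sum_le_sum_abs _ _).trans ?_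
    refine (Finset.sum_le_sum fun m _ ↦
      abs_prod_one_sub_sub_sum_le (x m) Q (hx0 m) (hx1 m) r).trans ?_
    linarith [(abs_le.mp (hdeg r)).2]
  have b2 : |∑ j ∈ Finset.range r, (-1) ^ j * ∑ m ∈ B, esymmOn (x m) Q j
      - M * ∑ j ∈ Finset.range r, (-1) ^ j * e j|
      ≤ ∑ j ∈ Finset.range r, (Q.card.choose j : ℝ) := by
    rw [Finset.mul_sum, ← Finset.sum_sub_distrib]
    refine (Finset.abs_sum_le_sum_abs _ _).trans (Finset.sum_le_sum fun j _ ↦ ?_)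
    rw [mul_left_comm, ← mul_sub, abs_mul, abs_pow, abs_neg, abs_one, one_pow, one_mul]
    exact hdeg j
  have b3 : |M * ∏ p ∈ Q, (1 - (p : ℝ)⁻¹) - M * ∑ j ∈ Finset.range r, (-1) ^ j * e j|
      ≤ M * e r := by
    rw [← mul_sub, abs_mul, abs_of_nonneg hM]
    refine mul_le_mul_of_nonneg_left (abs_prod_one_sub_sub_sum_le _ Q (fun p _ ↦ ?_)
      (fun p hp ↦ ?_) r) hM
    · positivity
    · exact inv_le_one_of_one_le₀ (by exact_mod_cast hQ p hp)
  rw [hcount, Finset.sum_range_succ]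
  rw [abs_le] at *
  constructor <;> linarith [b1.1, b1.2, b2.1, b2.2, b3.1, b3.2]

theorem div_lt_cast_div_add_one (n : ℕ) {e : ℕ} (he : 0 < e) :
    (n : ℝ) / e < (n / e : ℕ) + 1 := by
  rw [div_lt_iff₀' (by exact_mod_cast he)]
  exact_mod_cast Nat.lt_mul_div_succ n he

theorem card_Icc_dvd_sub_div_abs_le (n : ℕ) {e : ℕ} (he : 0 < e) :
    |(((Finset.Icc 1 n).filter fun m ↦ e ∣ m).card : ℝ) - n / e| ≤ 1 := by
  have h : ((Finset.Icc 1 n).filter fun m ↦ e ∣ m).card = n / e := by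
    rw [← Nat.Ioc_filter_dvd_card_eq_div]
    rfl
  have h1 : ((n / e : ℕ) : ℝ) ≤ n / e := Nat.cast_div_le
  have h2 := div_lt_cast_div_add_one n he
  rw [h, abs_le]
  constructor <;> linarith

theorem card_odd_dvd_sub_div_abs_le (n : ℕ) {e : ℕ} (he : Odd e) :
    |((((Finset.range (2 * n)).filter Odd).filter fun m ↦ e ∣ m).card : ℝ) - n / e| ≤ 1 := by
  have hpos : 0 < e := he.pos
  obtain ⟨v, hv⟩ := he
  have himage : ((Finset.range (2 * n)).filter Odd).filter (fun m ↦ e ∣ m)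
      = ((Finset.range n).filter fun i ↦ i ≡ v [MOD e]).image fun i ↦ 2 * i + 1 := by
    have hmod : ∀ i, e ∣ 2 * i + 1 ↔ i ≡ v [MOD e] := by
      intro i
      have hcop : Nat.gcd e 2 = 1 := by
        rw [hv]; simp
      have h1 : e ∣ 2 * i + 1 ↔ 2 * i + 1 ≡ 2 * v + 1 [MOD e] := by
        rw [← hv, ← Nat.modEq_zero_iff_dvd]
        constructor
        · intro h; exact h.trans (by simp [Nat.ModEq])
        · intro h; exact h.trans (by simp [Nat.ModEq])
      rw [h1]
      exact ⟨fun h ↦ Nat.ModEq.cancel_left_of_coprime hcop (Nat.ModEq.add_right_cancel' 1 h),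
        fun h ↦ (h.mul_left 2).add_right 1⟩
    ext m
    simp only [Finset.mem_filter, Finset.mem_range, Finset.mem_image]
    constructor
    · rintro ⟨⟨hm, i, rfl⟩, hd⟩
      exact ⟨i, ⟨by omega, (hmod i).mp hd⟩, rfl⟩
    · rintro ⟨i, ⟨hi, h⟩, rfl⟩
      exact ⟨⟨by omega, i, rfl⟩, (hmod i).mpr h⟩
  rw [himage, Finset.card_image_of_injective _ (fun a b h ↦ by simpa using h),
    ← Nat.count_eq_card_filter_range, Nat.count_modEq_card n hpos v]
  have h1 : ((n / e : ℕ) : ℝ) ≤ n / e := Nat.cast_div_le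
  have h2 := div_lt_cast_div_add_one n hpos
  rw [abs_le]
  push_cast
  split_ifs <;> constructor <;> norm_num <;> linarith

theorem sum_inv_prime_sq_le {Q : Finset ℕ} {N : ℕ}
    (hQ : ∀ p ∈ Q, p.Prime ∧ p ≤ N) :
    (∑ p ∈ Q, (p : ℝ)⁻¹) ^ 2 ≤ 2 + 4 * Real.log N := by
  set D := (Q ×ˢ Q).filter fun z ↦ z.1 ≤ z.2 with hD
  set f : ℕ × ℕ → ℝ := fun z ↦ (z.1 : ℝ)⁻¹ * (z.2 : ℝ)⁻¹ with hf
  have hf0 : ∀ z, 0 ≤ f z := fun z ↦ by positivity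
  have hswap : ∑ z ∈ (Q ×ˢ Q).filter (fun z ↦ ¬ z.1 ≤ z.2), f z ≤ ∑ z ∈ D, f z := by
    have hsum : ∑ z ∈ (Q ×ˢ Q).filter (fun z ↦ ¬ z.1 ≤ z.2), f z
        = ∑ z ∈ ((Q ×ˢ Q).filter fun z ↦ ¬ z.1 ≤ z.2).image Prod.swap, f z := by
      rw [Finset.sum_image Prod.swap_injective.injOn]
      exact Finset.sum_congr rfl fun z _ ↦ by simp [hf, mul_comm]
    rw [hsum]
    refine Finset.sum_le_sum_of_subset_of_nonneg ?_ fun z _ _ ↦ hf0 z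
    intro z hz
    obtain ⟨w, hw, rfl⟩ := Finset.mem_image.mp hz
    simp only [hD, Finset.mem_filter, Finset.mem_product, Prod.fst_swap, Prod.snd_swap] at hw ⊢
    exact ⟨⟨hw.1.2, hw.1.1⟩, by omega⟩
  have hinj : Set.InjOn (fun z : ℕ × ℕ ↦ z.1 * z.2) D := by
    rintro ⟨a, b⟩ hab ⟨c, d⟩ hcd h
    simp only [hD, Finset.coe_filter, Finset.mem_product, Set.mem_ofPred_eq] at hab hcd h
    obtain ⟨⟨ha, hb⟩, hle⟩ := hab
    obtain ⟨⟨hc, hd⟩, hle'⟩ := hcd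
    have hap := (hQ a ha).1
    have hdvd : a ∣ c * d := ⟨b, h.symm⟩
    rcases hap.dvd_mul.mp hdvd with h' | h'
    · obtain rfl := (Nat.prime_dvd_prime_iff_eq hap (hQ c hc).1).mp h'
      rw [Nat.eq_of_mul_eq_mul_left hap.pos h]
    · obtain rfl := (Nat.prime_dvd_prime_iff_eq hap (hQ d hd).1).mp h'
      have : b = c := Nat.eq_of_mul_eq_mul_left hap.pos (by rw [h, mul_comm])
      subst this
      have : a = b := le_antisymm hle hle'
      rw [this]
  have hharm : ∑ z ∈ D, f z ≤ 1 + 2 * Real.log N := by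
    calc ∑ z ∈ D, f z = ∑ m ∈ D.image (fun z : ℕ × ℕ ↦ z.1 * z.2), (m : ℝ)⁻¹ := by
          rw [Finset.sum_image hinj]
          exact Finset.sum_congr rfl fun z _ ↦ by simp [hf, mul_comm]
      _ ≤ ∑ m ∈ Finset.Icc 1 (N ^ 2), (m : ℝ)⁻¹ := by
          refine Finset.sum_le_sum_of_subset_of_nonneg ?_ fun m _ _ ↦ by positivity
          intro m hm
          obtain ⟨z, hz, rfl⟩ := Finset.mem_image.mp hm
          simp only [hD, Finset.mem_filter, Finset.mem_product] at hz
          obtain ⟨p1, l1⟩ := hQ _ hz.1.1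
          obtain ⟨p2, l2⟩ := hQ _ hz.1.2
          rw [Finset.mem_Icc, sq]
          exact ⟨Nat.mul_pos p1.pos p2.pos, Nat.mul_le_mul l1 l2⟩
      _ = ((harmonic (N ^ 2) : ℚ) : ℝ) := by
          rw [harmonic_eq_sum_Icc]; push_cast; rfl
      _ ≤ 1 + Real.log ((N ^ 2 : ℕ) : ℝ) := harmonic_le_one_add_log _
      _ = 1 + 2 * Real.log N := by push_cast; rw [Real.log_pow]; norm_num
  rw [sq, Finset.sum_mul_sum, ← Finset.sum_product', ← Finset.sum_filter_add_sum_filter_not _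
    (fun z : ℕ × ℕ ↦ z.1 ≤ z.2)]
  linarith

theorem exp_neg_two_mul_sum_le_prod_one_sub {ι : Type*} {x : ι → ℝ} {Q : Finset ι}
    (h0 : ∀ i ∈ Q, 0 ≤ x i) (h1 : ∀ i ∈ Q, x i ≤ 1 / 2) :
    Real.exp (-(2 * ∑ i ∈ Q, x i)) ≤ ∏ i ∈ Q, (1 - x i) := by
  rw [Finset.mul_sum, ← Finset.sum_neg_distrib, Real.exp_sum]
  refine Finset.prod_le_prod (fun i _ ↦ (Real.exp_pos _).le) fun i hi ↦ ?_
  have hi0 := h0 i hi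
  have hi1 := h1 i hi
  have h := Real.add_one_le_exp (2 * x i)
  rw [Real.exp_neg, inv_le_comm₀ (Real.exp_pos _) (by linarith)]
  refine le_trans ?_ h
  rw [inv_le_iff_one_le_mul₀ (by linarith)]
  nlinarith

theorem log_Wp (n : ℕ) :
    Real.log (Wp n) = (2 : ℝ) ^ (-10 : ℤ) * Real.sqrt (Real.log n * Real.log (Real.log n)) :=
  Real.log_exp _

theorem Wp_pos (n : ℕ) : 0 < Wp n := Real.exp_pos _

theorem kp_nonneg (n : ℕ) : 0 ≤ kp n := by
  unfold kp; positivity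

theorem kp_mul_log_Wp {n : ℕ} (h0 : 0 ≤ Real.log n) (h1 : 0 < Real.log (Real.log n)) :
    kp n * Real.log (Wp n) = Real.log n / 2 ^ 15 := by
  rw [log_Wp, kp, mul_mul_mul_comm, ← Real.sqrt_mul (by positivity)]
  have : Real.log n / Real.log (Real.log n) * (Real.log n * Real.log (Real.log n))
      = Real.log n ^ 2 := by field_simp
  rw [this, Real.sqrt_sq h0]
  norm_num
  ring

theorem kp_mul_log_log {n : ℕ} (h1 : 0 < Real.log (Real.log n)) :
    kp n * Real.log (Real.log n) = 32 * Real.log (Wp n) := by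
  have : Real.sqrt (Real.log n / Real.log (Real.log n)) * Real.log (Real.log n)
      = Real.sqrt (Real.log n * Real.log (Real.log n)) := by
    nth_rewrite 2 [← Real.sqrt_sq h1.le]
    rw [← Real.sqrt_mul (by positivity)]
    congr 1
    field_simp
  rw [log_Wp, kp, mul_assoc, this]
  norm_num
  ring

theorem exp_neg_le_ap_sq {n : ℕ} (h0 : 0 < Real.log n) (h1 : 1 ≤ Real.log (Real.log n)) :
    Real.exp (-(32 * Real.log (Wp n))) ≤ ap n ^ 2 := by
  have hk : kp n ≤ Real.sqrt (Real.log n) := by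
    have h : Real.sqrt (Real.log n / Real.log (Real.log n)) ≤ Real.sqrt (Real.log n) :=
      Real.sqrt_le_sqrt (div_le_self h0.le h1)
    unfold kp
    norm_num
    linarith [Real.sqrt_nonneg (Real.log n / Real.log (Real.log n))]
  have hlog : kp n * Real.log (kp n) ≤ kp n * (Real.log (Real.log n) / 2) := by
    rcases (kp_nonneg n).eq_or_lt with h | h
    · rw [← h]; simp
    · refine mul_le_mul_of_nonneg_left ?_ h.le
      rw [← Real.log_sqrt h0.le]
      exact Real.log_le_log h hk
  rw [ap, ← Real.exp_nat_mul, Real.exp_le_exp]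
  have := kp_mul_log_log (by linarith)
  push_cast
  linarith

theorem log_Wp_bounds {n : ℕ} (h : Real.exp 40 ≤ Real.log n) :
    81 ≤ Real.log (Wp n) ∧ Real.log (Wp n) ≤ Real.log n / 2 ^ 10 ∧
      Real.log (Real.log n) / 4 ≤ Real.log (Real.log (Wp n)) := by
  have h0 : 0 < Real.log n := (Real.exp_pos _).trans_le h
  have h40 : 40 ≤ Real.log (Real.log n) := by rwa [Real.le_log_iff_exp_le h0]
  have hself : Real.log (Real.log n) ≤ Real.log n := Real.log_le_self h0.le
  have hbig : (2 : ℝ) ^ 40 ≤ Real.log n := by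
    refine le_trans ?_ h
    have : Real.exp 40 = Real.exp 1 ^ 40 := by rw [← Real.exp_nat_mul]; norm_num
    rw [this]
    exact pow_le_pow_left₀ (by norm_num) (by linarith [Real.add_one_le_exp (1 : ℝ)]) _
  have hsqrt : Real.sqrt (Real.log n) ≤ Real.sqrt (Real.log n * Real.log (Real.log n)) :=
    Real.sqrt_le_sqrt (le_mul_of_one_le_right h0.le (by linarith))
  rw [log_Wp]
  refine ⟨?_, ?_, ?_⟩
  · have : (2 : ℝ) ^ 20 ≤ Real.sqrt (Real.log n) :=
      Real.le_sqrt_of_sq_le (by rw [← pow_mul]; exact hbig)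
    norm_num at this ⊢
    linarith
  · have : Real.sqrt (Real.log n * Real.log (Real.log n)) ≤ Real.log n :=
      Real.sqrt_le_iff.mpr ⟨h0.le, by rw [sq]; exact mul_le_mul_of_nonneg_left hself h0.le⟩
    norm_num
    linarith
  · have hs : 0 < Real.sqrt (Real.log n) := Real.sqrt_pos.mpr h0
    have h2 := Real.log_le_log hs hsqrt
    rw [Real.log_sqrt h0.le] at h2
    rw [Real.log_mul (by positivity) (hs.trans_le hsqrt).ne', Real.log_zpow]
    have := Real.log_two_lt_d9
    push_cast
    linarith

theorem prod_dvd_iff_of_primes {V : Finset ℕ} (hV : ∀ p ∈ V, p.Prime) (m : ℕ) :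
    ∏ p ∈ V, p ∣ m ↔ ∀ p ∈ V, p ∣ m :=
  ⟨fun h _ hp ↦ (Finset.dvd_prod_of_mem _ hp).trans h,
    fun h ↦ Finset.prod_primes_dvd m (fun p hp ↦ (hV p hp).prime) h⟩

theorem sum_choose_le {q r : ℕ} {w : ℝ} (hw : 1 ≤ w) (hq : (q : ℝ) ≤ w) :
    ∑ j ∈ Finset.range (r + 1), (q.choose j : ℝ) ≤ (r + 1) * w ^ r := by
  calc ∑ j ∈ Finset.range (r + 1), (q.choose j : ℝ) ≤ ∑ j ∈ Finset.range (r + 1), w ^ r := by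
        refine Finset.sum_le_sum fun j hj ↦ ?_
        calc (q.choose j : ℝ) ≤ (q : ℝ) ^ j := by exact_mod_cast Nat.choose_le_pow q j
          _ ≤ w ^ j := pow_le_pow_left₀ (by positivity) hq j
          _ ≤ w ^ r := pow_le_pow_right₀ hw (Finset.mem_range_succ_iff.mp hj)
    _ = (r + 1) * w ^ r := by simp

/-- The sieve estimate with the parameters `W`, `k`, `α`, for an arbitrary set `A` in which the
multiples of every odd `e` have density `1 / e` up to an error of at most `1`. -/
theorem abs_card_sifted_sub_le_ap_sq {n : ℕ} (hn : Real.exp 40 ≤ Real.log n) {A S Q : Finset ℕ}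
    (hS : ∀ p ∈ S, p.Prime ∧ p ≠ 2 ∧ (p : ℝ) ≤ Wp n)
    (hQ : ∀ p ∈ Q, p.Prime ∧ p ≠ 2 ∧ (p : ℝ) ≤ Wp n)
    (hSQ : Disjoint S Q) (hcard : (S.card : ℝ) < kp n)
    (hA : ∀ e : ℕ, Odd e → |((A.filter fun m ↦ e ∣ m).card : ℝ) - n / e| ≤ 1) :
    |((A.filter fun m ↦ (∀ p ∈ S, p ∣ m) ∧ ∀ p ∈ Q, ¬ p ∣ m).card : ℝ)
      - n * (∏ p ∈ S, (p : ℝ)⁻¹) * ∏ p ∈ Q, (1 - (p : ℝ)⁻¹)|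
      ≤ ap n ^ 2 * (n * (∏ p ∈ S, (p : ℝ)⁻¹) * ∏ p ∈ Q, (1 - (p : ℝ)⁻¹)) := by
  classical
  obtain ⟨hy81, hyL, hly⟩ := log_Wp_bounds hn
  have hL0 : 0 < Real.log n := (Real.exp_pos _).trans_le hn
  have h40 : 40 ≤ Real.log (Real.log n) := by rwa [Real.le_log_iff_exp_le hL0]
  have hky := kp_mul_log_Wp hL0.le (by linarith)
  have hkl := kp_mul_log_log (by linarith)
  have hα := exp_neg_le_ap_sq hL0 (by linarith)
  have hk0 := kp_nonneg n
  have hn0 : (0 : ℝ) < n := by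
    by_contra! h
    have : (n : ℝ) = 0 := le_antisymm h (Nat.cast_nonneg n)
    rw [this, Real.log_zero] at hL0
    exact lt_irrefl _ hL0
  have hWy : Wp n = Real.exp (Real.log (Wp n)) := (Real.exp_log (Wp_pos n)).symm
  set y := Real.log (Wp n) with hy
  have hy0 : 0 < y := by linarith
  have hW1 : 1 ≤ Wp n := by rw [hWy]; exact Real.one_le_exp hy0.le
  have hQle : ∀ p ∈ Q, p.Prime ∧ p ≤ ⌊Wp n⌋₊ := fun p hp ↦
    ⟨(hQ p hp).1, Nat.le_floor (hQ p hp).2.2⟩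
  set u := Real.exp (Real.log y / 4) with hu
  have hu4 : u ^ 4 = y := by
    rw [hu, ← Real.exp_nat_mul]
    push_cast
    rw [mul_div_cancel₀ _ (by norm_num), Real.exp_log hy0]
  have hu0 : 0 < u := Real.exp_pos _
  have hu3 : 3 ≤ u := by
    by_contra! h
    have := pow_lt_pow_left₀ h hu0.le (n := 4) (by norm_num)
    linarith
  set σ := ∑ p ∈ Q, (p : ℝ)⁻¹ with hσ
  have hσ0 : 0 ≤ σ := Finset.sum_nonneg fun p _ ↦ by positivity
  have hσu : σ ≤ 3 * u ^ 2 := by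
    have h1 := sum_inv_prime_sq_le hQle
    have h2 : Real.log (⌊Wp n⌋₊ : ℝ) ≤ y :=
      Real.log_le_log (by exact_mod_cast Nat.floor_pos.mpr hW1) (Nat.floor_le (Wp_pos n).le)
    refine le_of_sq_le_sq ?_ (by positivity)
    nlinarith
  have huσ : u * σ ≤ y := by
    rw [← hu4]
    nlinarith [mul_le_mul_of_nonneg_left hσu hu0.le, pow_pos hu0 3]
  have h2σ : 2 * σ ≤ y := by nlinarith
  set d := ∏ p ∈ S, (p : ℝ)⁻¹ with hd
  set P := ∏ p ∈ Q, (1 - (p : ℝ)⁻¹) with hP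
  have hPge : Real.exp (-y) ≤ P := by
    refine le_trans (Real.exp_le_exp.mpr (by linarith)) (exp_neg_two_mul_sum_le_prod_one_sub
      (fun p _ ↦ by positivity) fun p hp ↦ ?_)
    rw [one_div]
    exact inv_anti₀ (by norm_num) (by exact_mod_cast (hQ p hp).1.two_le)
  have hdge : Real.exp (-(kp n * y)) ≤ d := by
    calc Real.exp (-(kp n * y)) ≤ Real.exp (-(S.card * y)) :=
          Real.exp_le_exp.mpr (by nlinarith)
      _ = ∏ _p ∈ S, (Wp n)⁻¹ := by
          rw [Finset.prod_const, hWy, ← Real.exp_neg, ← Real.exp_nat_mul]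
          congr 1; ring
      _ ≤ d := Finset.prod_le_prod (fun _ _ ↦ by have := Wp_pos n; positivity) fun p hp ↦
          inv_anti₀ (by exact_mod_cast (hS p hp).1.pos) (hS p hp).2.2
  have hd0 : 0 < d := (Real.exp_pos _).trans_le hdge
  have hnd : 0 < n * d := by positivity
  set r := ⌈2 ^ 12 * kp n⌉₊ with hr
  have hr1 : 2 ^ 12 * kp n ≤ r := Nat.le_ceil _
  have hr2 : (r : ℝ) < 2 ^ 12 * kp n + 1 := Nat.ceil_lt_add_one (by positivity)
  have hsieve := abs_card_sifted_sub_le_s7 (A := A) (S := S) (Q := Q) hnd.le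
    (fun p hp ↦ (hQ p hp).1.pos) (fun T hT ↦ ?_) r
  · refine hsieve.trans ?_
    have hE : esymmOn (fun p : ℕ ↦ (p : ℝ)⁻¹) Q r ≤ Real.exp (y - r * (Real.log y / 4)) := by
      have h := esymmOn_mul_pow_le_exp (x := fun p : ℕ ↦ (p : ℝ)⁻¹) (Q := Q)
        (fun p _ ↦ by positivity) hu0.le r
      rw [Real.exp_sub, le_div_iff₀ (Real.exp_pos _), Real.exp_nat_mul]
      exact h.trans (Real.exp_le_exp.mpr huσ)
    have hE' : 4 * esymmOn (fun p : ℕ ↦ (p : ℝ)⁻¹) Q r ≤ Real.exp (-(33 * y)) := by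
      have h4 : (4 : ℝ) ≤ Real.exp 3 := by linarith [Real.add_one_le_exp (3 : ℝ)]
      have hrl : 2 ^ 13 * y ≤ r * (Real.log y / 4) := by
        have : 2 ^ 12 * kp n * (Real.log (Real.log n) / 4 / 4) ≤ r * (Real.log y / 4) :=
          mul_le_mul hr1 (by linarith) (by linarith) (by positivity)
        linarith
      calc 4 * esymmOn (fun p : ℕ ↦ (p : ℝ)⁻¹) Q r
          ≤ Real.exp 3 * Real.exp (y - r * (Real.log y / 4)) :=
            mul_le_mul h4 hE (esymmOn_nonneg (fun p _ ↦ by positivity) r) (Real.exp_pos _).le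
        _ = Real.exp (3 + (y - r * (Real.log y / 4))) := (Real.exp_add _ _).symm
        _ ≤ Real.exp (-(33 * y)) := Real.exp_le_exp.mpr (by linarith)
    have hC : 2 * ∑ j ∈ Finset.range (r + 1), (Q.card.choose j : ℝ)
        ≤ Real.exp (-(33 * y)) * (n * d) := by
      have hq : (Q.card : ℝ) ≤ Wp n := by
        refine le_trans ?_ (Nat.floor_le (Wp_pos n).le)
        have : Q ⊆ Finset.Icc 1 ⌊Wp n⌋₊ := fun p hp ↦
          Finset.mem_Icc.mpr ⟨(hQle p hp).1.pos, (hQle p hp).2⟩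
        exact_mod_cast (Finset.card_le_card this).trans (by simp)
      have h2 : (2 : ℝ) ≤ Real.exp 1 := by linarith [Real.add_one_le_exp (1 : ℝ)]
      have hr3 : (r : ℝ) + 1 ≤ Real.exp (r * y) :=
        (Real.add_one_le_exp _).trans (Real.exp_le_exp.mpr
          (le_mul_of_one_le_right (Nat.cast_nonneg r) (by linarith)))
      have hry : r * y ≤ 2 ^ 12 * (Real.log n / 2 ^ 15) + y := by
        rw [← hky]; nlinarith
      calc 2 * ∑ j ∈ Finset.range (r + 1), (Q.card.choose j : ℝ)
          ≤ Real.exp 1 * (Real.exp (r * y) * Real.exp (r * y)) := by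
            refine mul_le_mul h2 ((sum_choose_le hW1 hq).trans ?_) (by positivity)
              (Real.exp_pos _).le
            rw [hWy, ← Real.exp_nat_mul]
            exact mul_le_mul_of_nonneg_right hr3 (Real.exp_pos _).le
        _ = Real.exp (1 + (r * y + r * y)) := by rw [Real.exp_add, Real.exp_add]
        _ ≤ Real.exp (-(33 * y) + (Real.log n + -(kp n * y))) :=
            Real.exp_le_exp.mpr (by rw [hky]; linarith)
        _ = Real.exp (-(33 * y)) * (n * Real.exp (-(kp n * y))) := by
            rw [Real.exp_add, Real.exp_add, Real.exp_log hn0]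
        _ ≤ Real.exp (-(33 * y)) * (n * d) := by gcongr
    have hαP : Real.exp (-(33 * y)) ≤ ap n ^ 2 * P := by
      rw [show -(33 * y) = -(32 * y) + -y by ring, Real.exp_add]
      exact mul_le_mul hα hPge (Real.exp_pos _).le (by positivity)
    have h3 := mul_le_mul_of_nonneg_left hE' hnd.le
    have h4 := mul_le_mul_of_nonneg_left hαP hnd.le
    linarith
  · have hprime : ∀ p ∈ S ∪ T, p.Prime ∧ p ≠ 2 := fun p hp ↦ by
      rcases Finset.mem_union.mp hp with h | h
      · exact ⟨(hS p h).1, (hS p h).2.1⟩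
      · exact ⟨(hQ p (hT h)).1, (hQ p (hT h)).2.1⟩
    have hodd : Odd (∏ p ∈ S ∪ T, p) :=
      Finset.prod_induction _ Odd (fun _ _ ↦ Odd.mul) odd_one fun p hp ↦
        (hprime p hp).1.odd_of_ne_two (hprime p hp).2
    have hdvd : ∀ m, ((∀ p ∈ S, p ∣ m) ∧ ∀ p ∈ T, p ∣ m) ↔ ∏ p ∈ S ∪ T, p ∣ m := fun m ↦ by
      rw [prod_dvd_iff_of_primes fun p hp ↦ (hprime p hp).1, Finset.forall_mem_union]
    have h := hA _ hodd
    simp only [hdvd]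
    convert h using 3
    rw [Finset.prod_union (hSQ.mono_right hT), hd, Finset.prod_inv_distrib,
      Finset.prod_inv_distrib, div_eq_mul_inv]
    push_cast
    rw [mul_inv, mul_assoc]

theorem finite_primesLe' (n : ℕ) : (primesLe' n).Finite :=
  (Set.finite_Iic ⌊Wp n⌋₊).subset fun _ hp ↦ Nat.le_floor hp.1.2

/-- For all sufficiently large `n` and all `S ⊆ 𝒫'_W` with `|S| < k`, both `|B_S|` and
`|C_S|` equal `(1 ± α²) · n · ∏_{p ∈ S} p⁻¹ · ∏_{p ∈ 𝒫'_W \ S} (1 − p⁻¹)`. -/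
theorem BSet_CSet_ncard_asymptotic :
    ∃ N : ℕ, ∀ n : ℕ, N ≤ n → ∀ S : Set ℕ, S ⊆ primesLe' n → (S.ncard : ℝ) < kp n →
      ((1 - ap n ^ 2) *
          ((n : ℝ) * (∏ᶠ p ∈ S, ((p : ℝ))⁻¹) * ∏ᶠ p ∈ primesLe' n \ S, (1 - (p : ℝ)⁻¹))
        ≤ ((BSet n S).ncard : ℝ) ∧
      ((BSet n S).ncard : ℝ) ≤
        (1 + ap n ^ 2) *
          ((n : ℝ) * (∏ᶠ p ∈ S, ((p : ℝ))⁻¹) * ∏ᶠ p ∈ primesLe' n \ S, (1 - (p : ℝ)⁻¹))) ∧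
      ((1 - ap n ^ 2) *
          ((n : ℝ) * (∏ᶠ p ∈ S, ((p : ℝ))⁻¹) * ∏ᶠ p ∈ primesLe' n \ S, (1 - (p : ℝ)⁻¹))
        ≤ ((CSet n S).ncard : ℝ) ∧
      ((CSet n S).ncard : ℝ) ≤
        (1 + ap n ^ 2) *
          ((n : ℝ) * (∏ᶠ p ∈ S, ((p : ℝ))⁻¹) * ∏ᶠ p ∈ primesLe' n \ S, (1 - (p : ℝ)⁻¹))) := by
  classical
  obtain ⟨N, hN⟩ := Filter.eventually_atTop.mp
    ((Real.tendsto_log_atTop.comp tendsto_natCast_atTop_atTop).eventually_ge_atTop (Real.exp 40))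
  refine ⟨N, fun n hn S hS hcard ↦ ?_⟩
  have hfin := finite_primesLe' n
  lift S to Finset ℕ using hfin.subset hS
  obtain ⟨P, hP⟩ := hfin.exists_finset_coe
  have hmem : ∀ p, p ∈ P ↔ p ∈ primesLe' n := fun p ↦ by rw [← hP, Finset.mem_coe]
  have hprime : ∀ p ∈ P, p.Prime ∧ p ≠ 2 ∧ (p : ℝ) ≤ Wp n := fun p hp ↦
    have h := (hmem p).mp hp
    ⟨h.1.1, h.2, h.1.2⟩
  have hSP : S ⊆ P := fun p hp ↦ (hmem p).mpr (hS hp)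
  have hdiff : primesLe' n \ (S : Set ℕ) = ((P \ S : Finset ℕ) : Set ℕ) := by
    rw [Finset.coe_sdiff, hP]
  have hiff : ∀ m, (∀ p ∈ primesLe' n, (p ∣ m ↔ p ∈ (S : Set ℕ)))
      ↔ (∀ p ∈ S, p ∣ m) ∧ ∀ p ∈ P \ S, ¬ p ∣ m := fun m ↦ by
    simp only [← hmem, Finset.mem_coe, Finset.mem_sdiff]
    refine ⟨fun h ↦ ⟨fun p hp ↦ (h p (hSP hp)).mpr hp, fun p hp hd ↦ hp.2 ((h p hp.1).mp hd)⟩,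
      fun h p hp ↦ ⟨fun hd ↦ ?_, h.1 p⟩⟩
    by_contra hpS
    exact h.2 p ⟨hp, hpS⟩ hd
  have hB : BSet n S = ((Finset.Icc 1 n).filter
      fun m ↦ (∀ p ∈ S, p ∣ m) ∧ ∀ p ∈ P \ S, ¬ p ∣ m : Finset ℕ) := by
    ext m
    rw [Finset.mem_coe, Finset.mem_filter, Finset.mem_Icc, ← hiff, and_assoc]
    rfl
  have hC : CSet n S = (((Finset.range (2 * n)).filter Odd).filter
      fun m ↦ (∀ p ∈ S, p ∣ m) ∧ ∀ p ∈ P \ S, ¬ p ∣ m : Finset ℕ) := by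
    ext m
    rw [Finset.mem_coe, Finset.mem_filter, Finset.mem_filter, Finset.mem_range, ← hiff,
      and_comm (a := m < 2 * n)]
    rfl
  rw [Set.ncard_coe_finset] at hcard
  have key := fun A ↦ abs_card_sifted_sub_le_ap_sq (hN n hn) (A := A)
    (fun p hp ↦ hprime p (hSP hp)) (fun p hp ↦ hprime p (Finset.sdiff_subset hp))
    Finset.disjoint_sdiff hcard
  have kB := abs_le.mp (key _ fun e he ↦ card_Icc_dvd_sub_div_abs_le n he.pos)
  have kC := abs_le.mp (key _ fun e he ↦ card_odd_dvd_sub_div_abs_le n he)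
  rw [hB, hC, hdiff, Set.ncard_coe_finset, Set.ncard_coe_finset, finprod_mem_coe_finset,
    finprod_mem_coe_finset]
  refine ⟨⟨?_, ?_⟩, ?_, ?_⟩ <;> linarith [kB.1, kB.2, kC.1, kC.2]
end
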